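/- arXiv:2206.13775 — 3 statements merged into one kernel-verified Lean document; each statement's English description precedes it below -/
import Mathlib

section
/- Let $N \ge 2$ and let $B_1^N$ be the open unit ball in $\mathbb{R}^N$. For every $u \in C_0^\infty(B_1^N)$ satisfying the spherical average zero condition $\int_{\mathbb{S}^{N-1}} u(r\omega)\,dS_\omega = 0$ for all $r \ge 0$, one has $\frac{N^2}{4} \int_{B_1^N} \frac{|u(x)|^2}{|x|^2}\,dx \le \int_{B_1^N} |\nabla u(x)|^2\,dx$. -/
open MeasureTheory Metric
open scoped ENNReal

noncomputable section

/-- `u` has spherical average zero: `∫_{S^{N-1}} u(rω) dS_ω = 0` for all `r ≥ 0`. -/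
def SphereAvgZero {N : ℕ} (u : EuclideanSpace ℝ (Fin N) → ℝ) : Prop :=
  ∀ r : ℝ, 0 ≤ r →
    (∫ ω : sphere (0 : EuclideanSpace ℝ (Fin N)) 1,
      u (r • (ω : EuclideanSpace ℝ (Fin N)))
      ∂((volume : Measure (EuclideanSpace ℝ (Fin N))).toSphere)) = 0

section Helpers

open ProbabilityTheory

lemma gr_integrable_iff (f : ℝ → ℝ) :
    Integrable f (gaussianReal 0 1) ↔ Integrable (fun x => f x * gaussianPDFReal 0 1 x) := by
  rw [gaussianReal_of_var_ne_zero 0 one_ne_zero,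
    integrable_withDensity_iff (measurable_gaussianPDF _ _)
      (ae_of_all _ fun _ => gaussianPDF_lt_top)]
  simp [gaussianPDF, ENNReal.toReal_ofReal (gaussianPDFReal_nonneg 0 1 _)]

lemma gr_sq_integrable : Integrable (fun x : ℝ => x ^ 2) (gaussianReal 0 1) :=
  (memLp_id_gaussianReal (μ := 0) (v := 1) 2).integrable_sq

lemma gr_pdf_deriv (x : ℝ) :
    HasDerivAt (gaussianPDFReal 0 1) (-(x * gaussianPDFReal 0 1 x)) x := by
  have : gaussianPDFReal 0 1 = fun x => (√(2 * Real.pi))⁻¹ * Real.exp (-x ^ 2 / 2) := by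
    ext y; simp [gaussianPDFReal]
  rw [this]
  have h : HasDerivAt (fun x : ℝ => -x ^ 2 / 2) (-x) x := by
    have := ((hasDerivAt_pow 2 x).neg.div_const 2)
    refine this.congr_deriv ?_
    push_cast; ring
  refine (h.exp.const_mul ((√(2 * Real.pi))⁻¹)).congr_deriv ?_
  ring

lemma cs_interval (f f' : ℝ → ℝ) (hf : ∀ t, HasDerivAt f (f' t) t) (hc : Continuous f') (x : ℝ) :
    (f x - f 0) ^ 2 ≤ x * ∫ t in (0:ℝ)..x, f' t ^ 2 := by
  rcases eq_or_ne x 0 with rfl | hx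
  · simp
  have hD : ∫ t in (0:ℝ)..x, f' t = f x - f 0 :=
    intervalIntegral.integral_eq_sub_of_hasDerivAt (fun t _ => hf t) (hc.intervalIntegrable _ _)
  set D := f x - f 0
  set m := D / x
  have h1 : ∫ t in (0:ℝ)..x, (f' t - m) ^ 2 = (∫ t in (0:ℝ)..x, f' t ^ 2) - 2 * m * D + m ^ 2 * x := by
    have : ∀ t, (f' t - m) ^ 2 = f' t ^ 2 - 2 * m * f' t + m ^ 2 := fun t => by ring
    simp_rw [this]
    rw [intervalIntegral.integral_add, intervalIntegral.integral_sub,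
      intervalIntegral.integral_const_mul, hD]
    · simp; ring
    all_goals exact Continuous.intervalIntegrable (by fun_prop) _ _
  have h2 : 0 ≤ x * ∫ t in (0:ℝ)..x, (f' t - m) ^ 2 := by
    rcases le_total 0 x with h | h
    · exact mul_nonneg h (intervalIntegral.integral_nonneg h fun t _ => sq_nonneg _)
    · rw [intervalIntegral.integral_symm]
      have := intervalIntegral.integral_nonneg (μ := volume) h (f := fun t => (f' t - m) ^ 2) fun t _ => sq_nonneg _
      nlinarith
  rw [h1] at h2
  have h3 : m * x = D := div_mul_cancel₀ _ hx
  have : x * ((∫ t in (0:ℝ)..x, f' t ^ 2) - 2 * m * D + m ^ 2 * x)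
    = x * (∫ t in (0:ℝ)..x, f' t ^ 2) - 2 * (m * x) * D + (m * x) ^ 2 := by ring
  rw [this, h3] at h2
  nlinarith

lemma gr_bdd_integrable (f : ℝ → ℝ) (hf : AEStronglyMeasurable f (gaussianReal 0 1)) (A B : ℝ)
    (h : ∀ x, |f x| ≤ A + B * x ^ 2) : Integrable f (gaussianReal 0 1) :=
  ((integrable_const A).add (gr_sq_integrable.const_mul B)).mono' hf
    (ae_of_all _ fun x => by simpa using h x)

theorem gaussian_poincare_1d (f f' : ℝ → ℝ) (hf : ∀ t, HasDerivAt f (f' t) t)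
    (hc : Continuous f') (C : ℝ) (hC : ∀ t, |f' t| ≤ C) :
    ∫ t, f t ^ 2 ∂(gaussianReal 0 1) - (∫ t, f t ∂(gaussianReal 0 1)) ^ 2
      ≤ ∫ t, f' t ^ 2 ∂(gaussianReal 0 1) := by
  have hC0 : 0 ≤ C := (abs_nonneg _).trans (hC 0)
  have hfc : Continuous f := continuous_iff_continuousAt.2 fun t => (hf t).continuousAt
  set H : ℝ → ℝ := fun x => ∫ t in (0:ℝ)..x, f' t ^ 2 with hH
  have hHd : ∀ x, HasDerivAt H (f' x ^ 2) x := fun x =>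
    ((hc.pow 2).integral_hasStrictDerivAt 0 x).hasDerivAt
  have hHc : Continuous H := continuous_iff_continuousAt.2 fun t => (hHd t).continuousAt
  have hf2 : ∀ t, f' t ^ 2 ≤ C ^ 2 := fun t => sq_le_sq' (by linarith [abs_le.1 (hC t)]) (abs_le.1 (hC t)).2
  have hHb : ∀ x, |H x| ≤ C ^ 2 * |x| := fun x => by
    have := intervalIntegral.norm_integral_le_of_norm_le_const (a := 0) (b := x) (f := fun t => f' t ^ 2) (C := C ^ 2)
      (fun t _ => by simpa using hf2 t)
    simpa using this
  have hcs := cs_interval f f' hf hc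
  have hxH : ∀ x, x * H x ≤ C ^ 2 * x ^ 2 := fun x => by
    calc x * H x ≤ |x * H x| := le_abs_self _
      _ = |x| * |H x| := abs_mul _ _
      _ ≤ |x| * (C ^ 2 * |x|) := by gcongr; exact hHb x
      _ = C ^ 2 * |x| ^ 2 := by ring
      _ = _ := by rw [sq_abs]
  have hxH0 : ∀ x, 0 ≤ x * H x := fun x => (sq_nonneg _).trans (hcs x)
  have habs : ∀ x : ℝ, |x| ≤ 1 + x ^ 2 := fun x => abs_le.2 ⟨by nlinarith [sq_nonneg (x + 1), sq_nonneg x], by nlinarith [sq_nonneg (x-1), sq_nonneg x]⟩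
  have I1 : Integrable (fun x => x * H x) (gaussianReal 0 1) :=
    gr_bdd_integrable _ (by fun_prop) 0 (C ^ 2) fun x => by
      rw [abs_of_nonneg (hxH0 x)]; linarith [hxH x]
  have I2 : Integrable (fun x => f' x ^ 2) (gaussianReal 0 1) :=
    gr_bdd_integrable _ (by fun_prop) (C ^ 2) 0 fun x => by
      rw [abs_of_nonneg (sq_nonneg _)]; linarith [hf2 x]
  have I3 : Integrable H (gaussianReal 0 1) :=
    gr_bdd_integrable _ (by fun_prop) (C ^ 2) (C ^ 2) fun x => by
      nlinarith [hHb x, habs x, sq_nonneg C]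
  have I4 : Integrable (fun x => (f x - f 0) ^ 2) (gaussianReal 0 1) :=
    gr_bdd_integrable _ (by fun_prop) 0 (C ^ 2) fun x => by
      rw [abs_of_nonneg (sq_nonneg _)]; linarith [hcs x, hxH x]
  have I5 : Integrable (fun x => (f x - f 0)) (gaussianReal 0 1) := by
    have : MemLp (fun x => (f x - f 0)) 2 (gaussianReal 0 1) := (memLp_two_iff_integrable_sq (by fun_prop)).2 I4
    exact this.integrable one_le_two
  have ibp : ∫ x, x * H x ∂(gaussianReal 0 1) = ∫ t, f' t ^ 2 ∂(gaussianReal 0 1) := by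
    rw [integral_gaussianReal_eq_integral_smul one_ne_zero, integral_gaussianReal_eq_integral_smul one_ne_zero]
    have := integral_mul_deriv_eq_deriv_mul_of_integrable (u := H) (v := gaussianPDFReal 0 1)
      (u' := fun x => f' x ^ 2) (v' := fun x => -(x * gaussianPDFReal 0 1 x))
      (fun x _ => hHd x) (fun x _ => gr_pdf_deriv x)
      (by
        have := ((gr_integrable_iff _).1 I1).neg
        refine this.congr (ae_of_all _ fun x => ?_)
        simp; ring)
      ((gr_integrable_iff _).1 I2) ((gr_integrable_iff _).1 I3)
    have e1 : ∀ x, H x * -(x * gaussianPDFReal 0 1 x) = -(gaussianPDFReal 0 1 x • (x * H x)) := fun x => by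
      simp; ring
    have e2 : ∀ x, f' x ^ 2 * gaussianPDFReal 0 1 x = gaussianPDFReal 0 1 x • f' x ^ 2 := fun x => by
      simp; ring
    simp_rw [e1, e2] at this
    rw [integral_neg] at this
    linarith
  have h1 : ∫ x, (f x - f 0) ^ 2 ∂(gaussianReal 0 1) ≤ ∫ t, f' t ^ 2 ∂(gaussianReal 0 1) := by
    rw [← ibp]; exact integral_mono I4 I1 hcs
  have e1 : ∀ x, f x ^ 2 = (f x - f 0) ^ 2 + (2 * f 0 * (f x - f 0) + f 0 ^ 2) := fun x => by ring
  have e2 : ∀ x, f x = (f x - f 0) + f 0 := fun x => by ring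
  have E1 : ∫ t, f t ^ 2 ∂(gaussianReal 0 1) = ∫ x, (f x - f 0) ^ 2 ∂(gaussianReal 0 1) +
      (2 * f 0 * ∫ x, (f x - f 0) ∂(gaussianReal 0 1) + f 0 ^ 2) := by
    rw [integral_congr_ae (ae_of_all _ e1), integral_add I4 (by fun_prop), integral_add (by fun_prop) (by fun_prop), integral_const_mul]
    simp
  have E2 : ∫ t, f t ∂(gaussianReal 0 1) = ∫ x, (f x - f 0) ∂(gaussianReal 0 1) + f 0 := by
    rw [integral_congr_ae (ae_of_all _ e2), integral_add I5 (by fun_prop)]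
    simp
  rw [E1, E2]
  nlinarith [sq_nonneg (∫ x, (f x - f 0) ∂(gaussianReal 0 1))]

lemma memLp_marginal {α β : Type*} [MeasurableSpace α] [MeasurableSpace β] (μ : Measure α)
    (ν : Measure β) [IsProbabilityMeasure μ] [IsProbabilityMeasure ν] (F : α × β → ℝ)
    (hF : MemLp F 2 (μ.prod ν)) : MemLp (fun x => ∫ y, F (x, y) ∂ν) 2 μ := by
  have hm : AEStronglyMeasurable (fun x => ∫ y, F (x, y) ∂ν) μ := hF.1.integral_prod_right'
  rw [memLp_two_iff_integrable_sq hm]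
  have hI := hF.integrable_sq
  have hI1 := hF.integrable one_le_two
  refine hI.integral_prod_left.mono' (hm.pow 2) ?_
  filter_upwards [hI.prod_right_ae, hI1.prod_right_ae] with x h2 h1
  have : 0 ≤ ∫ y, (F (x, y) - ∫ z, F (x, z) ∂ν) ^ 2 ∂ν := integral_nonneg fun _ => sq_nonneg _
  set m := ∫ z, F (x, z) ∂ν
  have e : ∀ y, (F (x, y) - m) ^ 2 = F (x, y) ^ 2 + ((-2 * m) * F (x, y) + m ^ 2) := fun y => by ring
  rw [integral_congr_ae (ae_of_all _ e), integral_add h2 ((h1.const_mul _).fun_add (integrable_const _)), integral_add (h1.const_mul _) (integrable_const _), integral_const_mul] at this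
  simp at this ⊢
  nlinarith

theorem var_prod_le {α β : Type*} [MeasurableSpace α] [MeasurableSpace β] (μ : Measure α)
    (ν : Measure β) [IsProbabilityMeasure μ] [IsProbabilityMeasure ν] (F : α × β → ℝ)
    (hF : MemLp F 2 (μ.prod ν)) :
    ∫ z, F z ^ 2 ∂(μ.prod ν) - (∫ z, F z ∂(μ.prod ν)) ^ 2 ≤
      ∫ x, (∫ y, F (x, y) ^ 2 ∂ν - (∫ y, F (x, y) ∂ν) ^ 2) ∂μ +
      ∫ y, (∫ x, F (x, y) ^ 2 ∂μ - (∫ x, F (x, y) ∂μ) ^ 2) ∂ν := by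
  have hA := memLp_marginal μ ν F hF
  have hB := memLp_marginal ν μ (fun z => F z.swap) (hF.comp_measurePreserving Measure.measurePreserving_swap)
  simp only [Prod.swap_prod_mk] at hB
  set A := fun x => ∫ y, F (x, y) ∂ν with hAd
  set B := fun y => ∫ x, F (x, y) ∂μ with hBd
  have hA' : MemLp (fun z : α × β => A z.1) 2 (μ.prod ν) := hA.comp_measurePreserving measurePreserving_fst
  have hB' : MemLp (fun z : α × β => B z.2) 2 (μ.prod ν) := hB.comp_measurePreserving measurePreserving_snd
  have hI := hF.integrable_sq
  have hI1 := hF.integrable one_le_two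
  set c := ∫ z, F z ∂(μ.prod ν) with hc
  have cA : ∫ x, A x ∂μ = c := (integral_prod F hI1).symm
  have cB : ∫ y, B y ∂ν = c := (integral_prod_symm F hI1).symm
  have q1 : ∫ x, (∫ y, F (x, y) ^ 2 ∂ν - (∫ y, F (x, y) ∂ν) ^ 2) ∂μ
      = ∫ z, F z ^ 2 ∂(μ.prod ν) - ∫ x, A x ^ 2 ∂μ := by
    rw [integral_sub hI.integral_prod_left hA.integrable_sq, integral_prod _ hI]
  have q2 : ∫ y, (∫ x, F (x, y) ^ 2 ∂μ - (∫ x, F (x, y) ∂μ) ^ 2) ∂ν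
      = ∫ z, F z ^ 2 ∂(μ.prod ν) - ∫ y, B y ^ 2 ∂ν := by
    rw [integral_sub hI.integral_prod_right hB.integrable_sq, integral_prod_symm _ hI]
  have FA : Integrable (fun z : α × β => F z * A z.1) (μ.prod ν) := hF.integrable_mul hA'
  have FB : Integrable (fun z : α × β => F z * B z.2) (μ.prod ν) := hF.integrable_mul hB'
  have AB : Integrable (fun z : α × β => A z.1 * B z.2) (μ.prod ν) := hA'.integrable_mul hB'
  have AA := hA'.integrable_sq
  have BB := hB'.integrable_sq
  have A1 := hA'.integrable one_le_two
  have B1 := hB'.integrable one_le_two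
  have iFA : ∫ z : α × β, F z * A z.1 ∂(μ.prod ν) = ∫ x, A x ^ 2 ∂μ := by
    rw [integral_prod _ FA]
    refine integral_congr_ae (ae_of_all _ fun x => ?_)
    simp only [integral_mul_const, hAd]; ring
  have iFB : ∫ z : α × β, F z * B z.2 ∂(μ.prod ν) = ∫ y, B y ^ 2 ∂ν := by
    rw [integral_prod_symm _ FB]
    refine integral_congr_ae (ae_of_all _ fun x => ?_)
    simp only [integral_mul_const, hBd]; ring
  have iAB : ∫ z : α × β, A z.1 * B z.2 ∂(μ.prod ν) = c * c := by
    rw [integral_prod_mul, cA, cB]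
  have iAA : ∫ z : α × β, A z.1 ^ 2 ∂(μ.prod ν) = ∫ x, A x ^ 2 ∂μ := by
    simpa using integral_fun_fst (μ := μ) (ν := ν) (fun x => A x ^ 2)
  have iBB : ∫ z : α × β, B z.2 ^ 2 ∂(μ.prod ν) = ∫ x, B x ^ 2 ∂ν := by
    simpa using integral_fun_snd (μ := μ) (ν := ν) (fun x => B x ^ 2)
  have iA : ∫ z : α × β, A z.1 ∂(μ.prod ν) = c := by
    simpa [cA] using integral_fun_fst (μ := μ) (ν := ν) (fun x => A x)
  have iB : ∫ z : α × β, B z.2 ∂(μ.prod ν) = c := by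
    simpa [cB] using integral_fun_snd (μ := μ) (ν := ν) (fun x => B x)
  have key : 0 ≤ ∫ z : α × β, (F z - A z.1 - B z.2 + c) ^ 2 ∂(μ.prod ν) := integral_nonneg fun _ => sq_nonneg _
  have e : ∀ z : α × β, (F z - A z.1 - B z.2 + c) ^ 2 = F z ^ 2 + (A z.1 ^ 2 + (B z.2 ^ 2 + (c ^ 2
      + ((-2) * (F z * A z.1) + ((-2) * (F z * B z.2) + (2 * c * F z + (2 * (A z.1 * B z.2)
      + ((-2 * c) * A z.1 + (-2 * c) * B z.2)))))))) := fun z => by ring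
  rw [integral_congr_ae (ae_of_all _ e)] at key
  have T0 := B1.const_mul (-2 * c)
  have T1 := (A1.const_mul (-2 * c)).fun_add T0
  have T2 := (AB.const_mul 2).fun_add T1
  have T3 := (hI1.const_mul (2 * c)).fun_add T2
  have T4 := (FB.const_mul (-2)).fun_add T3
  have T5 := (FA.const_mul (-2)).fun_add T4
  have T6 := (integrable_const (μ := μ.prod ν) (c ^ 2)).fun_add T5
  have T7 := BB.fun_add T6
  have T8 := AA.fun_add T7
  rw [integral_add hI T8, integral_add AA T7, integral_add BB T6,
    integral_add (integrable_const _) T5, integral_add (FA.const_mul (-2)) T4,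
    integral_add (FB.const_mul (-2)) T3, integral_add (hI1.const_mul (2 * c)) T2,
    integral_add (AB.const_mul 2) T1, integral_add (A1.const_mul (-2 * c)) T0] at key
  simp only [integral_const_mul, iFA, iFB, iAB, iAA, iBB, iA, iB] at key
  rw [q1, q2]
  simp at key
  rw [← hc] at key
  nlinarith
theorem efron_stein (μ : Measure ℝ) [IsProbabilityMeasure μ] : ∀ (n : ℕ)
    (F : (Fin n → ℝ) → ℝ) (G : Fin n → (Fin n → ℝ) → ℝ),
    MemLp F 2 (Measure.pi fun _ => μ) → (∀ i, Integrable (G i) (Measure.pi fun _ => μ)) →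
    (∀ i, ∀ᵐ x ∂(Measure.pi fun _ : Fin n => μ),
      ∫ t, F (Function.update x i t) ^ 2 ∂μ - (∫ t, F (Function.update x i t) ∂μ) ^ 2
        ≤ ∫ t, G i (Function.update x i t) ∂μ) →
    ∫ x, F x ^ 2 ∂(Measure.pi fun _ => μ) - (∫ x, F x ∂(Measure.pi fun _ => μ)) ^ 2
      ≤ ∑ i, ∫ x, G i x ∂(Measure.pi fun _ => μ) := by
  intro n
  induction n with
  | zero =>
    intro F G _ _ _
    have hc : ∀ x, F x = F 0 := fun x => congrArg F (Subsingleton.elim _ _)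
    simp [hc]
  | succ n ih =>
    intro F G hF hG h
    set P := Measure.pi fun _ : Fin n => μ with hP
    obtain ⟨e, mp, me, he⟩ : ∃ e : ℝ × (Fin n → ℝ) → (Fin (n+1) → ℝ),
        MeasurePreserving e (μ.prod P) (Measure.pi fun _ : Fin (n+1) => μ) ∧
        MeasurableEmbedding e ∧ ∀ z, e z = (Fin.cons z.1 z.2 : Fin (n+1) → ℝ) := by
      refine ⟨(MeasurableEquiv.piFinSuccAbove (fun _ => ℝ) 0).symm,
        (measurePreserving_piFinSuccAbove (fun _ : Fin (n+1) => μ) 0).symm,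
        MeasurableEquiv.measurableEmbedding _, fun z => ?_⟩
      simp [MeasurableEquiv.piFinSuccAbove, Fin.insertNthEquiv]
    have hF' : MemLp (fun z : ℝ × (Fin n → ℝ) => F (Fin.cons z.1 z.2)) 2 (μ.prod P) := by
      have := hF.comp_measurePreserving mp
      simpa only [Function.comp_def, he] using this
    have hG' : ∀ i, Integrable (fun z : ℝ × (Fin n → ℝ) => G i (Fin.cons z.1 z.2)) (μ.prod P) := by
      intro i
      have := (mp.integrable_comp_emb me).2 (hG i)
      simpa only [Function.comp_def, he] using this
    have iT : ∀ f : (Fin (n+1) → ℝ) → ℝ, ∫ x, f x ∂(Measure.pi fun _ => μ)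
        = ∫ z : ℝ × (Fin n → ℝ), f (Fin.cons z.1 z.2) ∂(μ.prod P) := by
      intro f
      rw [← mp.integral_comp me f]
      simp only [he]
    have h' : ∀ i, ∀ᵐ z : ℝ × (Fin n → ℝ) ∂(μ.prod P),
      ∫ t, F (Function.update (Fin.cons z.1 z.2) i t) ^ 2 ∂μ
        - (∫ t, F (Function.update (Fin.cons z.1 z.2) i t) ∂μ) ^ 2
        ≤ ∫ t, G i (Function.update (Fin.cons z.1 z.2) i t) ∂μ := by
      intro i
      have := mp.quasiMeasurePreserving.ae (h i)
      simpa only [he] using this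
    rw [iT, iT, Fin.sum_univ_succ]
    simp_rw [iT]
    refine (var_prod_le μ P _ hF').trans ?_
    rw [add_comm]
    refine add_le_add ?_ ?_
    · have h0 := h' 0
      simp only [Fin.update_cons_zero] at h0
      have h0' : ∀ᵐ y ∂P, ∀ᵐ x ∂μ, ∫ t, F (Fin.cons t y) ^ 2 ∂μ
        - (∫ t, F (Fin.cons t y) ∂μ) ^ 2 ≤ ∫ t, G 0 (Fin.cons t y) ∂μ := by
        have := Measure.ae_ae_of_ae_prod (Measure.measurePreserving_swap (μ := P) (ν := μ) |>.quasiMeasurePreserving.ae h0)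
        simpa using this
      rw [integral_prod_symm _ (hG' 0)]
      refine integral_mono_ae ?_ (hG' 0).integral_prod_right ?_
      · exact hF'.integrable_sq.integral_prod_right.sub
          (memLp_marginal P μ (fun z => F (Fin.cons z.2 z.1))
            (hF'.comp_measurePreserving Measure.measurePreserving_swap)).integrable_sq
      · filter_upwards [h0'] with y hy
        exact hy.exists.choose_spec
    · have hs : ∀ i : Fin n, ∀ᵐ x ∂μ, ∀ᵐ y ∂P,
          ∫ t, F (Fin.cons x (Function.update y i t)) ^ 2 ∂μ
            - (∫ t, F (Fin.cons x (Function.update y i t)) ∂μ) ^ 2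
            ≤ ∫ t, G i.succ (Fin.cons x (Function.update y i t)) ∂μ := by
        intro i
        have := Measure.ae_ae_of_ae_prod (h' i.succ)
        simpa only [Fin.cons_update] using this
      have hsum : ∑ i : Fin n, ∫ z : ℝ × (Fin n → ℝ), G i.succ (Fin.cons z.1 z.2) ∂(μ.prod P)
          = ∫ x, ∑ i : Fin n, ∫ y, G i.succ (Fin.cons x y) ∂P ∂μ := by
        rw [integral_finsetSum _ fun i _ => (hG' i.succ).integral_prod_left]
        exact Finset.sum_congr rfl fun i _ => integral_prod _ (hG' i.succ)
      rw [hsum]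
      refine integral_mono_ae ?_ (integrable_finsetSum _ fun i _ => (hG' i.succ).integral_prod_left) ?_
      · exact hF'.integrable_sq.integral_prod_left.sub (memLp_marginal μ P _ hF').integrable_sq
      · have a1 : ∀ᵐ x ∂μ, ∀ i : Fin n, Integrable (fun y => G i.succ (Fin.cons x y)) P :=
          ae_all_iff.2 fun i => (hG' i.succ).prod_right_ae
        have a2 := hF'.integrable_sq.prod_right_ae
        have a3 := hF'.1.prodMk_left
        filter_upwards [a1, a2, a3, ae_all_iff.2 hs] with x h1 h2 h3 h4
        exact ih (fun y => F (Fin.cons x y)) (fun i y => G i.succ (Fin.cons x y))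
          ((memLp_two_iff_integrable_sq h3).2 h2) h1 h4


lemma pi_gauss_density (N : ℕ) : (Measure.pi fun _ : Fin N => gaussianReal 0 1) =
    (volume : Measure (Fin N → ℝ)).withDensity
      (fun x => ENNReal.ofReal (∏ i, gaussianPDFReal 0 1 (x i))) := by
  refine Measure.pi_eq fun s hs => ?_
  rw [withDensity_apply _ (MeasurableSet.univ_pi hs), volume_pi, Measure.restrict_pi_pi]
  rw [← ofReal_integral_eq_lintegral_ofReal]
  · rw [integral_fintype_prod_eq_prod (f := fun _ => gaussianPDFReal 0 1),
      ENNReal.ofReal_prod_of_nonneg]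
    · refine Finset.prod_congr rfl fun i _ => ?_
      rw [gaussianReal_apply_eq_integral _ one_ne_zero]
    · intro i _
      exact integral_nonneg fun x => gaussianPDFReal_nonneg _ _ _
  · exact Integrable.fintype_prod (f := fun _ => gaussianPDFReal 0 1) fun i => (integrable_gaussianPDFReal 0 1).restrict
  · exact ae_of_all _ fun x => Finset.prod_nonneg fun i _ => gaussianPDFReal_nonneg _ _ _

lemma pdf_prod (N : ℕ) (x : EuclideanSpace ℝ (Fin N)) :
    ∏ i, gaussianPDFReal 0 1 (x i) = (√(2 * Real.pi))⁻¹ ^ N * Real.exp (-‖x‖ ^ 2 / 2) := by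
  simp only [gaussianPDFReal, Finset.prod_mul_distrib, ← Real.exp_sum]
  simp [EuclideanSpace.norm_sq_eq, neg_div, Finset.sum_div]

lemma pi_gauss_integral (N : ℕ) (h : EuclideanSpace ℝ (Fin N) → ℝ) :
    ∫ x, h (WithLp.toLp 2 x) ∂(Measure.pi fun _ : Fin N => gaussianReal 0 1) =
      ∫ x, ((√(2 * Real.pi))⁻¹ ^ N * Real.exp (-‖x‖ ^ 2 / 2)) * h x := by
  have hm : Measurable fun x : Fin N → ℝ => ∏ i, gaussianPDFReal 0 1 (x i) := by
    refine Finset.measurable_prod _ fun i _ => ?_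
    exact (measurable_gaussianPDFReal 0 1).comp (measurable_pi_apply i)
  rw [pi_gauss_density, integral_withDensity_eq_integral_toReal_smul
    hm.ennreal_ofReal (ae_of_all _ fun _ => ENNReal.ofReal_lt_top)]
  rw [← (PiLp.volume_preserving_toLp (Fin N)).integral_comp (MeasurableEquiv.toLp 2 _).measurableEmbedding]
  refine integral_congr_ae (ae_of_all _ fun x => ?_)
  have := pdf_prod N (WithLp.toLp 2 x)
  simp only at this
  simp only [smul_eq_mul]
  rw [ENNReal.toReal_ofReal (Finset.prod_nonneg fun i _ => gaussianPDFReal_nonneg _ _ _), this]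

lemma polar_integral (N : ℕ) [NeZero N] (h : EuclideanSpace ℝ (Fin N) → ℝ) :
    ∫ x, h x = ∫ z : sphere (0 : EuclideanSpace ℝ (Fin N)) 1 × Set.Ioi (0:ℝ),
      h ((z.2 : ℝ) • (z.1 : EuclideanSpace ℝ (Fin N)))
      ∂((volume : Measure (EuclideanSpace ℝ (Fin N))).toSphere.prod (Measure.volumeIoiPow (N - 1))) := by
  have hd : Module.finrank ℝ (EuclideanSpace ℝ (Fin N)) = N := by simp
  have mp := (volume : Measure (EuclideanSpace ℝ (Fin N))).measurePreserving_homeomorphUnitSphereProd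
  rw [hd] at mp
  have h2 := mp.integral_comp (homeomorphUnitSphereProd (EuclideanSpace ℝ (Fin N))).measurableEmbedding
    (fun z => h ((z.2 : ℝ) • (z.1 : EuclideanSpace ℝ (Fin N))))
  rw [← h2]
  have h3 := integral_subtype_comap (μ := (volume : Measure (EuclideanSpace ℝ (Fin N))))
    (measurableSet_singleton (0 : EuclideanSpace ℝ (Fin N))).compl fun x ↦ h x
  rw [restrict_compl_singleton] at h3
  rw [← h3]
  refine integral_congr_ae (ae_of_all _ fun x => ?_)
  have hx : ‖x.1‖ ≠ 0 := norm_ne_zero_iff.2 x.2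
  simp [smul_smul, hx]

lemma polar_integrable (N : ℕ) [NeZero N] (h : EuclideanSpace ℝ (Fin N) → ℝ) (hh : Integrable h) :
    Integrable (fun z : sphere (0 : EuclideanSpace ℝ (Fin N)) 1 × Set.Ioi (0:ℝ) =>
      h ((z.2 : ℝ) • (z.1 : EuclideanSpace ℝ (Fin N))))
      ((volume : Measure (EuclideanSpace ℝ (Fin N))).toSphere.prod (Measure.volumeIoiPow (N - 1))) := by
  have hd : Module.finrank ℝ (EuclideanSpace ℝ (Fin N)) = N := by simp
  have mp := (volume : Measure (EuclideanSpace ℝ (Fin N))).measurePreserving_homeomorphUnitSphereProd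
  rw [hd] at mp
  rw [← mp.integrable_comp_emb (homeomorphUnitSphereProd (EuclideanSpace ℝ (Fin N))).measurableEmbedding]
  have h1 : Integrable (fun x : ({0}ᶜ : Set (EuclideanSpace ℝ (Fin N))) => h x.1) (volume.comap Subtype.val) :=
    (integrableOn_iff_comap_subtypeVal (measurableSet_singleton _).compl).1 hh.integrableOn
  refine h1.congr (ae_of_all _ fun x => ?_)
  have hx : ‖x.1‖ ≠ 0 := norm_ne_zero_iff.2 x.2
  simp [smul_smul, hx]

lemma gauss_polar (N : ℕ) [NeZero N] (h : EuclideanSpace ℝ (Fin N) → ℝ) (a : ℝ → ℝ)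
    (b : sphere (0 : EuclideanSpace ℝ (Fin N)) 1 → ℝ)
    (hab : ∀ ω : sphere (0 : EuclideanSpace ℝ (Fin N)) 1, ∀ r : ℝ, 0 < r →
      h (r • (ω : EuclideanSpace ℝ (Fin N))) = b ω * a r) :
    ∫ x, h (WithLp.toLp 2 x) ∂(Measure.pi fun _ : Fin N => gaussianReal 0 1) =
      (∫ ω, b ω ∂(volume : Measure (EuclideanSpace ℝ (Fin N))).toSphere) *
      ∫ r : Set.Ioi (0:ℝ), (((√(2 * Real.pi))⁻¹ ^ N * Real.exp (-r.1 ^ 2 / 2)) * a r)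
        ∂(Measure.volumeIoiPow (N - 1)) := by
  rw [pi_gauss_integral, polar_integral, ← integral_prod_mul]
  refine integral_congr_ae (ae_of_all _ fun z => ?_)
  have h1 : ‖(z.1 : EuclideanSpace ℝ (Fin N))‖ = 1 := by simp
  simp only
  rw [hab z.1 z.2.1 z.2.2, norm_smul, h1]
  simp
  ring

/-- the slice derivative of `x ↦ ‖x‖ φ(x/‖x‖)` -/
noncomputable def sliceD {N : ℕ} (φ : EuclideanSpace ℝ (Fin N) → ℝ) (e x : EuclideanSpace ℝ (Fin N)) : ℝ :=
  inner ℝ (‖x‖⁻¹ • x) e * (φ (‖x‖⁻¹ • x) - fderiv ℝ φ (‖x‖⁻¹ • x) (‖x‖⁻¹ • x))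
    + fderiv ℝ φ (‖x‖⁻¹ • x) e

lemma hom_hasDerivAt {N : ℕ} (φ : EuclideanSpace ℝ (Fin N) → ℝ) (hφ : ContDiff ℝ 1 φ)
    (X : ℝ → EuclideanSpace ℝ (Fin N)) (e : EuclideanSpace ℝ (Fin N)) (t : ℝ)
    (hX : HasDerivAt X e t) (h0 : X t ≠ 0) :
    HasDerivAt (fun s => ‖X s‖ * φ (‖X s‖⁻¹ • X s)) (sliceD φ e (X t)) t := by
  have hn0 : ‖X t‖ ≠ 0 := norm_ne_zero_iff.2 h0
  have hn : HasDerivAt (fun s => ‖X s‖) (inner ℝ (‖X t‖⁻¹ • X t) e) t := by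
    have h1 := hX.norm_sq.sqrt (by positivity)
    simp only [Real.sqrt_sq (norm_nonneg _)] at h1
    refine h1.congr_deriv ?_
    rw [real_inner_smul_left]
    field_simp
  have hω := (hn.inv hn0).smul hX
  have hd : DifferentiableAt ℝ φ (‖X t‖⁻¹ • X t) := hφ.differentiable one_ne_zero _
  have hφω : HasDerivAt (fun s => φ (‖X s‖⁻¹ • X s)) _ t :=
    hd.hasFDerivAt.comp_hasDerivAt t hω
  refine (hn.mul hφω).congr_deriv ?_
  simp only [sliceD, map_add, map_smul, smul_eq_mul, Pi.inv_apply]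
  field_simp
  ring

lemma sliceD_cont {N : ℕ} (φ : EuclideanSpace ℝ (Fin N) → ℝ) (hφ : ContDiff ℝ 1 φ)
    (X : ℝ → EuclideanSpace ℝ (Fin N)) (e : EuclideanSpace ℝ (Fin N))
    (hX : Continuous X) (h0 : ∀ t, X t ≠ 0) : Continuous fun t => sliceD φ e (X t) := by
  have hn0 : ∀ t, ‖X t‖ ≠ 0 := fun t => norm_ne_zero_iff.2 (h0 t)
  have hω : Continuous fun t => ‖X t‖⁻¹ • X t := (hX.norm.inv₀ hn0).smul hX
  have h1 : Continuous (fderiv ℝ φ) := hφ.continuous_fderiv one_ne_zero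
  have h2 := hφ.continuous
  have h3 := h1.comp hω
  simp only [sliceD]
  exact ((hω.inner continuous_const).mul ((h2.comp hω).sub (h3.clm_apply hω))).add
    (h3.clm_apply continuous_const)

lemma sliceD_meas {N : ℕ} (φ : EuclideanSpace ℝ (Fin N) → ℝ) (hφ : ContDiff ℝ 1 φ)
    (e : EuclideanSpace ℝ (Fin N)) : Measurable fun x => sliceD φ e x := by
  have hω : Measurable fun x : EuclideanSpace ℝ (Fin N) => ‖x‖⁻¹ • x := by fun_prop
  have h1 : Continuous (fderiv ℝ φ) := hφ.continuous_fderiv one_ne_zero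
  have h2 := hφ.continuous
  have h3 : Continuous fun x : EuclideanSpace ℝ (Fin N) => inner ℝ x e * (φ x - fderiv ℝ φ x x)
    + fderiv ℝ φ x e := by fun_prop
  exact h3.measurable.comp hω

lemma sliceD_bdd {N : ℕ} (φ : EuclideanSpace ℝ (Fin N) → ℝ) (M : ℝ)
    (hM : ∀ x, ‖x‖ ≤ 1 → |φ x| ≤ M ∧ ‖fderiv ℝ φ x‖ ≤ M) (e x : EuclideanSpace ℝ (Fin N))
    (he : ‖e‖ = 1) : |sliceD φ e x| ≤ 3 * M := by
  have hω : ‖‖x‖⁻¹ • x‖ ≤ 1 := by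
    rw [norm_smul, norm_inv, norm_norm]; exact inv_mul_le_one
  simp only [sliceD]
  set ω := ‖x‖⁻¹ • x
  obtain ⟨h1, h2⟩ := hM ω hω
  have hM0 : 0 ≤ M := (norm_nonneg _).trans h2
  have a1 : |inner ℝ ω e| ≤ 1 := by
    have := abs_real_inner_le_norm ω e
    rw [he, mul_one] at this; exact this.trans hω
  have a2 : |fderiv ℝ φ ω ω| ≤ M := by
    have := (fderiv ℝ φ ω).le_opNorm ω
    rw [Real.norm_eq_abs] at this
    nlinarith [norm_nonneg ω]
  have a3 : |fderiv ℝ φ ω e| ≤ M := by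
    have := (fderiv ℝ φ ω).le_opNorm e
    rw [Real.norm_eq_abs, he] at this
    linarith
  calc _ ≤ |inner ℝ ω e * (φ ω - fderiv ℝ φ ω ω)| + |fderiv ℝ φ ω e| := abs_add_le _ _
    _ ≤ 1 * (M + M) + M := by
      rw [abs_mul]
      gcongr
      exact (abs_sub _ _).trans (add_le_add h1 a2)
    _ = 3 * M := by ring

lemma sliceD_sum {N : ℕ} (φ : EuclideanSpace ℝ (Fin N) → ℝ) (x : EuclideanSpace ℝ (Fin N))
    (ω : EuclideanSpace ℝ (Fin N)) (hω : ‖ω‖ = 1) (hx : ‖x‖⁻¹ • x = ω) :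
    ∑ i, sliceD φ (EuclideanSpace.single i 1) x ^ 2 =
      φ ω ^ 2 + (‖fderiv ℝ φ ω‖ ^ 2 - (fderiv ℝ φ ω ω) ^ 2) := by
  simp only [sliceD, hx]
  set L := fderiv ℝ φ ω
  set g := (InnerProductSpace.toDual ℝ (EuclideanSpace ℝ (Fin N))).symm L
  have hg : ∀ y, L y = inner ℝ g y := fun y => by simp [g]
  have hgn : ‖L‖ = ‖g‖ := by simp [g]
  have e : ∀ i, inner ℝ ω (EuclideanSpace.single i (1:ℝ)) * (φ ω - L ω) + L (EuclideanSpace.single i 1)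
    = inner ℝ ((φ ω - L ω) • ω + g) (EuclideanSpace.single i (1:ℝ)) := fun i => by
      rw [hg (EuclideanSpace.single i 1), inner_add_left, real_inner_smul_left]; ring
  simp_rw [e]
  have : ∀ v : EuclideanSpace ℝ (Fin N), ∑ i, inner ℝ v (EuclideanSpace.single i (1:ℝ)) ^ 2 = ‖v‖ ^ 2 := by
    intro v
    simp [EuclideanSpace.norm_sq_eq, EuclideanSpace.inner_single_right]
  rw [this, norm_add_sq_real, norm_smul, hω, real_inner_smul_left, real_inner_comm, ← hg, hgn]
  simp
  ring

theorem sphere_poincare (N : ℕ) (hN : 2 ≤ N) (φ : EuclideanSpace ℝ (Fin N) → ℝ)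
    (hφ : ContDiff ℝ 1 φ)
    (h0 : ∫ ω : sphere (0 : EuclideanSpace ℝ (Fin N)) 1, φ ω
      ∂(volume : Measure (EuclideanSpace ℝ (Fin N))).toSphere = 0) :
    ((N : ℝ) - 1) * ∫ ω : sphere (0 : EuclideanSpace ℝ (Fin N)) 1, φ ω ^ 2
      ∂(volume : Measure (EuclideanSpace ℝ (Fin N))).toSphere ≤
    ∫ ω : sphere (0 : EuclideanSpace ℝ (Fin N)) 1,
      (‖fderiv ℝ φ ω‖ ^ 2 - (fderiv ℝ φ ω ω) ^ 2)
      ∂(volume : Measure (EuclideanSpace ℝ (Fin N))).toSphere := by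
  haveI : NeZero N := ⟨by omega⟩
  have hDc : Continuous (fderiv ℝ φ) := hφ.continuous_fderiv one_ne_zero
  have hφc := hφ.continuous
  obtain ⟨M1, hM1⟩ := (isCompact_closedBall (0 : EuclideanSpace ℝ (Fin N)) 1).exists_bound_of_continuousOn hφc.continuousOn
  obtain ⟨M2, hM2⟩ := (isCompact_closedBall (0 : EuclideanSpace ℝ (Fin N)) 1).exists_bound_of_continuousOn hDc.continuousOn
  set M := max M1 M2
  have hM : ∀ x : EuclideanSpace ℝ (Fin N), ‖x‖ ≤ 1 → |φ x| ≤ M ∧ ‖fderiv ℝ φ x‖ ≤ M := fun x hx =>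
    ⟨(hM1 x (by simpa using hx)).trans (le_max_left _ _), (hM2 x (by simpa using hx)).trans (le_max_right _ _)⟩
  set P := Measure.pi fun _ : Fin N => gaussianReal 0 1 with hP
  set σ := (volume : Measure (EuclideanSpace ℝ (Fin N))).toSphere with hσ
  set F : (Fin N → ℝ) → ℝ := fun x => ‖WithLp.toLp 2 x‖ * φ (‖WithLp.toLp 2 x‖⁻¹ • WithLp.toLp 2 x) with hF
  set G : Fin N → (Fin N → ℝ) → ℝ := fun i x => sliceD φ (EuclideanSpace.single i 1) (WithLp.toLp 2 x) ^ 2 with hG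
  -- second moments
  have hxi : ∀ i : Fin N, Integrable (fun x : Fin N → ℝ => x i ^ 2) P := fun i =>
    ((measurePreserving_eval (fun _ : Fin N => gaussianReal 0 1) i).integrable_comp
      (by fun_prop)).2 gr_sq_integrable
  have hone : ∫ t : ℝ, t ^ 2 ∂(gaussianReal 0 1) = 1 := by
    have h := variance_id_gaussianReal (μ := 0) (v := 1)
    rw [variance_eq_integral (by fun_prop)] at h
    simpa using h
  have hxi1 : ∀ i : Fin N, ∫ x : Fin N → ℝ, x i ^ 2 ∂P = 1 := fun i => by
    have mp := measurePreserving_eval (fun _ : Fin N => gaussianReal 0 1) i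
    rw [← hone, ← mp.map_eq, integral_map mp.measurable.aemeasurable (by fun_prop)]
  have hnsq : ∀ x : Fin N → ℝ, ‖WithLp.toLp 2 x‖ ^ 2 = ∑ i, x i ^ 2 := fun x => by
    simp [EuclideanSpace.norm_sq_eq]
  have hn2 : Integrable (fun x : Fin N → ℝ => ‖WithLp.toLp 2 x‖ ^ 2) P := by
    simp_rw [hnsq]
    exact integrable_finsetSum _ fun i _ => hxi i
  have hn2i : ∫ x : Fin N → ℝ, ‖WithLp.toLp 2 x‖ ^ 2 ∂P = N := by
    simp_rw [hnsq]
    rw [integral_finsetSum _ fun i _ => hxi i]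
    simp [hxi1]
  have hFm : Measurable F := by
    have h1 : Measurable fun x : EuclideanSpace ℝ (Fin N) => ‖x‖⁻¹ • x := by fun_prop
    have h2 := hφc.measurable.comp h1
    have h3 : Measurable fun x : EuclideanSpace ℝ (Fin N) => ‖x‖ * φ (‖x‖⁻¹ • x) := measurable_norm.mul h2
    exact h3.comp (by fun_prop)
  have hω1 : ∀ x : EuclideanSpace ℝ (Fin N), ‖‖x‖⁻¹ • x‖ ≤ 1 := fun x => by
    rw [norm_smul, norm_inv, norm_norm]; exact inv_mul_le_one
  have hFL : MemLp F 2 P := by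
    rw [memLp_two_iff_integrable_sq hFm.aestronglyMeasurable]
    refine (hn2.const_mul (M ^ 2)).mono' (hFm.pow_const 2).aestronglyMeasurable (ae_of_all _ fun x => ?_)
    have h1 := (hM _ (hω1 (WithLp.toLp 2 x))).1
    have h2 : φ (‖WithLp.toLp 2 x‖⁻¹ • WithLp.toLp 2 x) ^ 2 ≤ M ^ 2 := by
      rw [← sq_abs]; gcongr
    simp only [hF]
    rw [Real.norm_eq_abs, abs_of_nonneg (sq_nonneg _), mul_pow, mul_comm]
    gcongr
  have hGI : ∀ i, Integrable (G i) P := fun i => by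
    refine (integrable_const ((3 * M) ^ 2)).mono'
      (((sliceD_meas φ hφ _).comp (by fun_prop)).pow_const 2).aestronglyMeasurable (ae_of_all _ fun x => ?_)
    have := sliceD_bdd φ M hM (EuclideanSpace.single i 1) (WithLp.toLp 2 x) (by simp)
    simp only [hG]
    rw [Real.norm_eq_abs, abs_of_nonneg (sq_nonneg _), ← sq_abs]
    gcongr
  have hne : ∀ i : Fin N, ∀ᵐ x ∂P, x i ≠ 0 := fun i => by
    have mp := measurePreserving_eval (fun _ : Fin N => gaussianReal 0 1) i
    have h1 : ∀ᵐ t ∂(gaussianReal 0 1), t ≠ 0 := by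
      haveI := nullSingletonClass_gaussianReal (μ := 0) (v := 1) one_ne_zero
      exact ae_iff.2 (by simp)
    exact mp.quasiMeasurePreserving.ae h1
  have hslice : ∀ i, ∀ᵐ x ∂P,
      ∫ t, F (Function.update x i t) ^ 2 ∂(gaussianReal 0 1) - (∫ t, F (Function.update x i t) ∂(gaussianReal 0 1)) ^ 2
        ≤ ∫ t, G i (Function.update x i t) ∂(gaussianReal 0 1) := by
    intro i
    obtain ⟨j, hj⟩ : ∃ j : Fin N, j ≠ i := by
      haveI : Nontrivial (Fin N) := Fin.nontrivial_iff_two_le.2 hN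
      exact exists_ne i
    filter_upwards [hne j] with x hx
    set X : ℝ → EuclideanSpace ℝ (Fin N) := fun t => WithLp.toLp 2 (Function.update x i t) with hXdef
    have hX0 : ∀ t, X t ≠ 0 := fun t h => by
      have : (X t) j = 0 := by rw [h]; rfl
      simp [hXdef, hj] at this
      exact hx this
    have hXe : X = fun t => WithLp.toLp 2 (Function.update x i 0) + t • EuclideanSpace.single i (1:ℝ) := by
      ext t k
      by_cases hk : k = i
      · subst hk; simp [hXdef]
      · simp [hXdef, hk]
    have hXd : ∀ t, HasDerivAt X (EuclideanSpace.single i 1) t := fun t => by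
      rw [hXe]
      simpa using ((hasDerivAt_id t).smul_const (EuclideanSpace.single i (1:ℝ))).const_add (WithLp.toLp 2 (Function.update x i 0))
    have hXc : Continuous X := continuous_iff_continuousAt.2 fun t => (hXd t).continuousAt
    exact gaussian_poincare_1d (fun t => F (Function.update x i t)) (fun t => sliceD φ (EuclideanSpace.single i 1) (X t))
      (fun t => hom_hasDerivAt φ hφ X _ t (hXd t) (hX0 t)) (sliceD_cont φ hφ X _ hXc hX0) (3 * M)
      (fun t => sliceD_bdd φ M hM _ _ (by simp))
  have main := efron_stein (gaussianReal 0 1) N F G hFL hGI hslice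
  rw [← hP] at main
  rw [← integral_finsetSum _ fun i _ => hGI i] at main
  -- polar
  have nω : ∀ (ω : sphere (0 : EuclideanSpace ℝ (Fin N)) 1) (r : ℝ), 0 < r → ‖r • (ω : EuclideanSpace ℝ (Fin N))‖ = r := fun ω r hr => by
    rw [norm_smul]; simp [abs_of_pos hr]
  have dω : ∀ (ω : sphere (0 : EuclideanSpace ℝ (Fin N)) 1) (r : ℝ), 0 < r →
      ‖r • (ω : EuclideanSpace ℝ (Fin N))‖⁻¹ • (r • (ω : EuclideanSpace ℝ (Fin N))) = ω := fun ω r hr => by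
    rw [nω ω r hr, smul_smul, inv_mul_cancel₀ hr.ne', one_smul]
  have p1 := gauss_polar N (fun _ => 1) (fun _ => 1) (fun _ => 1) (fun ω r hr => by simp)
  have p2 := gauss_polar N (fun x => ‖x‖ ^ 2) (fun r => r ^ 2) (fun _ => 1) (fun ω r hr => by
    simp only [nω ω r hr, one_mul])
  have p3 := gauss_polar N (fun x => ‖x‖ * φ (‖x‖⁻¹ • x)) (fun r => r) (fun ω => φ ω) (fun ω r hr => by
    beta_reduce; rw [dω ω r hr, nω ω r hr]; ring)
  have p4 := gauss_polar N (fun x => (‖x‖ * φ (‖x‖⁻¹ • x)) ^ 2) (fun r => r ^ 2) (fun ω => φ ω ^ 2) (fun ω r hr => by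
    beta_reduce; rw [dω ω r hr, nω ω r hr]; ring)
  have p5 := gauss_polar N (fun x => ∑ i, sliceD φ (EuclideanSpace.single i 1) x ^ 2) (fun _ => 1)
    (fun ω => φ ω ^ 2 + (‖fderiv ℝ φ ω‖ ^ 2 - (fderiv ℝ φ ω ω) ^ 2)) (fun ω r hr => by
    rw [sliceD_sum φ _ ω (by simp) (dω ω r hr), mul_one])
  rw [← hP, ← hσ] at p1 p2 p3 p4 p5
  rw [h0, zero_mul] at p3
  rw [hn2i] at p2
  have m1 : ∫ x, F x ∂P = 0 := p3
  rw [m1] at main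
  have m2 := p4.symm.trans_le ((by linarith : ∫ x, F x ^ 2 ∂P ≤ _).trans_eq p5)
  set K1 := ∫ r : Set.Ioi (0:ℝ), (((√(2 * Real.pi))⁻¹ ^ N * Real.exp (-r.1 ^ 2 / 2)) * 1) ∂(Measure.volumeIoiPow (N - 1))
  set K2 := ∫ r : Set.Ioi (0:ℝ), (((√(2 * Real.pi))⁻¹ ^ N * Real.exp (-r.1 ^ 2 / 2)) * r.1 ^ 2) ∂(Measure.volumeIoiPow (N - 1))
  have hK1 : 0 ≤ K1 := integral_nonneg fun r => by positivity
  set S := ∫ ω : sphere (0 : EuclideanSpace ℝ (Fin N)) 1, (1:ℝ) ∂σ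
  have p1' : (1:ℝ) = S * K1 := by simpa using p1
  have hK1p : 0 < K1 := lt_of_le_of_ne hK1 (fun h => by rw [← h] at p1'; simp at p1')
  have hK2 : K2 = N * K1 := by
    calc K2 = (S * K1) * K2 := by rw [← p1', one_mul]
      _ = (S * K2) * K1 := by ring
      _ = _ := by rw [← p2]
  have hφS : Continuous fun ω : sphere (0 : EuclideanSpace ℝ (Fin N)) 1 => φ ω ^ 2 := by fun_prop
  have hτS : Continuous fun ω : sphere (0 : EuclideanSpace ℝ (Fin N)) 1 =>
      (‖fderiv ℝ φ ω‖ ^ 2 - (fderiv ℝ φ ω ω) ^ 2) := by fun_prop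
  rw [integral_add (hφS.integrable_of_hasCompactSupport (HasCompactSupport.of_compactSpace _))
    (hτS.integrable_of_hasCompactSupport (HasCompactSupport.of_compactSpace _)), hK2, ← mul_assoc] at m2
  have := le_of_mul_le_mul_right m2 hK1p
  linarith

lemma volumeIoiPow_integral (n : ℕ) (f : ℝ → ℝ) :
    ∫ r : Set.Ioi (0:ℝ), f r ∂(Measure.volumeIoiPow n) = ∫ r in Set.Ioi (0:ℝ), r ^ n * f r := by
  simp only [Measure.volumeIoiPow, ENNReal.ofReal]
  rw [integral_withDensity_eq_integral_smul,
    integral_subtype_comap measurableSet_Ioi fun a : ℝ ↦ Real.toNNReal (a ^ n) • f a,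
    setIntegral_congr_fun measurableSet_Ioi fun x hx ↦ ?_]
  · beta_reduce
    rw [NNReal.smul_def, Real.coe_toNNReal _ (pow_nonneg hx.out.le _), smul_eq_mul]
  · exact (measurable_subtype_coe.pow_const _).real_toNNReal

lemma polar_mono_r (N : ℕ) [NeZero N] (h1 h2 : EuclideanSpace ℝ (Fin N) → ℝ)
    (i1 : Integrable h1) (i2 : Integrable h2)
    (H : ∀ r : ℝ, 0 < r →
      ∫ ω : sphere (0 : EuclideanSpace ℝ (Fin N)) 1, h1 (r • (ω : EuclideanSpace ℝ (Fin N)))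
        ∂(volume : Measure (EuclideanSpace ℝ (Fin N))).toSphere ≤
      ∫ ω : sphere (0 : EuclideanSpace ℝ (Fin N)) 1, h2 (r • (ω : EuclideanSpace ℝ (Fin N)))
        ∂(volume : Measure (EuclideanSpace ℝ (Fin N))).toSphere) :
    ∫ x, h1 x ≤ ∫ x, h2 x := by
  have j1 := polar_integrable N h1 i1
  have j2 := polar_integrable N h2 i2
  rw [polar_integral N h1, polar_integral N h2, integral_prod_symm _ j1, integral_prod_symm _ j2]
  exact integral_mono j1.integral_prod_right j2.integral_prod_right fun r => H r.1 r.2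

lemma polar_mono_w (N : ℕ) [NeZero N] (h1 h2 : EuclideanSpace ℝ (Fin N) → ℝ)
    (i1 : Integrable h1) (i2 : Integrable h2)
    (H : ∀ ω : sphere (0 : EuclideanSpace ℝ (Fin N)) 1,
      ∫ r in Set.Ioi (0:ℝ), r ^ (N - 1) * h1 (r • (ω : EuclideanSpace ℝ (Fin N))) ≤
      ∫ r in Set.Ioi (0:ℝ), r ^ (N - 1) * h2 (r • (ω : EuclideanSpace ℝ (Fin N)))) :
    ∫ x, h1 x ≤ ∫ x, h2 x := by
  have j1 := polar_integrable N h1 i1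
  have j2 := polar_integrable N h2 i2
  rw [polar_integral N h1, polar_integral N h2, integral_prod _ j1, integral_prod _ j2]
  refine integral_mono j1.integral_prod_left j2.integral_prod_left fun ω => ?_
  have := H ω
  rw [← volumeIoiPow_integral (N - 1) (fun r => h1 (r • (ω : EuclideanSpace ℝ (Fin N)))),
    ← volumeIoiPow_integral (N - 1) (fun r => h2 (r • (ω : EuclideanSpace ℝ (Fin N))))] at this
  exact this

lemma radial_hardy (m : ℕ) (ψ ψ' : ℝ → ℝ) (hd : ∀ t, HasDerivAt ψ (ψ' t) t) (hc : Continuous ψ')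
    (hz : ∀ t, 1 ≤ t → ψ t = 0) (hz' : ∀ t, 1 ≤ t → ψ' t = 0) :
    ∫ r in Set.Ioi (0:ℝ), r ^ (m + 2) * ((((m:ℝ) + 1) / 2) ^ 2 * (ψ r ^ 2 / r ^ 2)) ≤
      ∫ r in Set.Ioi (0:ℝ), r ^ (m + 2) * ψ' r ^ 2 := by
  have hψc : Continuous ψ := continuous_iff_continuousAt.2 fun t => (hd t).continuousAt
  have e1 : ∫ r in Set.Ioi (0:ℝ), r ^ (m + 2) * ((((m:ℝ) + 1) / 2) ^ 2 * (ψ r ^ 2 / r ^ 2)) =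
      ∫ r in (0:ℝ)..1, (((m:ℝ) + 1) / 2) ^ 2 * (r ^ m * ψ r ^ 2) := by
    rw [intervalIntegral.integral_of_le zero_le_one]
    rw [setIntegral_eq_of_subset_of_forall_sdiff_eq_zero (s := Set.Ioc (0:ℝ) 1) measurableSet_Ioi (fun x hx => hx.1)]
    · refine setIntegral_congr_fun measurableSet_Ioc fun r hr => ?_
      have : r ≠ 0 := hr.1.ne'
      field_simp
      ring
    · intro r hr
      have : 1 ≤ r := by
        by_contra h
        exact hr.2 ⟨hr.1, (not_le.1 h).le⟩
      simp [hz r this]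
  have e2 : ∫ r in Set.Ioi (0:ℝ), r ^ (m + 2) * ψ' r ^ 2 =
      ∫ r in (0:ℝ)..1, r ^ (m + 2) * ψ' r ^ 2 := by
    rw [intervalIntegral.integral_of_le zero_le_one]
    rw [setIntegral_eq_of_subset_of_forall_sdiff_eq_zero (s := Set.Ioc (0:ℝ) 1) measurableSet_Ioi (fun x hx => hx.1)]
    intro r hr
    have : 1 ≤ r := by
      by_contra h
      exact hr.2 ⟨hr.1, (not_le.1 h).le⟩
    simp [hz' r this]
  have e3 : ∫ r in (0:ℝ)..1, (((m:ℝ) + 1) * r ^ m * ψ r ^ 2 + r ^ (m + 1) * (2 * ψ r * ψ' r)) = 0 := by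
    rw [intervalIntegral.integral_eq_sub_of_hasDerivAt (f := fun r => r ^ (m + 1) * ψ r ^ 2)]
    · simp [hz 1 le_rfl]
    · intro r _
      have h1 := (hasDerivAt_pow (m + 1) r).mul ((hd r).pow 2)
      refine h1.congr_deriv ?_
      push_cast
      simp
    · exact Continuous.intervalIntegrable (by fun_prop) _ _
  rw [e1, e2]
  have e4 : 0 ≤ ∫ r in (0:ℝ)..1, r ^ m * (r * ψ' r + (((m:ℝ) + 1) / 2) * ψ r) ^ 2 := by
    apply intervalIntegral.integral_nonneg zero_le_one
    intro r hr
    have := hr.1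
    positivity
  have e5 : ∫ r in (0:ℝ)..1, r ^ m * (r * ψ' r + (((m:ℝ) + 1) / 2) * ψ r) ^ 2 =
      (∫ r in (0:ℝ)..1, r ^ (m + 2) * ψ' r ^ 2) -
      (∫ r in (0:ℝ)..1, (((m:ℝ) + 1) / 2) ^ 2 * (r ^ m * ψ r ^ 2)) +
      (((m:ℝ) + 1) / 2) *
      ∫ r in (0:ℝ)..1, (((m:ℝ) + 1) * r ^ m * ψ r ^ 2 + r ^ (m + 1) * (2 * ψ r * ψ' r)) := by
    rw [← intervalIntegral.integral_sub, ← intervalIntegral.integral_const_mul, ← intervalIntegral.integral_add]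
    · refine intervalIntegral.integral_congr fun r _ => ?_
      ring
    all_goals exact Continuous.intervalIntegrable (by fun_prop) _ _
  rw [e3] at e5
  linarith

lemma bdd_integrable (N : ℕ) (h : EuclideanSpace ℝ (Fin N) → ℝ) (hm : Measurable h) (C : ℝ)
    (hb : ∀ x, |h x| ≤ C) (hz : ∀ x, x ∉ ball (0 : EuclideanSpace ℝ (Fin N)) 1 → h x = 0) :
    Integrable h := by
  have h1 : IntegrableOn h (ball (0 : EuclideanSpace ℝ (Fin N)) 1) :=
    Measure.integrableOn_of_bounded measure_ball_lt_top.ne hm.aestronglyMeasurable (M := C)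
      (ae_of_all _ hb)
  exact h1.integrable_of_forall_notMem_eq_zero hz

end Helpers

/-- Let `N ≥ 2`. For every smooth `u` compactly supported in
the unit ball `B₁ᴺ` with spherical average zero,
`(N²/4) ∫_{B₁ᴺ} |u|²/|x|² dx ≤ ∫_{B₁ᴺ} |∇u|² dx`. -/
theorem hardy_sphere_avg_zero_ball
    (N : ℕ) (hN : 2 ≤ N) (u : EuclideanSpace ℝ (Fin N) → ℝ)
    (hu : ContDiff ℝ (⊤ : ℕ∞) u) (hsupp : HasCompactSupport u)
    (hball : tsupport u ⊆ ball (0 : EuclideanSpace ℝ (Fin N)) 1)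
    (havg : SphereAvgZero u) :
    ((N : ℝ) ^ 2 / 4) *
        (∫ x in ball (0 : EuclideanSpace ℝ (Fin N)) 1, (u x) ^ 2 / ‖x‖ ^ 2) ≤
      ∫ x in ball (0 : EuclideanSpace ℝ (Fin N)) 1, ‖fderiv ℝ u x‖ ^ 2 := by
  haveI : NeZero N := ⟨by omega⟩
  have hu1 : ContDiff ℝ 1 u := hu.of_le (by exact_mod_cast le_top)
  have hDc : Continuous (fderiv ℝ u) := hu1.continuous_fderiv one_ne_zero
  have hdiff : Differentiable ℝ u := hu1.differentiable one_ne_zero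
  have huc := hu1.continuous
  obtain ⟨L, hL⟩ := (hsupp.fderiv (𝕜 := ℝ)).exists_bound_of_continuous hDc
  have hL0 : 0 ≤ L := (norm_nonneg _).trans (hL 0)
  have hzu : ∀ x, x ∉ ball (0 : EuclideanSpace ℝ (Fin N)) 1 → u x = 0 := fun x hx =>
    image_eq_zero_of_notMem_tsupport fun h => hx (hball h)
  have hzD : ∀ x, x ∉ ball (0 : EuclideanSpace ℝ (Fin N)) 1 → fderiv ℝ u x = 0 := fun x hx =>
    image_eq_zero_of_notMem_tsupport fun h => hx (hball (tsupport_fderiv_subset ℝ h))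
  -- the value at the origin vanishes
  have hu0 : u 0 = 0 := by
    have h := havg 0 le_rfl
    simp only [zero_smul, integral_const, smul_eq_mul, mul_eq_zero] at h
    rcases h with h | h
    · exfalso
      rw [Measure.toSphere_real_apply_univ] at h
      have hb : 0 < (volume : Measure (EuclideanSpace ℝ (Fin N))).real (ball 0 1) :=
        ENNReal.toReal_pos (measure_ball_pos _ _ one_pos).ne' measure_ball_lt_top.ne
      have : (0:ℝ) < N := by exact_mod_cast (by omega : 0 < N)
      have h' : (0:ℝ) < N * (volume : Measure (EuclideanSpace ℝ (Fin N))).real (ball 0 1) := by positivity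
      simp only [finrank_euclideanSpace, Fintype.card_fin] at h
      linarith
    · exact h
  have hLip : ∀ x, |u x| ≤ L * ‖x‖ := fun x => by
    have := Convex.norm_image_sub_le_of_norm_fderiv_le (f := u) (𝕜 := ℝ) (fun y _ => hdiff y) (fun y _ => hL y)
      convex_univ (Set.mem_univ 0) (Set.mem_univ x)
    simpa [hu0] using this
  set q : EuclideanSpace ℝ (Fin N) → ℝ := fun x => u x ^ 2 / ‖x‖ ^ 2 with hq
  set p : EuclideanSpace ℝ (Fin N) → ℝ := fun x => fderiv ℝ u x (‖x‖⁻¹ • x) with hp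
  have hω1 : ∀ x : EuclideanSpace ℝ (Fin N), ‖‖x‖⁻¹ • x‖ ≤ 1 := fun x => by
    rw [norm_smul, norm_inv, norm_norm]; exact inv_mul_le_one
  have hpD : ∀ x, |p x| ≤ ‖fderiv ℝ u x‖ := fun x =>
    ((fderiv ℝ u x).le_opNorm _).trans (mul_le_of_le_one_right (norm_nonneg _) (hω1 x))
  have hpL : ∀ x, |p x| ≤ L := fun x => (hpD x).trans (hL x)
  have hpm : Measurable p := by
    have h1 : Measurable fun x : EuclideanSpace ℝ (Fin N) => ‖x‖⁻¹ • x := by fun_prop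
    have h2 : Continuous fun z : (EuclideanSpace ℝ (Fin N) →L[ℝ] ℝ) × EuclideanSpace ℝ (Fin N) => z.1 z.2 := by
      fun_prop
    have h3 : Measurable fun x : EuclideanSpace ℝ (Fin N) => (fderiv ℝ u x, ‖x‖⁻¹ • x) :=
      hDc.measurable.prodMk h1
    exact h2.measurable.comp h3
  have iq : Integrable q := by
    refine bdd_integrable N q (by fun_prop) (L ^ 2) (fun x => ?_) (fun x hx => by simp [hq, hzu x hx])
    simp only [hq]
    rw [abs_of_nonneg (by positivity)]
    rcases eq_or_ne x 0 with rfl | hx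
    · simp; positivity
    · have : 0 < ‖x‖ := norm_pos_iff.2 hx
      rw [div_le_iff₀ (by positivity), ← mul_pow, ← sq_abs]
      gcongr
      exact hLip x
  have ip : Integrable fun x => p x ^ 2 := by
    refine bdd_integrable N _ (hpm.pow_const 2) (L ^ 2) (fun x => ?_) (fun x hx => by simp [hp, hzD x hx])
    rw [abs_of_nonneg (sq_nonneg _), ← sq_abs]
    gcongr
    exact hpL x
  have iD : Integrable fun x => ‖fderiv ℝ u x‖ ^ 2 := by
    refine bdd_integrable N _ (by fun_prop) (L ^ 2) (fun x => ?_) (fun x hx => by simp [hzD x hx])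
    rw [abs_of_nonneg (sq_nonneg _)]
    gcongr
    exact hL x
  have nω : ∀ (ω : sphere (0 : EuclideanSpace ℝ (Fin N)) 1) (r : ℝ), 0 < r → ‖r • (ω : EuclideanSpace ℝ (Fin N))‖ = r := fun ω r hr => by
    rw [norm_smul]; simp [abs_of_pos hr]
  have dω : ∀ (ω : sphere (0 : EuclideanSpace ℝ (Fin N)) 1) (r : ℝ), 0 < r →
      ‖r • (ω : EuclideanSpace ℝ (Fin N))‖⁻¹ • (r • (ω : EuclideanSpace ℝ (Fin N))) = ω := fun ω r hr => by
    rw [nω ω r hr, smul_smul, inv_mul_cancel₀ hr.ne', one_smul]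
  -- spherical part
  have stepA : ((N : ℝ) - 1) * ∫ x, q x ≤ ∫ x, (‖fderiv ℝ u x‖ ^ 2 - p x ^ 2) := by
    rw [← integral_const_mul]
    refine polar_mono_r N _ _ (iq.const_mul _) (iD.sub ip) fun r hr => ?_
    have hsm : ContDiff ℝ 1 fun y : EuclideanSpace ℝ (Fin N) => r • y := contDiff_id.const_smul r
    have hS := sphere_poincare N hN (fun y => u (r • y)) (hu1.comp hsm) (havg r hr.le)
    have hfd : ∀ y, fderiv ℝ (fun y => u (r • y)) y = r • fderiv ℝ u (r • y) := fun y => by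
      rw [fderiv_comp_smul]
    have a1 : ∀ ω : sphere (0 : EuclideanSpace ℝ (Fin N)) 1,
        ((N : ℝ) - 1) * q (r • (ω : EuclideanSpace ℝ (Fin N))) =
        (r ^ 2)⁻¹ * (((N : ℝ) - 1) * u (r • (ω : EuclideanSpace ℝ (Fin N))) ^ 2) := fun ω => by
      simp only [hq]; rw [nω ω r hr]; ring
    have a2 : ∀ ω : sphere (0 : EuclideanSpace ℝ (Fin N)) 1,
        ‖fderiv ℝ u (r • (ω : EuclideanSpace ℝ (Fin N)))‖ ^ 2 - p (r • (ω : EuclideanSpace ℝ (Fin N))) ^ 2 =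
        (r ^ 2)⁻¹ * (‖fderiv ℝ (fun y => u (r • y)) ω‖ ^ 2 - (fderiv ℝ (fun y => u (r • y)) ω ω) ^ 2) := fun ω => by
      simp only [hp]
      rw [dω ω r hr, hfd, norm_smul, mul_pow, ContinuousLinearMap.smul_apply, smul_eq_mul, mul_pow,
        Real.norm_eq_abs, sq_abs]
      have := hr.ne'
      field_simp
    simp_rw [a1, a2]
    rw [integral_const_mul, integral_const_mul, integral_const_mul]
    exact mul_le_mul_of_nonneg_left hS (by positivity)
  -- radial part
  have stepB : (((N : ℝ) - 2) / 2) ^ 2 * ∫ x, q x ≤ ∫ x, p x ^ 2 := by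
    rcases eq_or_lt_of_le hN with h2 | h3
    · have hz : (((N : ℝ) - 2) / 2) ^ 2 = 0 := by
        have : (N : ℝ) = 2 := by exact_mod_cast h2.symm
        rw [this]; norm_num
      rw [hz, zero_mul]
      exact integral_nonneg fun x => sq_nonneg _
    · obtain ⟨m, rfl⟩ : ∃ m, N = m + 3 := ⟨N - 3, by omega⟩
      rw [← integral_const_mul]
      refine polar_mono_w _ _ _ (iq.const_mul _) ip fun ω => ?_
      have hout : ∀ t : ℝ, 1 ≤ t → t • (ω : EuclideanSpace ℝ (Fin (m + 3))) ∉ ball (0 : EuclideanSpace ℝ (Fin (m + 3))) 1 := fun t ht => by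
        rw [mem_ball_zero_iff, nω ω t (by linarith)]
        exact not_lt.2 ht
      have hR := radial_hardy m (fun t => u (t • (ω : EuclideanSpace ℝ (Fin (m + 3)))))
        (fun t => fderiv ℝ u (t • (ω : EuclideanSpace ℝ (Fin (m + 3)))) ω)
        (fun t => by
          have h1 : HasDerivAt (fun t : ℝ => t • (ω : EuclideanSpace ℝ (Fin (m + 3)))) (ω : EuclideanSpace ℝ (Fin (m + 3))) t := by
            simpa using (hasDerivAt_id t).smul_const (ω : EuclideanSpace ℝ (Fin (m + 3)))
          exact (hdiff _).hasFDerivAt.comp_hasDerivAt t h1)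
        (by fun_prop) (fun t ht => hzu _ (hout t ht)) (fun t ht => by rw [hzD _ (hout t ht)]; rfl)
      have c1 : ∀ r ∈ Set.Ioi (0:ℝ), r ^ (m + 3 - 1) * ((((m + 3 : ℕ) : ℝ) - 2) / 2) ^ 2 * q (r • (ω : EuclideanSpace ℝ (Fin (m + 3)))) =
          r ^ (m + 2) * ((((m:ℝ) + 1) / 2) ^ 2 * (u (r • (ω : EuclideanSpace ℝ (Fin (m + 3)))) ^ 2 / r ^ 2)) := fun r hr => by
        simp only [hq]
        rw [nω ω r hr]
        push_cast
        ring
      have c2 : ∀ r ∈ Set.Ioi (0:ℝ), r ^ (m + 3 - 1) * p (r • (ω : EuclideanSpace ℝ (Fin (m + 3)))) ^ 2 =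
          r ^ (m + 2) * (fderiv ℝ u (r • (ω : EuclideanSpace ℝ (Fin (m + 3)))) ω) ^ 2 := fun r hr => by
        simp only [hp]
        rw [dω ω r hr]
        rfl
      rw [setIntegral_congr_fun measurableSet_Ioi c2]
      simp_rw [← mul_assoc]
      rw [setIntegral_congr_fun measurableSet_Ioi c1]
      exact hR
  have e1 : ∫ x in ball (0 : EuclideanSpace ℝ (Fin N)) 1, q x = ∫ x, q x :=
    setIntegral_eq_integral_of_forall_compl_eq_zero fun x hx => by simp [hq, hzu x hx]
  have e2 : ∫ x in ball (0 : EuclideanSpace ℝ (Fin N)) 1, ‖fderiv ℝ u x‖ ^ 2 = ∫ x, ‖fderiv ℝ u x‖ ^ 2 :=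
    setIntegral_eq_integral_of_forall_compl_eq_zero fun x hx => by simp [hzD x hx]
  rw [integral_sub iD ip] at stepA
  change _ * ∫ x in ball (0 : EuclideanSpace ℝ (Fin N)) 1, q x ≤ _
  rw [e1, e2]
  nlinarith [stepA, stepB]

end
end

section
/- Let $B_1^2$ be the open unit ball in $\mathbb{R}^2$. For every $u \in C_0^\infty(B_1^2)$ satisfying $\int_0^{2\pi} u(r\theta)\,d\theta = 0$ for all $r \ge 0$, one has $\frac{5}{4} \int_{B_1^2} \frac{|u(x)|^2}{|x|^2 (\log\frac{e}{|x|})^2}\,dx \le \int_{B_1^2} |\nabla u(x)|^2\,dx$. -/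
open MeasureTheory Metric
open scoped ENNReal

noncomputable section

/-- The plane `ℝ²`. -/
abbrev E2 := EuclideanSpace ℝ (Fin 2)

/-- The point `r (cos θ, sin θ)` of `ℝ²`. -/
def polarPt (r θ : ℝ) : E2 :=
  (EuclideanSpace.equiv (Fin 2) ℝ).symm ![r * Real.cos θ, r * Real.sin θ]

/-- Wirtinger inequality. -/
lemma aux_wirtinger (g g' : ℝ → ℝ) (hg : ∀ x, HasDerivAt g (g' x) x) (hg' : Continuous g')
    (hper : g Real.pi = g (-Real.pi)) (hmean : ∫ x in (-Real.pi)..Real.pi, g x = 0) :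
    ∫ x in (-Real.pi)..Real.pi, (g x) ^ 2 ≤ ∫ x in (-Real.pi)..Real.pi, (g' x) ^ 2 := by
  have hpi := Real.pi_pos
  have hab : -Real.pi < Real.pi := by linarith
  have hgc : Continuous g := continuous_iff_continuousAt.2 fun x => (hg x).continuousAt
  have hL : ∀ f : ℝ → ℝ, Continuous f →
      MemLp (fun x => (f x : ℂ)) 2 (volume.restrict (Set.Ioc (-Real.pi) Real.pi)) := by
    intro f hf
    have hf2 : Continuous (fun x => (f x : ℂ)) := Complex.continuous_ofReal.comp hf
    obtain ⟨C, hC⟩ := (isCompact_Icc (a := -Real.pi) (b := Real.pi)).exists_bound_of_continuousOn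
      hf2.continuousOn
    refine MemLp.of_bound hf2.aestronglyMeasurable C ?_
    refine (ae_restrict_iff' measurableSet_Ioc).2 (Filter.Eventually.of_forall fun x hx => ?_)
    exact hC x (Set.Ioc_subset_Icc_self hx)
  have h1 := hasSum_sq_fourierCoeffOn hab (hL g hgc)
  have h2 := hasSum_sq_fourierCoeffOn hab (hL g' hg')
  have key : ∀ i : ℤ, ‖fourierCoeffOn hab (fun x => (g x : ℂ)) i‖ ^ 2 ≤
      ‖fourierCoeffOn hab (fun x => (g' x : ℂ)) i‖ ^ 2 := by
    intro i
    by_cases hi : i = 0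
    · subst hi
      have : fourierCoeffOn hab (fun x => (g x : ℂ)) 0 = 0 := by
        rw [fourierCoeffOn_eq_integral]
        simp [intervalIntegral.integral_ofReal, hmean]
      rw [this]; simp
    · have h := fourierCoeffOn_of_hasDerivAt hab hi (f := fun x => (g x : ℂ))
        (f' := fun x => (g' x : ℂ)) (fun x _ => (hg x).ofReal_comp)
        ((Complex.continuous_ofReal.comp hg').intervalIntegrable _ _)
      rw [h, hper]
      gcongr
      rw [sub_self, mul_zero, zero_sub, norm_mul, norm_neg, norm_mul, ← mul_assoc]
      have h3 : ‖1 / (-2 * (Real.pi : ℂ) * Complex.I * (i : ℂ))‖ *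
          ‖((Real.pi : ℝ) : ℂ) - ((-Real.pi : ℝ) : ℂ)‖ ≤ 1 := by
        have e : ((Real.pi : ℝ) : ℂ) - ((-Real.pi : ℝ) : ℂ) = ((2 * Real.pi : ℝ) : ℂ) := by
          push_cast; ring
        rw [e, Complex.norm_real, norm_div, norm_mul, norm_mul, norm_mul]
        simp only [norm_one, norm_neg, Complex.norm_I, Complex.norm_real, Complex.norm_intCast,
          Real.norm_eq_abs, mul_one, Complex.norm_ofNat]
        rw [abs_of_pos hpi, abs_of_pos (by linarith : 0 < 2 * Real.pi)]
        have hi1 : (1 : ℝ) ≤ |(i : ℝ)| := by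
          rw [← Int.cast_abs]; exact_mod_cast Int.one_le_abs hi
        rw [div_mul_eq_mul_div, div_le_one (by positivity)]
        nlinarith
      calc _ ≤ 1 * ‖fourierCoeffOn hab (fun x => (g' x : ℂ)) i‖ := by gcongr
        _ = _ := one_mul _
  have h3 := hasSum_le key h1 h2
  simp only [Complex.norm_real, Real.norm_eq_abs, sq_abs, smul_eq_mul] at h3
  exact le_of_mul_le_mul_left h3 (by
    have : 0 < Real.pi - -Real.pi := by linarith
    positivity)

/-- One-dimensional critical Hardy inequality on `[a, 1]`. -/
lemma aux_hardy_interval (f f' : ℝ → ℝ) (hf : ∀ x, HasDerivAt f (f' x) x) (hf' : Continuous f')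
    (h1 : f 1 = 0) (a : ℝ) (ha : 0 < a) (ha1 : a ≤ 1) :
    ∫ r in a..1, (1 / 4 : ℝ) * ((f r) ^ 2 / (r * Real.log (Real.exp 1 / r) ^ 2)) ≤
      ∫ r in a..1, r * (f' r) ^ 2 := by
  have hfc : Continuous f := continuous_iff_continuousAt.2 fun x => (hf x).continuousAt
  have hpos : ∀ r ∈ Set.uIcc a 1, 0 < r := by
    intro r hr; rw [Set.uIcc_of_le ha1] at hr; exact lt_of_lt_of_le ha hr.1
  have hlog : ∀ r, 0 < r → Real.log (Real.exp 1 / r) = 1 - Real.log r := by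
    intro r hr; rw [Real.log_div (Real.exp_pos 1).ne' hr.ne', Real.log_exp]
  have hLp : ∀ r ∈ Set.uIcc a 1, 1 ≤ 1 - Real.log r := by
    intro r hr
    have := Real.log_nonpos (hpos r hr).le (by rw [Set.uIcc_of_le ha1] at hr; exact hr.2)
    linarith
  have hlc : ContinuousOn Real.log (Set.uIcc a 1) :=
    Real.continuousOn_log.mono fun r hr => by simpa using (hpos r hr).ne'
  have hLc : ContinuousOn (fun r => 1 - Real.log r) (Set.uIcc a 1) := continuousOn_const.sub hlc
  have hG : ContinuousOn (fun r => (1 / 4 : ℝ) * ((f r) ^ 2 / (r * (1 - Real.log r) ^ 2)))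
      (Set.uIcc a 1) := by
    refine continuousOn_const.mul (ContinuousOn.div (hfc.pow 2).continuousOn
      (continuousOn_id.mul (hLc.pow 2)) fun r hr => ?_)
    have := hpos r hr; have := hLp r hr
    have : 0 < 1 - Real.log r := by linarith
    exact (mul_pos ‹0 < r› (by positivity)).ne'
  have hD : ContinuousOn (fun r => 2 * f r * f' r / (1 - Real.log r) +
      (f r) ^ 2 / (r * (1 - Real.log r) ^ 2)) (Set.uIcc a 1) := by
    refine ContinuousOn.add (ContinuousOn.div (by fun_prop) hLc fun r hr => ?_)
      (ContinuousOn.div (hfc.pow 2).continuousOn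
      (continuousOn_id.mul (hLc.pow 2)) fun r hr => ?_)
    · have := hLp r hr; linarith
    · have := hpos r hr; have := hLp r hr
      have : 0 < 1 - Real.log r := by linarith
      exact (mul_pos ‹0 < r› (by positivity)).ne'
  have hR : ContinuousOn (fun r => r * (f' r) ^ 2) (Set.uIcc a 1) := by fun_prop
  have ftc : ∫ r in a..1, (2 * f r * f' r / (1 - Real.log r) +
      (f r) ^ 2 / (r * (1 - Real.log r) ^ 2)) =
      (f 1) ^ 2 / (1 - Real.log 1) - (f a) ^ 2 / (1 - Real.log a) := by
    refine intervalIntegral.integral_eq_sub_of_hasDerivAt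
      (f := fun r => (f r) ^ 2 / (1 - Real.log r)) (fun r hr => ?_) hD.intervalIntegrable
    have h0 := hpos r hr
    have hL0 : 1 - Real.log r ≠ 0 := by have := hLp r hr; linarith
    have := ((hf r).pow 2).div ((Real.hasDerivAt_log h0.ne').const_sub 1) hL0
    refine HasDerivAt.congr_deriv this ?_
    simp only [Pi.pow_apply]
    field_simp
    ring
  have hle : ∫ r in a..1, ((1 / 4 : ℝ) * ((f r) ^ 2 / (r * (1 - Real.log r) ^ 2)) -
      (1 / 2) * (2 * f r * f' r / (1 - Real.log r) +
      (f r) ^ 2 / (r * (1 - Real.log r) ^ 2))) ≤ ∫ r in a..1, r * (f' r) ^ 2 := by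
    refine intervalIntegral.integral_mono_on ha1
      (hG.sub (continuousOn_const.mul hD)).intervalIntegrable hR.intervalIntegrable fun r hr => ?_
    rw [← Set.uIcc_of_le ha1] at hr
    have h0 := hpos r hr
    have hL0 : 0 < 1 - Real.log r := by have := hLp r hr; linarith
    set l := 1 - Real.log r
    have : r * (f' r) ^ 2 - ((1 / 4 : ℝ) * ((f r) ^ 2 / (r * l ^ 2)) -
      (1 / 2) * (2 * f r * f' r / l + (f r) ^ 2 / (r * l ^ 2))) =
      r * (f' r + f r / (2 * r * l)) ^ 2 := by
      field_simp
      ring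
    have h2 : 0 ≤ r * (f' r + f r / (2 * r * l)) ^ 2 := by positivity
    linarith
  rw [intervalIntegral.integral_sub hG.intervalIntegrable
    (hD.intervalIntegrable.const_mul (1 / 2 : ℝ)), intervalIntegral.integral_const_mul (1 / 2 : ℝ),
    ftc, h1] at hle
  have hb : 0 ≤ (f a) ^ 2 / (1 - Real.log a) := by
    have := hLp a Set.left_mem_uIcc
    positivity
  have hcongr : ∫ r in a..1, (1 / 4 : ℝ) * ((f r) ^ 2 / (r * Real.log (Real.exp 1 / r) ^ 2)) =
      ∫ r in a..1, (1 / 4 : ℝ) * ((f r) ^ 2 / (r * (1 - Real.log r) ^ 2)) := by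
    refine intervalIntegral.integral_congr fun r hr => ?_
    simp only [hlog r (hpos r hr)]
  rw [hcongr]
  have : (0 : ℝ) ^ 2 / (1 - Real.log 1) = 0 := by simp
  linarith

/-- One-dimensional critical Hardy inequality, `lintegral` form. -/
lemma aux_hardy_lintegral (f f' : ℝ → ℝ) (hf : ∀ x, HasDerivAt f (f' x) x) (hf' : Continuous f')
    (h1 : ∀ r, 1 ≤ r → f r = 0) :
    ∫⁻ r in Set.Ioi 0,
        ENNReal.ofReal ((1 / 4 : ℝ) * ((f r) ^ 2 / (r * Real.log (Real.exp 1 / r) ^ 2))) ≤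
      ∫⁻ r in Set.Ioi 0, ENNReal.ofReal (r * (f' r) ^ 2) := by
  have hfc : Continuous f := continuous_iff_continuousAt.2 fun x => (hf x).continuousAt
  have hU : Set.Ioi (0 : ℝ) = (⋃ n : ℕ, Set.Ioc (1 / ((n : ℝ) + 1)) 1) ∪ Set.Ioi 1 := by
    ext x
    simp only [Set.mem_Ioi, Set.mem_union, Set.mem_iUnion, Set.mem_Ioc]
    constructor
    · intro hx
      by_cases h : 1 < x
      · exact Or.inr h
      · obtain ⟨n, hn⟩ := exists_nat_one_div_lt hx
        exact Or.inl ⟨n, hn, not_lt.1 h⟩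
    · rintro (⟨n, hn, -⟩ | h)
      · exact lt_trans (by positivity) hn
      · linarith
  have hz : ∫⁻ r in Set.Ioi 1,
      ENNReal.ofReal ((1 / 4 : ℝ) * ((f r) ^ 2 / (r * Real.log (Real.exp 1 / r) ^ 2))) = 0 := by
    rw [setLIntegral_congr_fun (g := fun _ => 0) measurableSet_Ioi]
    · simp
    · intro r hr
      simp [h1 r (le_of_lt hr)]
  have hdir : Directed (· ⊆ ·) (fun n : ℕ => Set.Ioc (1 / ((n : ℝ) + 1)) (1 : ℝ)) := by
    refine Monotone.directed_le (fun m n hmn => ?_)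
    refine Set.Ioc_subset_Ioc_left ?_
    gcongr
  calc _ ≤ (∫⁻ r in ⋃ n : ℕ, Set.Ioc (1 / ((n : ℝ) + 1)) (1 : ℝ),
        ENNReal.ofReal ((1 / 4 : ℝ) * ((f r) ^ 2 / (r * Real.log (Real.exp 1 / r) ^ 2)))) +
        ∫⁻ r in Set.Ioi 1,
        ENNReal.ofReal ((1 / 4 : ℝ) * ((f r) ^ 2 / (r * Real.log (Real.exp 1 / r) ^ 2))) := by
        conv_lhs => rw [hU]
        exact lintegral_union_le _ _ _
    _ ≤ _ := by
        rw [hz, add_zero, setLIntegral_iUnion_of_directed _ hdir]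
        refine iSup_le fun n => ?_
        set a : ℝ := 1 / ((n : ℝ) + 1) with hadef
        have ha : 0 < a := by positivity
        have ha1 : a ≤ 1 := by
          rw [hadef, div_le_one (by positivity)]
          have : (0 : ℝ) ≤ n := by positivity
          linarith
        have H := aux_hardy_interval f f' hf hf' (h1 1 le_rfl) a ha ha1
        rw [intervalIntegral.integral_of_le ha1, intervalIntegral.integral_of_le ha1] at H
        have hI : IntegrableOn (fun r => r * (f' r) ^ 2) (Set.Ioc a 1) :=
          ((by fun_prop : Continuous fun r => r * (f' r) ^ 2).integrableOn_Icc).mono_set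
            Set.Ioc_subset_Icc_self
        have hI2 : IntegrableOn (fun r => (1 / 4 : ℝ) *
            ((f r) ^ 2 / (r * Real.log (Real.exp 1 / r) ^ 2))) (Set.Ioc a 1) := by
          refine (ContinuousOn.integrableOn_Icc ?_).mono_set Set.Ioc_subset_Icc_self
          have hp : ∀ r ∈ Set.Icc a 1, 0 < r := fun r hr => lt_of_lt_of_le ha hr.1
          have hd : ContinuousOn (fun r => Real.exp 1 / r) (Set.Icc a 1) :=
            continuousOn_const.div continuousOn_id fun r hr => (hp r hr).ne'
          refine continuousOn_const.mul (ContinuousOn.div (hfc.pow 2).continuousOn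
            (continuousOn_id.mul ((hd.log fun r hr => ?_).pow 2)) fun r hr => ?_)
          · have := hp r hr; positivity
          · have h0 := hp r hr
            have : Real.log (Real.exp 1 / r) = 1 - Real.log r := by
              rw [Real.log_div (Real.exp_pos 1).ne' h0.ne', Real.log_exp]
            have h2 := Real.log_nonpos h0.le hr.2
            have h3 : 0 < Real.log (Real.exp 1 / r) := by linarith
            exact (mul_pos h0 (by positivity)).ne'
        have nn : ∀ r ∈ Set.Ioc a 1, 0 < r := fun r hr => lt_trans ha hr.1
        calc _ = ENNReal.ofReal (∫ r in Set.Ioc a 1, (1 / 4 : ℝ) *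
            ((f r) ^ 2 / (r * Real.log (Real.exp 1 / r) ^ 2))) := by
              rw [ofReal_integral_eq_lintegral_ofReal hI2]
              refine (ae_restrict_iff' measurableSet_Ioc).2 (Filter.Eventually.of_forall ?_)
              intro r hr
              have := nn r hr
              simp only [Pi.zero_apply]
              positivity
          _ ≤ ENNReal.ofReal (∫ r in Set.Ioc a 1, r * (f' r) ^ 2) := ENNReal.ofReal_le_ofReal H
          _ = ∫⁻ r in Set.Ioc a 1, ENNReal.ofReal (r * (f' r) ^ 2) := by
              rw [ofReal_integral_eq_lintegral_ofReal hI]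
              refine (ae_restrict_iff' measurableSet_Ioc).2 (Filter.Eventually.of_forall ?_)
              intro r hr
              have := nn r hr
              simp only [Pi.zero_apply]
              positivity
          _ ≤ _ := lintegral_mono_set fun r hr => nn r hr

lemma aux_polarPt_eq (r θ : ℝ) : polarPt r θ = r • polarPt 1 θ := by
  ext i
  fin_cases i <;> simp [polarPt]

lemma aux_polarPt_norm (r θ : ℝ) : ‖polarPt r θ‖ = |r| := by
  rw [EuclideanSpace.norm_eq, ← Real.sqrt_sq_eq_abs]
  congr 1
  simp [polarPt, Fin.sum_univ_two]
  nlinarith [Real.sin_sq_add_cos_sq θ]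

/-- The angular unit vector. -/
def auxTan (θ : ℝ) : E2 :=
  (EuclideanSpace.equiv (Fin 2) ℝ).symm ![-Real.sin θ, Real.cos θ]

lemma aux_hasDerivAt_r (r θ : ℝ) : HasDerivAt (fun s => polarPt s θ) (polarPt 1 θ) r := by
  have : (fun s => polarPt s θ) = fun s => s • polarPt 1 θ := by
    ext1 s; exact aux_polarPt_eq s θ
  rw [this]
  simpa using (hasDerivAt_id r).smul_const (polarPt 1 θ)

lemma aux_hasDerivAt_th (r θ : ℝ) : HasDerivAt (fun t => polarPt r t) (r • auxTan θ) θ := by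
  have h : HasDerivAt (fun t => ![r * Real.cos t, r * Real.sin t])
      ![r * -Real.sin θ, r * Real.cos θ] θ := by
    rw [hasDerivAt_pi]
    intro i
    fin_cases i
    · simpa using (Real.hasDerivAt_cos θ).const_mul r
    · simpa using (Real.hasDerivAt_sin θ).const_mul r
  have h2 := (EuclideanSpace.equiv (Fin 2) ℝ).symm.toContinuousLinearMap.hasFDerivAt.comp_hasDerivAt
    θ h
  have e : r • auxTan θ = (EuclideanSpace.equiv (Fin 2) ℝ).symm
      ![r * -Real.sin θ, r * Real.cos θ] := by
    ext i
    fin_cases i <;> simp [auxTan]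
  rw [e]
  exact h2

lemma aux_grad (L : E2 →L[ℝ] ℝ) (θ : ℝ) :
    (L (polarPt 1 θ)) ^ 2 + (L (auxTan θ)) ^ 2 ≤ ‖L‖ ^ 2 := by
  set a := L (polarPt 1 θ) with ha
  set b := L (auxTan θ) with hb
  have h1 : L (a • polarPt 1 θ + b • auxTan θ) = a ^ 2 + b ^ 2 := by
    rw [map_add, map_smul, map_smul, ← ha, ← hb]; simp; ring
  have h2 : ‖a • polarPt 1 θ + b • auxTan θ‖ ^ 2 = a ^ 2 + b ^ 2 := by
    rw [EuclideanSpace.norm_sq_eq]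
    simp [polarPt, auxTan, Fin.sum_univ_two]
    linear_combination (a ^ 2 + b ^ 2) * Real.sin_sq_add_cos_sq θ
  have h3 := L.le_opNorm (a • polarPt 1 θ + b • auxTan θ)
  rw [h1, Real.norm_of_nonneg (by positivity)] at h3
  rw [← h2] at h3 ⊢
  have h4 := norm_nonneg (a • polarPt 1 θ + b • auxTan θ)
  have h5 := norm_nonneg L
  rcases h4.eq_or_lt with h | h
  · rw [← h]; simp
  · have : ‖a • polarPt 1 θ + b • auxTan θ‖ ≤ ‖L‖ := by
      refine le_of_mul_le_mul_right ?_ h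
      linarith [sq ‖a • polarPt 1 θ + b • auxTan θ‖]
    gcongr

lemma aux_polar (F : E2 → ℝ≥0∞) :
    ∫⁻ x, F x = ∫⁻ p in Set.Ioi (0 : ℝ) ×ˢ Set.Ioo (-Real.pi) Real.pi,
      ENNReal.ofReal p.1 * F (polarPt p.1 p.2) := by
  have e := ((EuclideanSpace.volume_preserving_symm_measurableEquiv_toLp (Fin 2)).trans
    (volume_preserving_finTwoArrow ℝ)).symm
  rw [← e.lintegral_comp_emb (MeasurableEquiv.measurableEmbedding _),
    ← lintegral_comp_polarCoord_symm]
  rfl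

lemma aux_cont : Continuous (fun p : ℝ × ℝ => polarPt p.1 p.2) := by
  unfold polarPt
  refine (EuclideanSpace.equiv (Fin 2) ℝ).symm.continuous.comp ?_
  refine continuous_pi fun i => ?_
  fin_cases i <;> simp <;> fun_prop

lemma aux_cont_tan : Continuous auxTan := by
  unfold auxTan
  refine (EuclideanSpace.equiv (Fin 2) ℝ).symm.continuous.comp ?_
  refine continuous_pi fun i => ?_
  fin_cases i <;> simp <;> fun_prop


lemma aux_wirtinger_lintegral (g g' : ℝ → ℝ) (hg : ∀ x, HasDerivAt g (g' x) x)
    (hg' : Continuous g') (hper : g Real.pi = g (-Real.pi))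
    (hmean : ∫ x in (-Real.pi)..Real.pi, g x = 0) (c : ℝ) (hc : 0 ≤ c) :
    ∫⁻ x in Set.Ioo (-Real.pi) Real.pi, ENNReal.ofReal (c * (g x) ^ 2) ≤
      ∫⁻ x in Set.Ioo (-Real.pi) Real.pi, ENNReal.ofReal (c * (g' x) ^ 2) := by
  have hpi := Real.pi_pos
  have hgc : Continuous g := continuous_iff_continuousAt.2 fun x => (hg x).continuousAt
  have H : ∀ f : ℝ → ℝ, Continuous f →
      ∫⁻ x in Set.Ioo (-Real.pi) Real.pi, ENNReal.ofReal (c * (f x) ^ 2) =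
      ENNReal.ofReal (c * ∫ x in (-Real.pi)..Real.pi, (f x) ^ 2) := by
    intro f hf
    rw [← intervalIntegral.integral_const_mul, intervalIntegral.integral_of_le (by linarith),
      integral_Ioc_eq_integral_Ioo, ofReal_integral_eq_lintegral_ofReal]
    · exact ((by fun_prop : Continuous fun x => c * (f x) ^ 2).integrableOn_Icc).mono_set
        Set.Ioo_subset_Icc_self
    · refine Filter.Eventually.of_forall fun x => ?_
      simp only [Pi.zero_apply]
      positivity
  rw [H g hgc, H g' hg']
  have := aux_wirtinger g g' hg hg' hper hmean
  gcongr

lemma aux_weight (r s : ℝ) (hr : 0 < r) (h : 1 ≤ r → s = 0) :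
    s ^ 2 / (r * Real.log (Real.exp 1 / r) ^ 2) ≤ r⁻¹ * s ^ 2 := by
  by_cases h1 : 1 ≤ r
  · simp [h h1]
  · push Not at h1
    have e : Real.log (Real.exp 1 / r) = 1 - Real.log r := by
      rw [Real.log_div (Real.exp_pos 1).ne' hr.ne', Real.log_exp]
    have h2 := Real.log_nonpos hr.le h1.le
    have h3 : 1 ≤ Real.log (Real.exp 1 / r) ^ 2 := by rw [e]; nlinarith
    rw [div_eq_mul_inv, mul_comm]
    gcongr
    nlinarith

lemma aux_lintegral
    (u : E2 → ℝ) (hu : ContDiff ℝ (⊤ : ℕ∞) u)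
    (hz : ∀ x : E2, 1 ≤ ‖x‖ → u x = 0)
    (havg : ∀ r : ℝ, 0 ≤ r → (∫ θ in (0:ℝ)..(2 * Real.pi), u (polarPt r θ)) = 0) :
    ∫⁻ x, ENNReal.ofReal ((5 / 4 : ℝ) *
        ((u x) ^ 2 / (‖x‖ ^ 2 * Real.log (Real.exp 1 / ‖x‖) ^ 2))) ≤
      ∫⁻ x, ENNReal.ofReal (‖fderiv ℝ u x‖ ^ 2) := by
  have hdu : Differentiable ℝ u := hu.differentiable (by simp)
  have hcu : Continuous u := hdu.continuous
  have hcd : Continuous (fderiv ℝ u) := hu.continuous_fderiv (by simp)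
  have hvz : ∀ r θ, 1 ≤ r → u (polarPt r θ) = 0 := fun r θ hr =>
    hz _ (by rw [aux_polarPt_norm]; exact hr.trans (le_abs_self r))
  have hcv : Continuous (fun p : ℝ × ℝ => u (polarPt p.1 p.2)) := hcu.comp aux_cont
  have hcD : Continuous (fun p : ℝ × ℝ => fderiv ℝ u (polarPt p.1 p.2)) := hcd.comp aux_cont
  have hcr : Continuous (fun p : ℝ × ℝ => fderiv ℝ u (polarPt p.1 p.2) (polarPt 1 p.2)) :=
    hcD.clm_apply (aux_cont.comp (by fun_prop : Continuous fun p : ℝ × ℝ => ((1 : ℝ), p.2)))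
  have hct : Continuous (fun p : ℝ × ℝ => fderiv ℝ u (polarPt p.1 p.2) (auxTan p.2)) :=
    hcD.clm_apply (aux_cont_tan.comp continuous_snd)
  set T : Set (ℝ × ℝ) := Set.Ioi (0 : ℝ) ×ˢ Set.Ioo (-Real.pi) Real.pi with hT
  have hTm : MeasurableSet T := measurableSet_Ioi.prod measurableSet_Ioo
  have hres : (volume : Measure (ℝ × ℝ)).restrict T =
      (volume.restrict (Set.Ioi (0 : ℝ))).prod (volume.restrict (Set.Ioo (-Real.pi) Real.pi)) := by
    rw [hT, Measure.prod_restrict]; rfl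
  -- radial part
  have hA : ∫⁻ p in T, ENNReal.ofReal ((1 / 4 : ℝ) *
        ((u (polarPt p.1 p.2)) ^ 2 / (p.1 * Real.log (Real.exp 1 / p.1) ^ 2))) ≤
      ∫⁻ p in T, ENNReal.ofReal (p.1 * (fderiv ℝ u (polarPt p.1 p.2) (polarPt 1 p.2)) ^ 2) := by
    have m1 : Measurable (fun p : ℝ × ℝ => ENNReal.ofReal ((1 / 4 : ℝ) *
        ((u (polarPt p.1 p.2)) ^ 2 / (p.1 * Real.log (Real.exp 1 / p.1) ^ 2)))) := by
      have hq := aux_cont.measurable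
      have hq2 := hcu.measurable
      fun_prop
    have m2 : Measurable (fun p : ℝ × ℝ => ENNReal.ofReal
        (p.1 * (fderiv ℝ u (polarPt p.1 p.2) (polarPt 1 p.2)) ^ 2)) := by
      have := hcr.measurable
      fun_prop
    rw [hres, lintegral_prod_symm _ m1.aemeasurable, lintegral_prod_symm _ m2.aemeasurable]
    refine lintegral_mono fun θ => ?_
    refine aux_hardy_lintegral (fun r => u (polarPt r θ))
      (fun r => fderiv ℝ u (polarPt r θ) (polarPt 1 θ)) (fun r => ?_) ?_ (fun r hr => hvz r θ hr)
    · exact (hdu _).hasFDerivAt.comp_hasDerivAt r (aux_hasDerivAt_r r θ)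
    · exact hcr.comp (by fun_prop : Continuous fun r : ℝ => (r, θ))
  -- angular part
  have hB : ∫⁻ p in T, ENNReal.ofReal (p.1⁻¹ * (u (polarPt p.1 p.2)) ^ 2) ≤
      ∫⁻ p in T, ENNReal.ofReal (p.1 * (fderiv ℝ u (polarPt p.1 p.2) (auxTan p.2)) ^ 2) := by
    have m1 : Measurable (fun p : ℝ × ℝ => ENNReal.ofReal
        (p.1⁻¹ * (u (polarPt p.1 p.2)) ^ 2)) := by
      have hq := aux_cont.measurable
      have hq2 := hcu.measurable
      fun_prop
    have m2 : Measurable (fun p : ℝ × ℝ => ENNReal.ofReal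
        (p.1 * (fderiv ℝ u (polarPt p.1 p.2) (auxTan p.2)) ^ 2)) := by
      have := hct.measurable
      fun_prop
    rw [hres, lintegral_prod _ m1.aemeasurable, lintegral_prod _ m2.aemeasurable]
    refine setLIntegral_mono' measurableSet_Ioi fun r hr => ?_
    have hr0 : 0 < r := hr
    have hP : Function.Periodic (fun θ => u (polarPt r θ)) (2 * Real.pi) := by
      intro θ
      simp [polarPt]
    have W := aux_wirtinger_lintegral (fun θ => u (polarPt r θ))
      (fun θ => fderiv ℝ u (polarPt r θ) (r • auxTan θ)) (fun θ => ?_) ?_ ?_ ?_ r⁻¹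
      (by positivity)
    · refine W.trans (le_of_eq ?_)
      refine lintegral_congr fun θ => ?_
      congr 1
      rw [map_smul, smul_eq_mul]
      field_simp
    · exact (hdu _).hasFDerivAt.comp_hasDerivAt θ (aux_hasDerivAt_th r θ)
    · have := (hct.comp (by fun_prop : Continuous fun θ : ℝ => (r, θ))).const_smul r
      simp only [map_smul]
      exact this
    · have := hP (-Real.pi)
      simp only at this
      rw [← this]
      congr 2
      ring
    · have := hP.intervalIntegral_add_eq (-Real.pi) 0
      rw [zero_add, havg r hr0.le] at this
      rw [← this]
      congr 1
      ring
  rw [aux_polar, aux_polar, ← hT]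
  have m3 : Measurable (fun p : ℝ × ℝ => ENNReal.ofReal ((1 / 4 : ℝ) *
      ((u (polarPt p.1 p.2)) ^ 2 / (p.1 * Real.log (Real.exp 1 / p.1) ^ 2)))) := by
    have hq := aux_cont.measurable
    have hq2 := hcu.measurable
    fun_prop
  have m4 : Measurable (fun p : ℝ × ℝ => ENNReal.ofReal
      (p.1 * (fderiv ℝ u (polarPt p.1 p.2) (polarPt 1 p.2)) ^ 2)) := by
    have := hcr.measurable
    fun_prop
  calc _ ≤ ∫⁻ p in T, (ENNReal.ofReal ((1 / 4 : ℝ) *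
        ((u (polarPt p.1 p.2)) ^ 2 / (p.1 * Real.log (Real.exp 1 / p.1) ^ 2))) +
        ENNReal.ofReal (p.1⁻¹ * (u (polarPt p.1 p.2)) ^ 2)) := by
        refine setLIntegral_mono' hTm fun p hp => ?_
        have hp0 : 0 < p.1 := hp.1
        rw [← ENNReal.ofReal_mul hp0.le, ← ENNReal.ofReal_add (by positivity) (by positivity)]
        refine ENNReal.ofReal_le_ofReal ?_
        have h := aux_weight p.1 (u (polarPt p.1 p.2)) hp0 (hvz _ _)
        rw [aux_polarPt_norm, abs_of_pos hp0]
        have e : p.1 * (5 / 4 * (u (polarPt p.1 p.2) ^ 2 /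
            (p.1 ^ 2 * Real.log (Real.exp 1 / p.1) ^ 2))) =
            5 / 4 * (u (polarPt p.1 p.2) ^ 2 / (p.1 * Real.log (Real.exp 1 / p.1) ^ 2)) := by
          rw [div_eq_mul_inv (u _ ^ 2), div_eq_mul_inv (u _ ^ 2), mul_inv, mul_inv]
          field_simp
        rw [e]
        linarith
    _ = _ := lintegral_add_left m3 _
    _ ≤ _ := add_le_add hA hB
    _ = _ := (lintegral_add_left m4 _).symm
    _ ≤ _ := by
        refine setLIntegral_mono' hTm fun p hp => ?_
        have hp0 : 0 < p.1 := hp.1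
        rw [← ENNReal.ofReal_mul hp0.le, ← ENNReal.ofReal_add (by positivity) (by positivity),
          ← mul_add]
        have := aux_grad (fderiv ℝ u (polarPt p.1 p.2)) p.2
        gcongr

/-- For every smooth `u` compactly supported in the unit
ball `B₁² ⊂ ℝ²` with `∫_0^{2π} u(rθ) dθ = 0` for all `r ≥ 0`, one has
`(5/4) ∫_{B₁²} |u|²/(|x|² (log(e/|x|))²) dx ≤ ∫_{B₁²} |∇u|² dx`. -/
theorem critical_hardy_sphere_avg_zero
    (u : E2 → ℝ) (hu : ContDiff ℝ (⊤ : ℕ∞) u) (hsupp : HasCompactSupport u)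
    (hball : tsupport u ⊆ ball (0 : E2) 1)
    (havg : ∀ r : ℝ, 0 ≤ r → (∫ θ in (0:ℝ)..(2 * Real.pi), u (polarPt r θ)) = 0) :
    (5 / 4 : ℝ) *
        (∫ x in ball (0 : E2) 1,
          (u x) ^ 2 / (‖x‖ ^ 2 * Real.log (Real.exp 1 / ‖x‖) ^ 2)) ≤
      ∫ x in ball (0 : E2) 1, ‖fderiv ℝ u x‖ ^ 2 := by
  have hout : ∀ x : E2, x ∉ ball (0 : E2) 1 → x ∉ tsupport u := fun x hx h => hx (hball h)
  have hz : ∀ x : E2, x ∉ ball (0 : E2) 1 → u x = 0 := fun x hx =>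
    image_eq_zero_of_notMem_tsupport (hout x hx)
  have hdz : ∀ x : E2, x ∉ ball (0 : E2) 1 → fderiv ℝ u x = 0 := fun x hx =>
    image_eq_zero_of_notMem_tsupport fun h => hout x hx (tsupport_fderiv_subset ℝ h)
  have hcu : Continuous u := hu.continuous
  have hcd : Continuous (fderiv ℝ u) := hu.continuous_fderiv (by simp)
  rw [setIntegral_eq_integral_of_forall_compl_eq_zero (fun x hx => by simp [hz x hx]),
    setIntegral_eq_integral_of_forall_compl_eq_zero (fun x hx => by simp [hdz x hx]),
    ← integral_const_mul]
  have hint : Integrable (fun x => ‖fderiv ℝ u x‖ ^ 2) := by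
    refine Continuous.integrable_of_hasCompactSupport (by fun_prop) ?_
    exact (hsupp.fderiv (𝕜 := ℝ)).comp_left (g := fun L => ‖L‖ ^ 2) (by simp)
  rw [integral_eq_lintegral_of_nonneg_ae, integral_eq_lintegral_of_nonneg_ae]
  · refine ENNReal.toReal_mono ?_ (aux_lintegral u hu (fun x hx => hz x (by simpa using hx)) havg)
    rw [← ofReal_integral_eq_lintegral_ofReal hint
      (Filter.Eventually.of_forall fun x => by simp only [Pi.zero_apply]; positivity)]
    exact ENNReal.ofReal_ne_top
  · exact Filter.Eventually.of_forall fun x => by simp only [Pi.zero_apply]; positivity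
  · exact hint.aestronglyMeasurable
  · exact Filter.Eventually.of_forall fun x => by simp only [Pi.zero_apply]; positivity
  · have := hcu.measurable
    exact Measurable.aestronglyMeasurable (by fun_prop)

end
end

section
/- Let $N \ge 2$. For every $u \in C_0^\infty(\mathbb{R}^N)$ satisfying $\int_{\mathbb{S}^{N-1}} u(r\omega)\,dS_\omega = 0$ for all $r \ge 0$, one has $\frac{N^2}{4}\int_{\mathbb{R}^N} \frac{|u(x)|^2}{|x|^2}\,dx \le \int_{\mathbb{R}^N} |\nabla u(x)|^2\,dx$. Moreover the constant $\frac{N^2}{4}$ is optimal: for every $\varepsilon > 0$ there exists a nonzero admissible $u$ (which may be taken of the form $u(x) = g_2(\omega)f_a(r)$ with $f_a(r) = r$ on $[0,1]$ and $f_a(r) = r^{-a}$ on $(1,\infty)$, $a > \frac{N-2}{2}$) whose Rayleigh quotient $\int |\nabla u|^2 / \int |u|^2|x|^{-2}$ is less than $\frac{N^2}{4}+\varepsilon$, and the best constant is not attained. -/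
open MeasureTheory Metric
open scoped ENNReal

noncomputable section

section HardyAux

open ProbabilityTheory Filter Topology

/-- one-dimensional Gaussian Poincaré, pinned at the origin -/
lemma gauss1_pinned (v : NNReal) (hv : v ≠ 0) (f : ℝ → ℝ) (hf : ContDiff ℝ 1 f) (C : ℝ)
    (hC : ∀ x, |f x| ≤ C) (hC' : ∀ x, |deriv f x| ≤ C) :
    ∫ x, (f x - f 0) ^ 2 ∂(gaussianReal 0 v) ≤ v * ∫ x, (deriv f x) ^ 2 ∂(gaussianReal 0 v) := by
  have hvpos : (0:ℝ) < v := by positivity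
  have hfd : Differentiable ℝ f := hf.differentiable (by norm_num)
  have hfc : Continuous f := hf.continuous
  have hdc : Continuous (deriv f) := hf.continuous_deriv (by norm_num)
  set q : ℝ → ℝ := dslope f 0 with hq
  have hqc : Continuous q := by
    rw [← continuousOn_univ, hq, continuousOn_dslope (by simp)]
    exact ⟨hfc.continuousOn, hfd 0⟩
  have hqx : ∀ x, f x - f 0 = x * q x := by
    intro x
    have := sub_smul_dslope f 0 x
    simp only [sub_zero, smul_eq_mul] at this
    rw [← this]
  have hqb : ∀ x, |q x| ≤ C := by
    intro x
    rcases eq_or_ne x 0 with rfl | hx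
    · simpa [hq, dslope_same] using hC' 0
    · have h1 : ‖f x - f 0‖ ≤ C * ‖x - 0‖ :=
        Convex.norm_image_sub_le_of_norm_deriv_le (s := Set.univ) (fun x _ => hfd x)
          (fun x _ => hC' x) convex_univ trivial trivial
      rw [hqx, sub_zero, norm_mul, mul_comm] at h1
      exact le_of_mul_le_mul_right h1 (norm_pos_iff.2 hx)
  set w := gaussianPDFReal 0 v with hw
  have hwd : ∀ x, HasDerivAt w (-(x / v) * w x) x := by
    intro x
    have h1 : HasDerivAt (fun x : ℝ => -(x - 0)^2 / (2 * (v:ℝ))) (-(x / v)) x := by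
      have := ((((hasDerivAt_id x).sub_const 0).pow 2).neg).div_const (2 * (v:ℝ))
      refine this.congr_deriv ?_
      simp; field_simp
    have h2 := (h1.exp).const_mul ((√(2 * Real.pi * v))⁻¹)
    refine h2.congr_deriv ?_
    simp only [hw, gaussianPDFReal]; ring
  have hwi : Integrable w := integrable_gaussianPDFReal 0 v
  have hwc : Continuous w := by
    rw [continuous_iff_continuousAt]; exact fun x => (hwd x).continuousAt
  have hC0 : 0 ≤ C := (abs_nonneg _).trans (hC 0)
  have hint : ∀ g : ℝ → ℝ, Continuous g → (∃ K, ∀ x, |g x| ≤ K) →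
      Integrable (fun x => w x * g x) := by
    rintro g hg ⟨K, hK⟩
    exact hwi.mul_bdd (c := K) hg.aestronglyMeasurable (ae_of_all _ fun x => by simpa using hK x)
  have hhb : ∀ x, |f x - f 0| ≤ 2 * C := fun x => by
    have := abs_sub (f x) (f 0); linarith [hC x, hC 0]
  have sqb : ∀ a K : ℝ, |a| ≤ K → |a ^ 2| ≤ K ^ 2 := fun a K h => by
    rw [abs_pow]; exact pow_le_pow_left₀ (abs_nonneg _) h 2
  have i1 := hint (fun x => (f x - f 0)^2) (by fun_prop) ⟨_, fun x => sqb _ _ (hhb x)⟩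
  have i2 := hint (fun x => (deriv f x)^2) (by fun_prop) ⟨_, fun x => sqb _ _ (hC' x)⟩
  have i3 := hint (fun x => (deriv f x - q x)^2) (by fun_prop) ⟨(2*C)^2, fun x => sqb _ _ (by
    have := abs_sub (deriv f x) (q x); linarith [hC' x, hqb x])⟩
  set P : ℝ → ℝ := fun x => (f x - f 0) * q x * w x with hP
  set P' : ℝ → ℝ := fun x => w x * (deriv f x)^2 - w x * (deriv f x - q x)^2
      - (1 / (v:ℝ)) * (w x * (f x - f 0)^2) with hP'
  have hPd : ∀ x, HasDerivAt P (P' x) x := by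
    intro x
    rcases eq_or_ne x 0 with rfl | hx
    · have h0 : P' 0 = q 0 * q 0 * w 0 := by
        have : deriv f 0 = q 0 := by simp [hq, dslope_same]
        simp [hP', this]; ring
      rw [h0]
      have hqq : HasDerivAt (fun x => (f x - f 0) * (q x * w x)) (q 0 * (q 0 * w 0)) 0 := by
        have hr : (fun x => (f x - f 0) * (q x * w x)) = fun x => x * (q x * (q x * w x)) := by
          funext x; rw [hqx]; ring
        rw [hr, hasDerivAt_iff_tendsto_slope]
        have hcont : Tendsto (fun x => q x * (q x * w x)) (𝓝[≠] 0) (𝓝 (q 0 * (q 0 * w 0))) :=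
          (Continuous.tendsto (by fun_prop) 0).mono_left nhdsWithin_le_nhds
        refine hcont.congr' ?_
        filter_upwards [self_mem_nhdsWithin] with x hx
        have : x ≠ 0 := hx
        simp [slope_def_field]; field_simp
      convert hqq using 1
      · funext x; simp only [hP]; ring
      · ring
    · have e : P =ᶠ[𝓝 x] fun x => (f x - f 0) ^ 2 / x * w x := by
        filter_upwards [isOpen_ne.mem_nhds hx] with y hy
        have : y ≠ 0 := hy
        simp only [hP]; rw [hqx]; field_simp
      have hfx := (hfd x).hasDerivAt
      have h1 := ((((hfx.sub_const (f 0)).pow 2).div (hasDerivAt_id x) hx).mul (hwd x))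
      refine (h1.congr_of_eventuallyEq e).congr_deriv ?_
      simp only [hP', id]
      simp only [Pi.pow_apply, Pi.div_apply, id]
      simp only [hqx]; field_simp; ring
  have hPi : Integrable P' := (i2.sub i3).sub (i1.const_mul _)
  have hPint : Integrable P := by
    have := hint (fun x => (f x - f 0) * q x) (by fun_prop) ⟨2 * C * C, fun x => by
      rw [abs_mul]; exact mul_le_mul (hhb x) (hqb x) (abs_nonneg _) (by positivity)⟩
    exact this.congr (ae_of_all _ fun x => by simp only [hP]; ring)
  have h0 : ∫ x, P' x = 0 := integral_eq_zero_of_hasDerivAt_of_integrable hPd hPi hPint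
  rw [integral_gaussianReal_eq_integral_smul hv, integral_gaussianReal_eq_integral_smul hv]
  simp only [smul_eq_mul]
  have h3 : 0 ≤ ∫ x, w x * (deriv f x - q x)^2 :=
    integral_nonneg fun x => mul_nonneg (gaussianPDFReal_nonneg _ _ _) (sq_nonneg _)
  have h4 : ∫ x, P' x = (∫ x, w x * (deriv f x)^2) - (∫ x, w x * (deriv f x - q x)^2)
      - (1 / (v:ℝ)) * ∫ x, w x * (f x - f 0)^2 := by
    rw [← integral_const_mul, ← integral_sub i2 i3]
    exact integral_sub (i2.sub i3) (i1.const_mul _)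
  have h5 : (1 / (v:ℝ)) * ∫ x, w x * (f x - f 0)^2 ≤ ∫ x, w x * (deriv f x)^2 := by linarith
  rw [one_div, inv_mul_le_iff₀ hvpos] at h5
  exact h5


lemma integrable_bdd_cont {X : Type*} [TopologicalSpace X] [MeasurableSpace X] [BorelSpace X]
    [SecondCountableTopology X]
    (μ : Measure X) [IsFiniteMeasure μ] {G : Type*} [NormedAddCommGroup G]
    [SecondCountableTopology G]
    (g : X → G) (hg : Continuous g) (K : ℝ)
    (hK : ∀ x, ‖g x‖ ≤ K) : Integrable g μ :=
  Integrable.of_bound hg.aestronglyMeasurable K (ae_of_all _ hK)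

lemma sq_integral_le {X : Type*} [MeasurableSpace X] (μ : Measure X) [IsProbabilityMeasure μ]
    (g : X → ℝ) (hg : Integrable g μ) (hg2 : Integrable (fun x => g x ^ 2) μ) :
    (∫ x, g x ∂μ) ^ 2 ≤ ∫ x, g x ^ 2 ∂μ := by
  set m := ∫ x, g x ∂μ with hm
  have h : 0 ≤ ∫ x, (g x - m) ^ 2 ∂μ := integral_nonneg fun x => sq_nonneg _
  have e : ∫ x, (g x - m) ^ 2 ∂μ = (∫ x, g x ^ 2 ∂μ) - m ^ 2 := by
    have : ∀ x, (g x - m)^2 = g x ^ 2 - 2 * m * g x + m ^ 2 := fun x => by ring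
    simp_rw [this]
    rw [integral_add (f := fun x => g x ^ 2 - 2 * m * g x) (hg2.sub (hg.const_mul _))
      (integrable_const _), integral_sub hg2 (hg.const_mul _), integral_const_mul, ← hm]
    simp; ring
  linarith

/-- one-dimensional Gaussian Poincaré -/
lemma gauss1 (v : NNReal) (hv : v ≠ 0) (f : ℝ → ℝ) (hf : ContDiff ℝ 1 f) (C : ℝ)
    (hC : ∀ x, |f x| ≤ C) (hC' : ∀ x, |deriv f x| ≤ C) :
    ∫ x, (f x) ^ 2 ∂(gaussianReal 0 v) ≤ (∫ x, f x ∂(gaussianReal 0 v)) ^ 2 +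
      v * ∫ x, (deriv f x) ^ 2 ∂(gaussianReal 0 v) := by
  have h := gauss1_pinned v hv f hf C hC hC'
  have i1 : Integrable f (gaussianReal 0 v) := integrable_bdd_cont _ _ hf.continuous C hC
  have i2 : Integrable (fun x => f x ^ 2) (gaussianReal 0 v) :=
    integrable_bdd_cont _ _ (hf.continuous.pow 2) (C ^ 2) fun x => by
      rw [norm_pow]; exact pow_le_pow_left₀ (norm_nonneg _) (hC x) 2
  have e : ∫ x, (f x - f 0) ^ 2 ∂(gaussianReal 0 v) = (∫ x, f x ^ 2 ∂(gaussianReal 0 v)) -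
      2 * f 0 * (∫ x, f x ∂(gaussianReal 0 v)) + f 0 ^ 2 := by
    have : ∀ x, (f x - f 0)^2 = f x ^ 2 - 2 * f 0 * f x + f 0 ^ 2 := fun x => by ring
    simp_rw [this]
    rw [integral_add (f := fun x => f x ^ 2 - 2 * f 0 * f x) (i2.sub (i1.const_mul _))
      (integrable_const _), integral_sub i2 (i1.const_mul _), integral_const_mul]
    simp
  nlinarith [sq_nonneg ((∫ x, f x ∂(gaussianReal 0 v)) - f 0)]

/-- Poincaré inequality along a finite family of vectors. -/
def Poin {E ι : Type*} [NormedAddCommGroup E] [NormedSpace ℝ E] [MeasurableSpace E] [Fintype ι]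
    (μ : Measure E) (e : ι → E) (v : ℝ) : Prop :=
  ∀ F : E → ℝ, ContDiff ℝ 1 F → ∀ C, (∀ x, |F x| ≤ C) → (∀ x, ‖fderiv ℝ F x‖ ≤ C) →
    ∫ x, F x ^ 2 ∂μ ≤ (∫ x, F x ∂μ) ^ 2 + v * ∑ i, ∫ x, (fderiv ℝ F x (e i)) ^ 2 ∂μ

lemma Poin.prod {E ι : Type*} [NormedAddCommGroup E] [NormedSpace ℝ E] [MeasurableSpace E]
    [BorelSpace E] [FiniteDimensional ℝ E]
    [Fintype ι] (μ : Measure E) [IsProbabilityMeasure μ] (e : ι → E) (v : NNReal) (hv : v ≠ 0)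
    (h : Poin μ e v) (F : ℝ × E → ℝ) (hF : ContDiff ℝ 1 F) (C : ℝ) (hC : ∀ x, |F x| ≤ C)
    (hC' : ∀ x, ‖fderiv ℝ F x‖ ≤ C) :
    ∫ p, F p ^ 2 ∂((gaussianReal 0 v).prod μ) ≤ (∫ p, F p ∂((gaussianReal 0 v).prod μ)) ^ 2 +
      v * (∫ p, (fderiv ℝ F p (1, 0)) ^ 2 ∂((gaussianReal 0 v).prod μ) +
        ∑ i, ∫ p, (fderiv ℝ F p (0, e i)) ^ 2 ∂((gaussianReal 0 v).prod μ)) := by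
  have : SecondCountableTopology E := 
    haveI := FiniteDimensional.proper ℝ E; inferInstance
  set γ := gaussianReal 0 v with hγ
  have hFd : Differentiable ℝ F := hF.differentiable (by norm_num)
  have hFc : Continuous F := hF.continuous
  have hDc : Continuous (fderiv ℝ F) := hF.continuous_fderiv (by norm_num)
  have hC0 : 0 ≤ C := (abs_nonneg _).trans (hC 0)
  have hDv : ∀ (w : ℝ × E) p, |fderiv ℝ F p w| ≤ C * ‖w‖ := fun w p =>
    ((fderiv ℝ F p).le_opNorm w).trans (mul_le_mul_of_nonneg_right (hC' p) (norm_nonneg _))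
  have sqb : ∀ a K : ℝ, |a| ≤ K → ‖a ^ 2‖ ≤ K ^ 2 := fun a K h => by
    rw [norm_pow]; exact pow_le_pow_left₀ (norm_nonneg _) h 2
  set inr : E →L[ℝ] ℝ × E := ContinuousLinearMap.inr ℝ ℝ E with hinr
  set G : E → ℝ := fun x => ∫ y, F (y, x) ∂γ with hG
  set G' : E → (E →L[ℝ] ℝ) := fun x => ∫ y, (fderiv ℝ F (y, x)).comp inr ∂γ with hG'
  have hcb : ∀ p, ‖(fderiv ℝ F p).comp inr‖ ≤ C := fun p => by
    refine ContinuousLinearMap.opNorm_le_bound _ hC0 fun w => ?_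
    have := hDv (0, w) p
    simpa [hinr, Prod.norm_def] using this
  have hcc : Continuous fun p => (fderiv ℝ F p).comp inr := by fun_prop
  have hGd : ∀ x, HasFDerivAt G (G' x) x := by
    intro x
    refine hasFDerivAt_integral_of_dominated_of_fderiv_le (F := fun x y => F (y, x))
      (F' := fun x y => (fderiv ℝ F (y, x)).comp inr) (bound := fun _ => C) (s := Set.univ)
      univ_mem ?_ ?_ ?_ ?_ (integrable_const _) ?_
    · exact Eventually.of_forall fun x => Continuous.aestronglyMeasurable (by fun_prop)
    · exact integrable_bdd_cont _ _ (by fun_prop) C fun y => hC _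
    · exact (hcc.comp (by fun_prop : Continuous fun y : ℝ => (y, x))).aestronglyMeasurable
    · exact ae_of_all _ fun y x _ => hcb _
    · exact ae_of_all _ fun y x _ => (hFd (y, x)).hasFDerivAt.comp x (hasFDerivAt_prodMk_right y x)
  have hGD : fderiv ℝ G = G' := funext fun x => (hGd x).fderiv
  have hG'c : Continuous G' := by
    refine continuous_of_dominated (bound := fun _ => C) ?_ ?_ (integrable_const _) ?_
    · exact fun x => (hcc.comp (by fun_prop : Continuous fun y : ℝ => (y, x))).aestronglyMeasurable
    · exact fun x => ae_of_all _ fun y => hcb _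
    · exact ae_of_all _ fun y => hcc.comp (by fun_prop : Continuous fun x : E => (y, x))
  have hG1 : ContDiff ℝ 1 G := by
    rw [contDiff_one_iff_fderiv]
    exact ⟨fun x => (hGd x).differentiableAt, hGD ▸ hG'c⟩
  have hGb : ∀ x, |G x| ≤ C := fun x => by
    have := norm_integral_le_of_norm_le_const (μ := γ) (f := fun y => F (y, x)) (C := C)
      (ae_of_all _ fun y => hC _)
    simpa using this
  have hG'b : ∀ x, ‖fderiv ℝ G x‖ ≤ C := fun x => by
    have := norm_integral_le_of_norm_le_const (μ := γ) 
      (f := fun y => (fderiv ℝ F (y, x)).comp inr) (C := C) (ae_of_all _ fun y => hcb _)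
    rw [hGD]; simpa using this
  have hP := h G hG1 C hGb hG'b
  have hG'i : ∀ x i, fderiv ℝ G x (e i) = ∫ y, fderiv ℝ F (y, x) (0, e i) ∂γ := by
    intro x i
    rw [hGD]
    simp only [hG']
    rw [ContinuousLinearMap.integral_apply]
    · simp [hinr]
    · exact integrable_bdd_cont _ _ (hcc.comp (by fun_prop : Continuous fun y : ℝ => (y, x))) C
        fun y => hcb _
  have iF : Integrable F (γ.prod μ) := integrable_bdd_cont _ _ hFc C hC
  have iF2 : Integrable (fun p => F p ^ 2) (γ.prod μ) :=
    integrable_bdd_cont _ _ (hFc.pow 2) (C ^ 2) fun p => sqb _ _ (hC p)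
  have iD : ∀ w, Integrable (fun p => (fderiv ℝ F p w) ^ 2) (γ.prod μ) := fun w =>
    integrable_bdd_cont _ _ (by fun_prop) _ fun p => sqb _ _ (hDv w p)
  rw [integral_prod_symm _ iF, integral_prod_symm _ iF2, integral_prod_symm _ (iD _)]
  simp_rw [fun i => integral_prod_symm _ (iD (0, e i))]
  have hs : ∀ x, ∫ y, F (y, x) ^ 2 ∂γ ≤ G x ^ 2 + v * ∫ y, (fderiv ℝ F (y, x) (1, 0)) ^ 2 ∂γ := by
    intro x
    have hd : ∀ y, HasDerivAt (fun y => F (y, x)) (fderiv ℝ F (y, x) (1, 0)) y := fun y => by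
      have := ((hFd (y, x)).hasFDerivAt.comp y (hasFDerivAt_prodMk_left y x)).hasDerivAt
      simp at this; exact this
    have hd' : deriv (fun y => F (y, x)) = fun y => fderiv ℝ F (y, x) (1, 0) :=
      funext fun y => (hd y).deriv
    have := gauss1 v hv (fun y => F (y, x)) (hF.comp (by fun_prop)) C (fun y => hC _) (fun y => by
      rw [hd']; simpa [Prod.norm_def] using hDv (1, 0) (y, x))
    rwa [hd'] at this
  have iG2 : Integrable (fun x => G x ^ 2) μ :=
    integrable_bdd_cont _ _ (hG1.continuous.pow 2) _ fun x => sqb _ _ (hGb x)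
  have h1 : ∫ x, ∫ y, F (y, x) ^ 2 ∂γ ∂μ ≤ ∫ x, G x ^ 2 ∂μ +
      v * ∫ x, ∫ y, (fderiv ℝ F (y, x) (1, 0)) ^ 2 ∂γ ∂μ := by
    rw [← integral_const_mul, ← integral_add iG2 ((iD (1, 0)).integral_prod_right.const_mul _)]
    exact integral_mono iF2.integral_prod_right
      (iG2.add ((iD (1, 0)).integral_prod_right.const_mul _)) hs
  have h2 : ∀ i, ∫ x, (fderiv ℝ G x (e i)) ^ 2 ∂μ ≤
      ∫ x, ∫ y, (fderiv ℝ F (y, x) (0, e i)) ^ 2 ∂γ ∂μ := by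
    intro i
    refine integral_mono_of_nonneg (ae_of_all _ fun x => sq_nonneg _)
      (iD (0, e i)).integral_prod_right (ae_of_all _ fun x => ?_)
    simp only
    rw [hG'i]
    have hc : Continuous fun y : ℝ => fderiv ℝ F (y, x) (0, e i) :=
      (hDc.comp (by fun_prop : Continuous fun y : ℝ => (y, x))).clm_apply continuous_const
    exact sq_integral_le _ _ (integrable_bdd_cont _ _ hc _ fun y => hDv _ _)
      (integrable_bdd_cont _ _ (hc.pow 2) _ fun y => sqb _ _ (hDv _ _))
  have h3 := Finset.sum_le_sum fun i (_ : i ∈ Finset.univ) => h2 i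
  have h4 := mul_le_mul_of_nonneg_left h3 v.coe_nonneg
  rw [mul_add]
  linarith

lemma poin_pi (v : NNReal) (hv : v ≠ 0) (n : ℕ) :
    Poin (Measure.pi fun _ : Fin n => gaussianReal 0 v) (fun i => Pi.single i (1:ℝ)) v := by
  induction n with
  | zero =>
    intro F _ C _ _
    rw [Measure.pi_of_empty (fun _ : Fin 0 => gaussianReal 0 v) 0]
    simp
  | succ n ih =>
    intro F hF C hC hC'
    have mp := (measurePreserving_piFinSuccAbove (α := fun _ : Fin (n+1) => ℝ)
      (fun _ => gaussianReal 0 v) 0).symm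
    set L := Fin.consEquivL ℝ (fun _ : Fin (n+1) => ℝ) with hL
    have hLe : ∀ p : ℝ × (Fin n → ℝ),
      (MeasurableEquiv.piFinSuccAbove (fun _ : Fin (n+1) => ℝ) 0).symm p = L p := by
      intro p
      simp [hL, MeasurableEquiv.piFinSuccAbove]
      rfl
    have key : ∀ g : (Fin (n+1) → ℝ) → ℝ, ∫ x, g x ∂(Measure.pi fun _ => gaussianReal 0 v) =
        ∫ p, g (L p) ∂((gaussianReal 0 v).prod (Measure.pi fun _ : Fin n => gaussianReal 0 v)) := by
      intro g
      rw [← mp.integral_comp (MeasurableEquiv.measurableEmbedding _)]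
      simp_rw [hLe]
    have hLn : ∀ p, ‖L p‖ ≤ ‖p‖ := by
      intro p
      refine (pi_norm_le_iff_of_nonneg (norm_nonneg _)).2 fun i => ?_
      refine Fin.cases ?_ (fun j => ?_) i
      · simpa [hL] using norm_fst_le p
      · simpa [hL] using (norm_le_pi_norm p.2 j).trans (norm_snd_le p)
    have hd : ∀ p, fderiv ℝ (fun p => F (L p)) p = (fderiv ℝ F (L p)).comp (L : _ →L[ℝ] _) :=
      fun p => ((hF.differentiable (by norm_num) (L p)).hasFDerivAt.comp p L.hasFDerivAt).fderiv
    have hC0 : 0 ≤ C := (abs_nonneg _).trans (hC 0)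
    have := Poin.prod _ _ v hv ih (fun p => F (L p)) (hF.comp L.contDiff) C (fun _ => hC _) (by
      intro p
      rw [hd]
      refine ContinuousLinearMap.opNorm_le_bound _ hC0 fun w => ?_
      refine ((fderiv ℝ F (L p)).le_opNorm _).trans ?_
      exact mul_le_mul (hC' _) (hLn _) (norm_nonneg _) hC0)
    rw [key, key, Fin.sum_univ_succ]
    simp_rw [key]
    simp_rw [hd] at this
    have e0 : L (1, 0) = Pi.single 0 1 := by
      ext i; refine Fin.cases ?_ (fun j => ?_) i <;> simp [hL]
    have e1 : ∀ k, L (0, Pi.single k 1) = Pi.single k.succ 1 := by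
      intro k
      ext i; refine Fin.cases ?_ (fun j => ?_) i
      · simp [hL]
      · simp [hL, Pi.single_apply]
    simpa [e0, e1] using this


abbrev EE (N : ℕ) := EuclideanSpace ℝ (Fin N)

lemma dual_norm_sq {N : ℕ} (φ : EE N →L[ℝ] ℝ) :
    ‖φ‖ ^ 2 = ∑ i, (φ (EuclideanSpace.single i 1)) ^ 2 := by
  set y := (InnerProductSpace.toDual ℝ (EE N)).symm φ with hy
  have h1 : ‖φ‖ = ‖y‖ := by simp [hy]
  have h2 : ∀ x, φ x = inner ℝ y x := fun x => by
    rw [hy, InnerProductSpace.toDual_symm_apply]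
  rw [h1, EuclideanSpace.norm_sq_eq]
  refine Finset.sum_congr rfl fun i _ => ?_
  rw [h2, EuclideanSpace.inner_single_right]
  simp

lemma pi_gauss (v : NNReal) (hv : v ≠ 0) (n : ℕ) :
    (Measure.pi fun _ : Fin n => gaussianReal 0 v) =
      (volume : Measure (Fin n → ℝ)).withDensity
        fun x => ENNReal.ofReal (∏ i, gaussianPDFReal 0 v (x i)) := by
  refine Measure.pi_eq fun s hs => ?_
  rw [withDensity_apply _ (MeasurableSet.univ_pi hs), volume_pi, Measure.restrict_pi_pi,
    ← ofReal_integral_eq_lintegral_ofReal]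
  · rw [integral_fintype_prod_eq_prod (𝕜 := ℝ) (fun _ => gaussianPDFReal 0 v),
      ENNReal.ofReal_prod_of_nonneg]
    · refine Finset.prod_congr rfl fun i _ => ?_
      rw [gaussianReal_apply_eq_integral _ hv]
    · exact fun i _ => integral_nonneg fun x => gaussianPDFReal_nonneg _ _ _
  · exact Integrable.fintype_prod_dep (f := fun _ => gaussianPDFReal 0 v)
      fun i => (integrable_gaussianPDFReal 0 v).restrict
  · exact ae_of_all _ fun x => Finset.prod_nonneg fun i _ => gaussianPDFReal_nonneg _ _ _

lemma pi_gauss_integral_s16 (lam : ℝ) (hl : 0 < lam) (n : ℕ) :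
    ∃ c > 0, ∀ g : EE n → ℝ,
    ∫ x, g (WithLp.toLp 2 x) ∂(Measure.pi fun _ : Fin n =>
      gaussianReal 0 (Real.toNNReal (1 / (2 * lam)))) =
      c * ∫ x, g x * Real.exp (-(lam * ‖x‖ ^ 2)) := by
  set v := Real.toNNReal (1 / (2 * lam)) with hvd
  have hvv : (v : ℝ) = 1 / (2 * lam) := Real.coe_toNNReal _ (by positivity)
  have hv : v ≠ 0 := by
    intro h
    rw [h] at hvv
    have : (0:ℝ) < 1 / (2 * lam) := by positivity
    simp at hvv; linarith
  refine ⟨((√(2 * Real.pi * v))⁻¹) ^ n, by rw [hvv]; positivity, fun g => ?_⟩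
  rw [pi_gauss v hv, integral_withDensity_eq_integral_toReal_smul₀ (by
      refine Measurable.aemeasurable ?_
      refine Measurable.ennreal_ofReal ?_
      exact Finset.measurable_prod _ fun i _ =>
        (measurable_gaussianPDFReal 0 v).comp (measurable_pi_apply i))
      (ae_of_all _ fun _ => ENNReal.ofReal_lt_top)]
  rw [← integral_const_mul,
    ← (PiLp.volume_preserving_toLp (Fin n)).integral_comp
      (MeasurableEquiv.toLp 2 (Fin n → ℝ)).measurableEmbedding]
  refine integral_congr_ae (ae_of_all _ fun x => ?_)
  simp only
  rw [ENNReal.toReal_ofReal (Finset.prod_nonneg fun i _ => gaussianPDFReal_nonneg _ _ _),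
    EuclideanSpace.norm_sq_eq]
  simp only [gaussianPDFReal, Finset.prod_mul_distrib, Finset.prod_const, ← Real.exp_sum,
    smul_eq_mul, sub_zero, Finset.card_univ, Fintype.card_fin]
  rw [hvv, Finset.mul_sum, ← Finset.sum_neg_distrib]
  have : ∀ i : Fin n, -x i ^ 2 / (2 * (1 / (2 * lam))) = -(lam * ‖x i‖ ^ 2) := fun i => by
    rw [Real.norm_eq_abs, sq_abs]; field_simp
  simp_rw [this]
  ring

lemma gaussE {N : ℕ} (lam : ℝ) (hl : 0 < lam) (F : EE N → ℝ) (hF : ContDiff ℝ 1 F)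
    (hc : HasCompactSupport F) (h0 : ∫ x, F x * Real.exp (-(lam * ‖x‖ ^ 2)) = 0) :
    2 * lam * ∫ x, F x ^ 2 * Real.exp (-(lam * ‖x‖ ^ 2)) ≤
      ∫ x, ‖fderiv ℝ F x‖ ^ 2 * Real.exp (-(lam * ‖x‖ ^ 2)) := by
  obtain ⟨c, hcpos, key⟩ := pi_gauss_integral_s16 lam hl N
  set v := Real.toNNReal (1 / (2 * lam)) with hvd
  have hvv : (v : ℝ) = 1 / (2 * lam) := Real.coe_toNNReal _ (by positivity)
  have hv : v ≠ 0 := by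
    intro h
    rw [h] at hvv
    have : (0:ℝ) < 1 / (2 * lam) := by positivity
    simp at hvv; linarith
  obtain ⟨C1, hC1⟩ := hc.exists_bound_of_continuous hF.continuous
  have hDc : Continuous (fderiv ℝ F) := hF.continuous_fderiv (by norm_num)
  obtain ⟨C2, hC2⟩ := hc.fderiv (𝕜 := ℝ) |>.exists_bound_of_continuous hDc
  set L := (PiLp.continuousLinearEquiv 2 ℝ (fun _ : Fin N => ℝ)).symm with hL
  have hLx : ∀ x, L x = WithLp.toLp 2 x := fun x => rfl
  have hd : ∀ p, fderiv ℝ (fun p => F (L p)) p = (fderiv ℝ F (L p)).comp (L : _ →L[ℝ] _) :=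
    fun p => ((hF.differentiable (by norm_num) (L p)).hasFDerivAt.comp p L.hasFDerivAt).fderiv
  have := poin_pi v hv N (fun x => F (L x)) (hF.comp L.contDiff)
    (max C1 (C2 * ‖(L : (Fin N → ℝ) →L[ℝ] EE N)‖)) (fun x => le_max_of_le_left (hC1 _)) (fun x => by
      rw [hd]
      refine le_max_of_le_right ((ContinuousLinearMap.opNorm_comp_le _ _).trans ?_)
      exact mul_le_mul_of_nonneg_right (hC2 _) (norm_nonneg _))
  simp_rw [hd] at this
  have e1 : ∀ i : Fin N, L (Pi.single i 1) = EuclideanSpace.single i 1 := fun i => rfl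
  simp only [ContinuousLinearMap.comp_apply, ContinuousLinearEquiv.coe_coe, e1] at this
  simp_rw [hLx] at this
  rw [key (fun x => F x ^ 2), key F, h0] at this
  simp_rw [fun i => key (fun x => (fderiv ℝ F x (EuclideanSpace.single i 1)) ^ 2)] at this
  have iD : ∀ i, Integrable (fun x => (fderiv ℝ F x (EuclideanSpace.single i 1)) ^ 2 *
      Real.exp (-(lam * ‖x‖ ^ 2))) := by
    intro i
    refine Continuous.integrable_of_hasCompactSupport (by fun_prop) ?_
    have : HasCompactSupport fun x => fderiv ℝ F x (EuclideanSpace.single i 1) :=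
      hc.fderiv_apply (𝕜 := ℝ) _
    exact (this.comp_left (g := fun t => t ^ 2) (by simp)).mul_right
  rw [← Finset.mul_sum, ← integral_finsetSum _ fun i _ => iD i] at this
  simp_rw [← Finset.sum_mul, ← dual_norm_sq] at this
  rw [hvv] at this
  have h2 : 2 * lam * (c * ∫ x, F x ^ 2 * Real.exp (-(lam * ‖x‖ ^ 2))) ≤
      c * ∫ x, ‖fderiv ℝ F x‖ ^ 2 * Real.exp (-(lam * ‖x‖ ^ 2)) := by
    have := mul_le_mul_of_nonneg_left this (by positivity : 0 ≤ 2 * lam)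
    refine this.trans (le_of_eq ?_)
    field_simp; simp
  refine le_of_mul_le_mul_left ?_ hcpos
  linarith


lemma polar_zero {N : ℕ} (hN : 2 ≤ N) (u : EE N → ℝ) (hz : SphereAvgZero u) (φ : ℝ → ℝ) :
    ∫ x, φ ‖x‖ * u x = 0 := by
  have : Nontrivial (EE N) := by
    have : Nonempty (Fin N) := ⟨⟨0, by omega⟩⟩
    infer_instance
  have h1 : ∫ x : EE N, φ ‖x‖ * u x =
      ∫ x : ({(0)}ᶜ : Set (EE N)), φ ‖x.1‖ * u x.1 ∂((volume : Measure (EE N)).comap (↑)) := by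
    rw [integral_subtype_comap (measurableSet_singleton _).compl fun x : EE N ↦ φ ‖x‖ * u x,
        restrict_compl_singleton]
  rw [h1]
  have h2 := (volume : Measure (EE N)).measurePreserving_homeomorphUnitSphereProd.integral_comp
    (Homeomorph.measurableEmbedding _) (fun p => φ p.2.1 * u (p.2.1 • p.1.1))
  have h3 : ∀ x : ({(0)}ᶜ : Set (EE N)), φ ‖x.1‖ * u x.1 =
    (fun p : sphere (0 : EE N) 1 × Set.Ioi (0:ℝ) => φ p.2.1 * u (p.2.1 • p.1.1))
      (homeomorphUnitSphereProd (EE N) x) := by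
    intro x
    have hx : ‖x.1‖ ≠ 0 := norm_ne_zero_iff.2 x.2
    simp [smul_smul, hx]
  simp_rw [h3]
  rw [h2]
  by_cases hi : Integrable (fun p : sphere (0 : EE N) 1 × Set.Ioi (0:ℝ) =>
      φ p.2.1 * u (p.2.1 • p.1.1)) ((volume : Measure (EE N)).toSphere.prod
        (Measure.volumeIoiPow (Module.finrank ℝ (EE N) - 1)))
  · rw [integral_prod_symm _ hi]
    refine integral_eq_zero_of_ae (ae_of_all _ fun r => ?_)
    simp only
    rw [integral_const_mul, hz _ r.2.le]
    simp
  · exact integral_undef hi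

open scoped Pointwise in
lemma toSphere_neg {N : ℕ} : Measure.map (fun ω : sphere (0 : EE N) 1 => -ω)
    ((volume : Measure (EE N)).toSphere) = (volume : Measure (EE N)).toSphere := by
  have hm : Measurable (fun ω : sphere (0 : EE N) 1 => -ω) := continuous_neg.measurable
  ext s hs
  rw [Measure.map_apply hm hs, Measure.toSphere_apply' _ (hm hs), Measure.toSphere_apply' _ hs]
  congr 1
  have : Set.Ioo (0:ℝ) 1 • ((↑) '' ((fun ω : sphere (0 : EE N) 1 => -ω) ⁻¹' s) : Set (EE N)) =
      -(Set.Ioo (0:ℝ) 1 • ((↑) '' s : Set (EE N))) := by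
    ext x
    simp only [Set.mem_smul, Set.mem_image, Set.mem_preimage, Set.mem_neg]
    constructor
    · rintro ⟨r, hr, _, ⟨ω, hω, rfl⟩, rfl⟩
      exact ⟨r, hr, _, ⟨-ω, hω, rfl⟩, by simp⟩
    · rintro ⟨r, hr, _, ⟨ω, hω, rfl⟩, h⟩
      exact ⟨r, hr, _, ⟨-ω, by simpa using hω, rfl⟩, by simp [h]⟩
  rw [this, Measure.measure_neg]

lemma sphereAvgZero_of_odd {N : ℕ} (u : EE N → ℝ) (hu : ∀ x, u (-x) = -u x) :
    SphereAvgZero u := by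
  intro r _
  have hm : MeasurePreserving (fun ω : sphere (0 : EE N) 1 => -ω)
    ((volume : Measure (EE N)).toSphere) ((volume : Measure (EE N)).toSphere) :=
    ⟨continuous_neg.measurable, toSphere_neg⟩
  have h := hm.integral_comp (Homeomorph.neg _).measurableEmbedding
    (fun ω : sphere (0 : EE N) 1 => u (r • (ω : EE N)))
  have h2 : ∀ ω : sphere (0 : EE N) 1, u (r • ((-ω : sphere (0 : EE N) 1) : EE N)) =
      - u (r • (ω : EE N)) := fun ω => by
    rw [← hu]; simp
  simp_rw [h2] at h
  rw [integral_neg] at h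
  linarith

lemma sphereAvgZero_zero {N : ℕ} (hN : 2 ≤ N) (u : EE N → ℝ) (hz : SphereAvgZero u) : u 0 = 0 := by
  have : Nontrivial (EE N) := by
    have : Nonempty (Fin N) := ⟨⟨0, by omega⟩⟩
    infer_instance
  have h := hz 0 le_rfl
  simp at h
  rcases h with h | h
  · exfalso
    rcases h with h | h
    · omega
    · have hp : 0 < (volume : Measure (EE N)).real (ball (0 : EE N) 1) :=
        ENNReal.toReal_pos (measure_ball_pos volume (0 : EE N) one_pos).ne' measure_ball_lt_top.ne
      linarith
  · exact h


lemma clm_sum {N : ℕ} (φ : EE N →L[ℝ] ℝ) (x : EE N) :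
    φ x = ∑ i, φ (EuclideanSpace.single i 1) * x i := by
  have hx := (EuclideanSpace.basisFun (Fin N) ℝ).sum_repr x
  conv_lhs => rw [← hx]
  rw [map_sum]
  refine Finset.sum_congr rfl fun i _ => ?_
  simp [mul_comm]

lemma int_of_bdd {N : ℕ} (g : EE N → ℝ) (hg : Measurable g) (S : Set (EE N)) (hS : IsCompact S)
    (C : ℝ) (hC : ∀ x, |g x| ≤ C) (h0 : ∀ x, x ∉ S → g x = 0) : Integrable g := by
  have h1 : IntegrableOn g S := by
    refine Measure.integrableOn_of_bounded hS.measure_lt_top.ne hg.aestronglyMeasurable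
      (M := C) (ae_of_all _ hC)
  exact (integrableOn_iff_integrable_of_support_subset fun x hx => by
    by_contra h; exact hx (h0 x h)).1 h1

structure Good {N : ℕ} (u : EE N → ℝ) (K : ℝ) : Prop where
  cd : ContDiff ℝ 1 u
  cs : HasCompactSupport u
  zero : u 0 = 0
  Kpos : 0 ≤ K
  lip : ∀ x, |u x| ≤ K * ‖x‖
  der : ∀ x, ‖fderiv ℝ u x‖ ≤ K

lemma exists_good {N : ℕ} (u : EE N → ℝ) (h1 : ContDiff ℝ 1 u) (h2 : HasCompactSupport u)
    (h3 : u 0 = 0) : ∃ K, Good u K := by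
  obtain ⟨K, hK⟩ := h2.fderiv (𝕜 := ℝ) |>.exists_bound_of_continuous
    (h1.continuous_fderiv (by norm_num))
  refine ⟨K, h1, h2, h3, (norm_nonneg _).trans (hK 0), fun x => ?_, hK⟩
  have := Convex.norm_image_sub_le_of_norm_fderiv_le (𝕜 := ℝ) (s := Set.univ) (x := 0) (y := x)
    (f := u) (C := K) (fun x _ => h1.differentiable (by norm_num) x)
          (fun x _ => hK x) convex_univ trivial trivial
  simpa [h3] using this

namespace Good
variable {N : ℕ} {u : EE N → ℝ} {K : ℝ}

lemma fderiv_app (h : Good u K) (x v : EE N) : |fderiv ℝ u x v| ≤ K * ‖v‖ :=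
  ((fderiv ℝ u x).le_opNorm v).trans (mul_le_mul_of_nonneg_right (h.der x) (norm_nonneg _))

lemma cont (h : Good u K) : Continuous u := h.cd.continuous
lemma contD (h : Good u K) : Continuous (fderiv ℝ u) := h.cd.continuous_fderiv (by norm_num)
lemma diff (h : Good u K) : Differentiable ℝ u := h.cd.differentiable (by norm_num)
lemma off (_h : Good u K) (x : EE N) (hx : x ∉ tsupport u) : u x = 0 := image_eq_zero_of_notMem_tsupport hx

lemma int_sq (h : Good u K) : Integrable fun x => u x ^ 2 / ‖x‖ ^ 2 := by
  refine int_of_bdd _ ?_ (tsupport u) h.cs (K ^ 2) (fun x => ?_) fun x hx => by simp [h.off x hx]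
  · have := h.cont.measurable; fun_prop
  · rcases eq_or_ne x 0 with rfl | hx
    · simp; positivity
    · have : 0 < ‖x‖ := norm_pos_iff.2 hx
      rw [abs_div, abs_pow, abs_pow, abs_norm, div_le_iff₀ (by positivity), ← mul_pow]
      exact pow_le_pow_left₀ (abs_nonneg _) (h.lip x) 2

lemma int_cross (h : Good u K) : Integrable fun x => u x * fderiv ℝ u x x / ‖x‖ ^ 2 := by
  refine int_of_bdd _ ?_ (tsupport u) h.cs (K ^ 2) (fun x => ?_) fun x hx => by simp [h.off x hx]
  · have := h.cont.measurable
    have h2 : Continuous fun x => fderiv ℝ u x x := h.contD.clm_apply continuous_id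
    have := h2.measurable; fun_prop
  · rcases eq_or_ne x 0 with rfl | hx
    · simp; positivity
    · have : 0 < ‖x‖ := norm_pos_iff.2 hx
      rw [abs_div, abs_pow, abs_mul, abs_norm, div_le_iff₀ (by positivity)]
      have := mul_le_mul (h.lip x) (h.fderiv_app x x) (abs_nonneg _) (mul_nonneg h.Kpos (norm_nonneg _))
      linarith [this]

lemma int_grad (h : Good u K) : Integrable fun x => ‖fderiv ℝ u x‖ ^ 2 := by
  have := h.contD
  refine Continuous.integrable_of_hasCompactSupport (by fun_prop) ?_
  exact (h.cs.fderiv (𝕜 := ℝ)).comp_left (g := fun t => ‖t‖ ^ 2) (by simp)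

lemma int_i (h : Good u K) (i : Fin N) :
    Integrable fun x => u x * fderiv ℝ u x (EuclideanSpace.single i 1) * x i / ‖x‖ ^ 2 := by
  refine int_of_bdd _ ?_ (tsupport u) h.cs (K ^ 2) (fun x => ?_) fun x hx => by simp [h.off x hx]
  · have := h.cont.measurable
    have h2 : Continuous fun x => fderiv ℝ u x (EuclideanSpace.single i 1) :=
      h.contD.clm_apply continuous_const
    have := h2.measurable; fun_prop
  · rcases eq_or_ne x 0 with rfl | hx
    · simp; positivity
    · have : 0 < ‖x‖ := norm_pos_iff.2 hx
      rw [abs_div, abs_pow, abs_mul, abs_mul, abs_norm, div_le_iff₀ (by positivity)]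
      have h1 := h.fderiv_app x (EuclideanSpace.single i 1)
      simp at h1
      have h2 : |x i| ≤ ‖x‖ := PiLp.norm_apply_le x i
      calc _ ≤ K * ‖x‖ * K * ‖x‖ := by
            have := h.Kpos
            gcongr
            exact h.lip x
        _ = _ := by ring

lemma int_ii (h : Good u K) (i : Fin N) :
    Integrable fun x => u x ^ 2 * x i ^ 2 / (‖x‖ ^ 2) ^ 2 := by
  refine h.int_sq.mono' ?_ (ae_of_all _ fun x => ?_)
  · have := h.cont.measurable
    exact Measurable.aestronglyMeasurable (by fun_prop)
  · rcases eq_or_ne x 0 with rfl | hx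
    · simp
    · have : 0 < ‖x‖ := norm_pos_iff.2 hx
      have h2 : |x i| ≤ ‖x‖ := PiLp.norm_apply_le x i
      have h3 : x i ^ 2 ≤ ‖x‖ ^ 2 := by
        rw [← sq_abs]; exact pow_le_pow_left₀ (abs_nonneg _) h2 2
      rw [Real.norm_of_nonneg (by positivity), div_le_div_iff₀ (by positivity) (by positivity)]
      nlinarith [mul_le_mul_of_nonneg_left h3 (by positivity : 0 ≤ u x ^ 2 * ‖x‖ ^ 2)]

lemma ibp_i (h : Good u K) (i : Fin N) :
    ∫ x, (u x ^ 2 / ‖x‖ ^ 2 + 2 * (u x * fderiv ℝ u x (EuclideanSpace.single i 1) * x i / ‖x‖ ^ 2)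
      - 2 * (u x ^ 2 * x i ^ 2 / (‖x‖ ^ 2) ^ 2)) = 0 := by
  set e : EE N := EuclideanSpace.single i 1 with he
  set g' : EE N → ℝ := fun x => (u x ^ 2 / ‖x‖ ^ 2 + 2 * (u x * fderiv ℝ u x e * x i / ‖x‖ ^ 2)
      - 2 * (u x ^ 2 * x i ^ 2 / (‖x‖ ^ 2) ^ 2)) with hg'
  set g'' : EE N → ℝ := fun x => if x = 0 then (fderiv ℝ u 0 e) ^ 2 else g' x with hg''
  set g : EE N → ℝ := fun x => x i * u x ^ 2 / ‖x‖ ^ 2 with hg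
  have : Nontrivial (EE N) := by
    have : Nonempty (Fin N) := ⟨i⟩
    infer_instance
  have hae : g' =ᵐ[volume] g'' := by
    have : ∀ᵐ x : EE N, x ≠ 0 := by simp [ae_iff]
    filter_upwards [this] with x hx
    simp [hg'', hx]
  have hgi' : Integrable g' := ((h.int_sq).add ((h.int_i i).const_mul 2)).sub ((h.int_ii i).const_mul 2)
  have hgi : Integrable g := by
    have hui : Integrable u := h.cont.integrable_of_hasCompactSupport h.cs
    refine (hui.norm.const_mul K).mono' ?_ (ae_of_all _ fun x => ?_)
    · have := h.cont.measurable
      exact Measurable.aestronglyMeasurable (by fun_prop)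
    · rcases eq_or_ne x 0 with rfl | hx
      · simp [hg, h.zero]
      · have : 0 < ‖x‖ := norm_pos_iff.2 hx
        have h2 : |x i| ≤ ‖x‖ := PiLp.norm_apply_le x i
        have hK := h.Kpos
        simp only [hg, Real.norm_eq_abs]
        rw [abs_div, abs_pow, abs_mul, abs_norm, abs_pow, div_le_iff₀ (by positivity)]
        calc |x i| * |u x| ^ 2 = |x i| * (|u x| * |u x|) := by ring
          _ ≤ ‖x‖ * ((K * ‖x‖) * |u x|) := by
            gcongr
            exact h.lip x
          _ = _ := by ring
  have he1 : ‖e‖ = 1 := by simp [he]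
  have key := integral_bilinear_hasLineDerivAt_right_eq_neg_left_of_integrable (μ := volume)
    (f := fun _ : EE N => (1:ℝ)) (f' := fun _ => 0) (g := g) (g' := g'') (v := e)
    (B := ContinuousLinearMap.mul ℝ ℝ) (by simp) (by simpa using hgi'.congr hae) (by simpa using hgi)
    (fun x _ => by simpa [HasLineDerivAt] using hasDerivAt_const (0:ℝ) (1:ℝ)) (fun x _ => ?_)
  · rw [integral_congr_ae hae]; simpa using key
  unfold HasLineDerivAt
  have hu : HasDerivAt (fun t : ℝ => u (x + t • e)) (fderiv ℝ u x e) 0 :=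
    (h.diff x).hasFDerivAt.hasLineDerivAt e
  have hxi : ∀ t : ℝ, (x + t • e) i = x i + t := fun t => by simp [he]
  rcases eq_or_ne x 0 with rfl | hx
  · simp only [hg'', if_true]
    rw [hasDerivAt_iff_tendsto_slope] at hu ⊢
    have := hu.pow 2
    refine this.congr' ?_
    filter_upwards [self_mem_nhdsWithin] with t ht
    have ht : t ≠ 0 := ht
    have hei : e i = 1 := by simp [he]
    simp only [slope_def_field, hg, zero_add, norm_smul, he1]
    simp [h.zero, hei]
    field_simp
  · have hn : HasDerivAt (fun t : ℝ => ‖x + t • e‖ ^ 2) (2 * x i) 0 := by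
      have h1 : HasDerivAt (fun t : ℝ => x + t • e) e 0 := by
        simpa using ((hasDerivAt_id (0:ℝ)).smul_const e).const_add x
      have := h1.norm_sq
      simpa [he, EuclideanSpace.inner_single_right] using this
    have hl : HasDerivAt (fun t : ℝ => (x + t • e) i) 1 0 := by
      simp_rw [hxi]; exact (hasDerivAt_id (0:ℝ)).const_add _
    have hnx : ‖x‖ ≠ 0 := norm_ne_zero_iff.2 hx
    have := (hl.mul (hu.pow 2)).div hn (by simpa using hx)
    refine this.congr_deriv ?_
    simp [hg'', hx, hg']
    field_simp

lemma ibp (h : Good u K) :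
    2 * ∫ x, u x * fderiv ℝ u x x / ‖x‖ ^ 2 = -((N:ℝ) - 2) * ∫ x, u x ^ 2 / ‖x‖ ^ 2 := by
  have h1 : ∑ i : Fin N, ∫ x, (u x ^ 2 / ‖x‖ ^ 2 + 2 * (u x * fderiv ℝ u x (EuclideanSpace.single i 1) * x i / ‖x‖ ^ 2)
      - 2 * (u x ^ 2 * x i ^ 2 / (‖x‖ ^ 2) ^ 2)) = 0 := Finset.sum_eq_zero fun i _ => h.ibp_i i
  have hi : ∀ i, Integrable fun x => (u x ^ 2 / ‖x‖ ^ 2 +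
      2 * (u x * fderiv ℝ u x (EuclideanSpace.single i 1) * x i / ‖x‖ ^ 2)
      - 2 * (u x ^ 2 * x i ^ 2 / (‖x‖ ^ 2) ^ 2)) := fun i =>
    ((h.int_sq).add ((h.int_i i).const_mul 2)).sub ((h.int_ii i).const_mul 2)
  rw [← integral_finsetSum _ fun i _ => hi i] at h1
  have h2 : ∀ x, ∑ i : Fin N, (u x ^ 2 / ‖x‖ ^ 2 + 2 * (u x * fderiv ℝ u x (EuclideanSpace.single i 1) * x i / ‖x‖ ^ 2)
      - 2 * (u x ^ 2 * x i ^ 2 / (‖x‖ ^ 2) ^ 2)) =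
      ((N:ℝ) - 2) * (u x ^ 2 / ‖x‖ ^ 2) + 2 * (u x * fderiv ℝ u x x / ‖x‖ ^ 2) := by
    intro x
    have e1 : fderiv ℝ u x x = ∑ i, fderiv ℝ u x (EuclideanSpace.single i 1) * x i := by
      exact clm_sum _ x
    have e2 : ∑ i, x i ^ 2 = ‖x‖ ^ 2 := by rw [EuclideanSpace.norm_sq_eq]; simp
    rw [Finset.sum_sub_distrib, Finset.sum_add_distrib, ← Finset.mul_sum, ← Finset.mul_sum,
      ← Finset.sum_div, ← Finset.sum_div, ← Finset.sum_div, ← Finset.mul_sum, e2, e1]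
    simp_rw [mul_assoc]
    rw [← Finset.mul_sum]
    simp only [Finset.sum_const, Finset.card_univ, Fintype.card_fin, nsmul_eq_mul]
    rcases eq_or_ne x 0 with rfl | hx
    · simp
    have hnx : ‖x‖ ≠ 0 := norm_ne_zero_iff.2 hx
    field_simp
    ring
  simp_rw [h2] at h1
  rw [integral_add (h.int_sq.const_mul _) (h.int_cross.const_mul _), integral_const_mul,
    integral_const_mul] at h1
  linarith
end Good

lemma lap_fubini {N : ℕ} (hN : 2 ≤ N) (a : ℝ) (ha : 0 < a) (g : EE N → ℝ) (hg : Measurable g)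
    (hg0 : ∀ x, 0 ≤ g x) (hi : Integrable fun x => (1 / ‖x‖ ^ 2) ^ a * g x) :
    IntegrableOn (fun t : ℝ => t ^ (a - 1) * ∫ x, g x * Real.exp (-(t * ‖x‖ ^ 2))) (Set.Ioi 0) ∧
    ∫ t in Set.Ioi (0:ℝ), t ^ (a - 1) * ∫ x, g x * Real.exp (-(t * ‖x‖ ^ 2)) =
      Real.Gamma a * ∫ x, (1 / ‖x‖ ^ 2) ^ a * g x := by
  have : Nonempty (Fin N) := ⟨⟨0, by omega⟩⟩
  have hne : ∀ᵐ x : EE N, x ≠ 0 := by simp [ae_iff]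
  set H : EE N × ℝ → ℝ := fun p => p.2 ^ (a - 1) * (g p.1 * Real.exp (-(p.2 * ‖p.1‖ ^ 2))) with hH
  have hHm : Measurable H := by
    have : Measurable fun p : EE N × ℝ => g p.1 := hg.comp measurable_fst
    fun_prop
  have hint : ∀ x : EE N, x ≠ 0 → (∫ t in Set.Ioi (0:ℝ), t ^ (a - 1) * Real.exp (-(‖x‖ ^ 2 * t)))
      = (1 / ‖x‖ ^ 2) ^ a * Real.Gamma a := fun x hx => by
    have : 0 < ‖x‖ := norm_pos_iff.2 hx
    exact Real.integral_rpow_mul_exp_neg_mul_Ioi ha (by positivity)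
  have hHe : ∀ x t, H (x, t) = g x * (t ^ (a - 1) * Real.exp (-(‖x‖ ^ 2 * t))) := fun x t => by
    simp only [hH]; rw [mul_comm t]; ring
  have hHx : ∀ x : EE N, x ≠ 0 → Integrable (fun t => H (x, t)) (volume.restrict (Set.Ioi 0)) := by
    intro x hx
    have : 0 < ‖x‖ := norm_pos_iff.2 hx
    simp_rw [hHe]
    refine Integrable.const_mul ?_ _
    refine Integrable.of_integral_ne_zero ?_
    rw [hint x hx]
    have := Real.Gamma_pos_of_pos ha
    positivity
  have hHI : ∀ x : EE N, x ≠ 0 → ∫ t in Set.Ioi 0, H (x, t) = Real.Gamma a * ((1 / ‖x‖ ^ 2) ^ a * g x) := by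
    intro x hx
    simp_rw [hHe]
    rw [integral_const_mul, hint x hx]; ring
  have hHn : ∀ x : EE N, ∫ t in Set.Ioi 0, ‖H (x, t)‖ = ∫ t in Set.Ioi 0, H (x, t) := by
    intro x
    refine setIntegral_congr_fun measurableSet_Ioi fun t ht => ?_
    have ht : 0 < t := ht
    have := hg0 x
    rw [Real.norm_of_nonneg]; simp only [hH]; positivity
  have hHint : Integrable H (volume.prod (volume.restrict (Set.Ioi 0))) := by
    rw [integrable_prod_iff hHm.aestronglyMeasurable]
    refine ⟨by filter_upwards [hne] with x hx using hHx x hx, ?_⟩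
    refine (hi.const_mul (Real.Gamma a)).congr ?_
    filter_upwards [hne] with x hx
    rw [hHn, hHI x hx]
  have hin : ∀ t, ∫ x, H (x, t) = t ^ (a - 1) * ∫ x, g x * Real.exp (-(t * ‖x‖ ^ 2)) := fun t => by
    simp only [hH]; rw [integral_const_mul]
  constructor
  · have := hHint.integral_prod_right
    simp_rw [hin] at this
    exact this
  · simp_rw [← hin]
    rw [← integral_integral_swap hHint, ← integral_const_mul]
    refine integral_congr_ae ?_
    filter_upwards [hne] with x hx using hHI x hx

lemma clm_norm_comb {N : ℕ} (φ : EE N →L[ℝ] ℝ) (x : EE N) (α β : ℝ) :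
    ‖α • φ + β • innerSL ℝ x‖ ^ 2 = α ^ 2 * ‖φ‖ ^ 2 + 2 * α * β * φ x + β ^ 2 * ‖x‖ ^ 2 := by
  rw [dual_norm_sq, dual_norm_sq φ, clm_sum φ x, EuclideanSpace.norm_sq_eq x]
  rw [Finset.mul_sum, Finset.mul_sum, Finset.mul_sum, ← Finset.sum_add_distrib, ← Finset.sum_add_distrib]
  refine Finset.sum_congr rfl fun i _ => ?_
  simp [EuclideanSpace.inner_single_right]
  ring

def FF {N : ℕ} (u : EE N → ℝ) (x : EE N) : ℝ := (‖x‖ ^ 2) ^ ((N:ℝ) / 4) * u x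

def FF' {N : ℕ} (u : EE N → ℝ) (x : EE N) : EE N →L[ℝ] ℝ :=
  ((‖x‖ ^ 2) ^ ((N:ℝ) / 4)) • fderiv ℝ u x +
    (((N:ℝ) / 2) * (‖x‖ ^ 2) ^ ((N:ℝ) / 4 - 1) * u x) • innerSL ℝ x

lemma FF_hasFDerivAt_ne {N : ℕ} {u : EE N → ℝ} {K : ℝ} (h : Good u K)
    (x : EE N) (hx : x ≠ 0) : HasFDerivAt (FF u) (FF' u x) x := by
  have hn : 0 < ‖x‖ := norm_pos_iff.2 hx
  have h1 : HasFDerivAt (fun x : EE N => ‖x‖ ^ 2) (2 • innerSL ℝ x) x := (hasStrictFDerivAt_norm_sq x).hasFDerivAt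
  have h2 := h1.rpow_const (p := (N:ℝ)/4) (Or.inl (by positivity))
  have h3 := h2.mul (h.diff x).hasFDerivAt
  refine h3.congr_fderiv ?_
  unfold FF'
  ext v
  simp
  ring

lemma FF'_bound {N : ℕ} (hN : 2 ≤ N) {u : EE N → ℝ} {K : ℝ} (h : Good u K) (x : EE N) :
    ‖FF' u x‖ ≤ (K + (N:ℝ) / 2 * K) * (‖x‖ ^ 2) ^ ((N:ℝ) / 4) := by
  have hN' : (0:ℝ) < N := by exact_mod_cast (by omega : 0 < N)
  have hK := h.Kpos
  rcases eq_or_ne x 0 with rfl | hx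
  · have : (N:ℝ)/4 ≠ 0 := by positivity
    simp [FF', h.zero, Real.zero_rpow this]
  · have hn : 0 < ‖x‖ := norm_pos_iff.2 hx
    refine (norm_add_le _ _).trans ?_
    rw [norm_smul, norm_smul, innerSL_apply_norm, norm_mul, norm_mul]
    rw [Real.norm_of_nonneg (by positivity), Real.norm_of_nonneg (by positivity : 0 ≤ (N:ℝ)/2),
      Real.norm_of_nonneg (by positivity : 0 ≤ (‖x‖ ^ 2) ^ ((N:ℝ) / 4 - 1)),
      Real.rpow_sub_one (by positivity)]
    calc _ ≤ (‖x‖ ^ 2) ^ ((N:ℝ) / 4) * K + (N:ℝ) / 2 * ((‖x‖ ^ 2) ^ ((N:ℝ) / 4) / ‖x‖ ^ 2) * (K * ‖x‖) * ‖x‖ := by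
          gcongr
          · exact h.der x
          · exact h.lip x
      _ = _ := by field_simp

lemma rpow_tendsto {N : ℕ} (hN : 2 ≤ N) : Continuous fun x : EE N => (‖x‖ ^ 2) ^ ((N:ℝ) / 4) := by
  have hN' : (0:ℝ) < N := by exact_mod_cast (by omega : 0 < N)
  exact Continuous.rpow_const (by fun_prop) fun x => Or.inr (by positivity)

lemma FF_hasFDerivAt {N : ℕ} (hN : 2 ≤ N) {u : EE N → ℝ} {K : ℝ} (h : Good u K)
    (x : EE N) : HasFDerivAt (FF u) (FF' u x) x := by
  have hN' : (0:ℝ) < N := by exact_mod_cast (by omega : 0 < N)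
  rcases eq_or_ne x 0 with rfl | hx
  · have h4 : (N:ℝ)/4 ≠ 0 := by positivity
    have h0 : FF' u 0 = 0 := by simp [FF', h.zero, Real.zero_rpow h4]
    rw [h0, hasFDerivAt_iff_isLittleO_nhds_zero]
    have e : (fun x : EE N => FF u (0 + x) - FF u 0 - (0 : EE N →L[ℝ] ℝ) x) = FF u := by
      ext x; simp [FF, h.zero]
    rw [e, Asymptotics.isLittleO_iff]
    intro c hc
    have ht : Tendsto (fun x : EE N => (‖x‖ ^ 2) ^ ((N:ℝ) / 4) * K) (𝓝 0) (𝓝 0) := by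
      have := ((rpow_tendsto hN).mul_const K).tendsto 0
      simpa [Real.zero_rpow h4] using this
    filter_upwards [ht.eventually (gt_mem_nhds hc)] with x hx
    unfold FF
    rw [norm_mul, Real.norm_of_nonneg (by positivity)]
    calc _ ≤ (‖x‖ ^ 2) ^ ((N:ℝ) / 4) * (K * ‖x‖) := by
          gcongr; exact h.lip x
      _ = ((‖x‖ ^ 2) ^ ((N:ℝ) / 4) * K) * ‖x‖ := by ring
      _ ≤ _ := by gcongr
  · exact FF_hasFDerivAt_ne h x hx

lemma FF'_cont {N : ℕ} (hN : 2 ≤ N) {u : EE N → ℝ} {K : ℝ} (h : Good u K) : Continuous (FF' u) := by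
  have hN' : (0:ℝ) < N := by exact_mod_cast (by omega : 0 < N)
  rw [continuous_iff_continuousAt]
  intro x
  rcases eq_or_ne x 0 with rfl | hx
  · have h4 : (N:ℝ)/4 ≠ 0 := by positivity
    have h0 : FF' u 0 = 0 := by simp [FF', h.zero, Real.zero_rpow h4]
    rw [ContinuousAt, h0]
    refine squeeze_zero_norm (FF'_bound hN h) ?_
    have := ((rpow_tendsto hN).const_mul (K + (N:ℝ) / 2 * K)).tendsto 0
    simpa [Real.zero_rpow h4] using this
  · have hn : 0 < ‖x‖ := norm_pos_iff.2 hx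
    unfold FF'
    refine ContinuousAt.add (ContinuousAt.smul (rpow_tendsto hN).continuousAt h.contD.continuousAt) ?_
    have hs : ContinuousAt (fun x : EE N => (innerSL ℝ x : EE N →L[ℝ] ℝ)) x :=
      (innerSL ℝ (E := EE N)).continuous.continuousAt
    refine ContinuousAt.smul (f := fun x : EE N => ((N:ℝ) / 2) * (‖x‖ ^ 2) ^ ((N:ℝ) / 4 - 1) * u x) ?_ hs
    refine ContinuousAt.mul (ContinuousAt.mul continuousAt_const ?_) h.cont.continuousAt
    exact ContinuousAt.rpow_const (by fun_prop) (Or.inl (by positivity))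

lemma FF_contDiff {N : ℕ} (hN : 2 ≤ N) {u : EE N → ℝ} {K : ℝ} (h : Good u K) : ContDiff ℝ 1 (FF u) := by
  rw [contDiff_one_iff_fderiv]
  refine ⟨fun x => (FF_hasFDerivAt hN h x).differentiableAt, ?_⟩
  have : fderiv ℝ (FF u) = FF' u := funext fun x => (FF_hasFDerivAt hN h x).fderiv
  rw [this]; exact FF'_cont hN h

lemma FF_cs {N : ℕ} {u : EE N → ℝ} {K : ℝ} (h : Good u K) : HasCompactSupport (FF u) :=
  h.cs.mul_left

lemma FF_sq {N : ℕ} (_hN : 2 ≤ N) {u : EE N → ℝ} {K : ℝ} (h : Good u K) (x : EE N) :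
    (1 / ‖x‖ ^ 2) ^ ((N:ℝ) / 2 + 1) * FF u x ^ 2 = u x ^ 2 / ‖x‖ ^ 2 := by
  rcases eq_or_ne x 0 with rfl | hx
  · simp [FF, h.zero]
  · have hn : 0 < ‖x‖ := norm_pos_iff.2 hx
    have hr : 0 < ‖x‖ ^ 2 := by positivity
    set ρ := ‖x‖ ^ 2
    have e : (ρ ^ ((N:ℝ)/4)) ^ 2 = ρ ^ ((N:ℝ)/2) := by
      rw [← Real.rpow_mul_natCast hr.le]; congr 1; push_cast; ring
    have hp : 0 < ρ ^ ((N:ℝ)/2) := by positivity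
    unfold FF
    rw [mul_pow, e, Real.rpow_add_one (by positivity), one_div, Real.inv_rpow hr.le]
    field_simp

lemma FF'_sq {N : ℕ} {u : EE N → ℝ} (x : EE N) (hx : x ≠ 0) :
    (1 / ‖x‖ ^ 2) ^ ((N:ℝ) / 2) * ‖FF' u x‖ ^ 2 =
      ‖fderiv ℝ u x‖ ^ 2 + N * (u x * fderiv ℝ u x x / ‖x‖ ^ 2) + (N:ℝ) ^ 2 / 4 * (u x ^ 2 / ‖x‖ ^ 2) := by
  have hn : 0 < ‖x‖ := norm_pos_iff.2 hx
  unfold FF'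
  rw [clm_norm_comb]
  have hr : 0 < ‖x‖ ^ 2 := by positivity
  set ρ := ‖x‖ ^ 2
  have e : (ρ ^ ((N:ℝ)/2)) = (ρ ^ ((N:ℝ)/4)) ^ 2 := by
    rw [← Real.rpow_mul_natCast hr.le]; congr 1; push_cast; ring
  have hp : 0 < ρ ^ ((N:ℝ)/4) := by positivity
  rw [Real.rpow_sub_one (by positivity), one_div, Real.inv_rpow hr.le, e]
  field_simp
  ring

lemma exp_int {N : ℕ} (G : EE N → ℝ) (hG : Continuous G) (hc : HasCompactSupport G) (t : ℝ) :
    Integrable fun x => G x * Real.exp (-(t * ‖x‖ ^ 2)) := by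
  refine Continuous.integrable_of_hasCompactSupport (by fun_prop) hc.mul_right

lemma hardy_strict {N : ℕ} (hN : 2 ≤ N) (u : EE N → ℝ) (h1 : ContDiff ℝ (⊤ : ℕ∞) u)
    (h2 : HasCompactSupport u) (hz : SphereAvgZero u) (hne : ∃ x, u x ≠ 0) :
    ((N : ℝ) ^ 2 / 4) * (∫ x, (u x) ^ 2 / ‖x‖ ^ 2) < ∫ x, ‖fderiv ℝ u x‖ ^ 2 := by
  have hN' : (0:ℝ) < N := by exact_mod_cast (by omega : 0 < N)
  have : Nonempty (Fin N) := ⟨⟨0, by omega⟩⟩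
  have hnz : ∀ᵐ x : EE N, x ≠ 0 := by simp [ae_iff]
  obtain ⟨K, h⟩ := exists_good u (h1.of_le (by exact_mod_cast le_top)) h2 (sphereAvgZero_zero hN u hz)
  have hFd : fderiv ℝ (FF u) = FF' u := funext fun x => (FF_hasFDerivAt hN h x).fderiv
  have hFc : Continuous (FF u) := (FF_contDiff hN h).continuous
  have hF'c := FF'_cont hN h
  have hcs : HasCompactSupport fun x => FF u x ^ 2 := (FF_cs h).comp_left (g := fun t => t ^ 2) (by simp)
  have hcs' : HasCompactSupport fun x => ‖FF' u x‖ ^ 2 := by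
    rw [← hFd]
    exact ((FF_cs h).fderiv (𝕜 := ℝ)).comp_left (g := fun t => ‖t‖ ^ 2) (by simp)
  set A : ℝ → ℝ := fun t => ∫ x, ‖FF' u x‖ ^ 2 * Real.exp (-(t * ‖x‖ ^ 2)) with hA
  set B : ℝ → ℝ := fun t => ∫ x, FF u x ^ 2 * Real.exp (-(t * ‖x‖ ^ 2)) with hB
  have hAB : ∀ t, 0 < t → 2 * t * B t ≤ A t := fun t ht => by
    have := gaussE t ht (FF u) (FF_contDiff hN h) (FF_cs h) (by
      have := polar_zero hN u hz fun r => (r ^ 2) ^ ((N:ℝ) / 4) * Real.exp (-(t * r ^ 2))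
      rw [← this]; congr 1; ext x; simp only [FF]; ring)
    rw [hFd] at this
    exact this
  have hiA : Integrable fun x => (1 / ‖x‖ ^ 2) ^ ((N:ℝ) / 2) * ‖FF' u x‖ ^ 2 := by
    refine ((h.int_grad.add (h.int_cross.const_mul (N:ℝ))).add (h.int_sq.const_mul ((N:ℝ)^2/4))).congr ?_
    filter_upwards [hnz] with x hx
    rw [FF'_sq x hx]; rfl
  have hiB : Integrable fun x => (1 / ‖x‖ ^ 2) ^ ((N:ℝ) / 2 + 1) * FF u x ^ 2 := by
    simp_rw [FF_sq hN h]; exact h.int_sq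
  obtain ⟨iA, eA⟩ := lap_fubini hN ((N:ℝ)/2) (by positivity) (fun x => ‖FF' u x‖ ^ 2)
    (by fun_prop) (fun x => by positivity) hiA
  obtain ⟨iB, eB⟩ := lap_fubini hN ((N:ℝ)/2+1) (by positivity) (fun x => FF u x ^ 2)
    (by fun_prop) (fun x => by positivity) hiB
  have vA : ∫ x, (1 / ‖x‖ ^ 2) ^ ((N:ℝ) / 2) * ‖FF' u x‖ ^ 2 =
      (∫ x, ‖fderiv ℝ u x‖ ^ 2) + N * (∫ x, u x * fderiv ℝ u x x / ‖x‖ ^ 2)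
        + (N:ℝ)^2/4 * ∫ x, u x ^ 2 / ‖x‖ ^ 2 := by
    have hadd : Integrable fun x => ‖fderiv ℝ u x‖ ^ 2 + N * (u x * fderiv ℝ u x x / ‖x‖ ^ 2) :=
      h.int_grad.add (h.int_cross.const_mul (N:ℝ))
    rw [← integral_const_mul, ← integral_const_mul, ← integral_add h.int_grad (h.int_cross.const_mul _),
      ← integral_add hadd (h.int_sq.const_mul _)]
    refine integral_congr_ae ?_
    filter_upwards [hnz] with x hx using FF'_sq x hx
  simp_rw [FF_sq hN h] at eB
  rw [vA] at eA
  have hB1 : 0 < B 1 := by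
    have hpos : ∃ x, FF u x ≠ 0 := by
      obtain ⟨x, hx⟩ := hne
      have hx0 : x ≠ 0 := fun h0 => hx (h0 ▸ h.zero)
      have hn : 0 < ‖x‖ := norm_pos_iff.2 hx0
      refine ⟨x, mul_ne_zero ?_ hx⟩
      positivity
    obtain ⟨x, hx⟩ := hpos
    refine Continuous.integral_pos_of_hasCompactSupport_nonneg_nonzero (x := x) (by fun_prop) hcs.mul_right
      (fun x => by positivity) ?_
    positivity
  have hBmono : ∀ t, 0 < t → B t ≤ ∫ x, FF u x ^ 2 := fun t ht => by
    refine integral_mono (exp_int _ (by fun_prop) hcs t)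
      (Continuous.integrable_of_hasCompactSupport (by fun_prop) hcs) fun x => ?_
    refine mul_le_of_le_one_right (by positivity) (Real.exp_le_one_iff.2 ?_)
    have : 0 ≤ t * ‖x‖ ^ 2 := by positivity
    linarith
  have hAmono : ∀ t, t ≤ 1 → A 1 ≤ A t := fun t ht => by
    refine integral_mono (exp_int _ (by fun_prop) hcs' 1) (exp_int _ (by fun_prop) hcs' t) fun x => ?_
    have : t * ‖x‖ ^ 2 ≤ 1 * ‖x‖ ^ 2 := by gcongr
    simp only
    gcongr
  have hA1 : 0 < A 1 := by have := hAB 1 one_pos; linarith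
  have hlt : ∫ t in Set.Ioi (0:ℝ), 2 * (t ^ ((N:ℝ)/2 + 1 - 1) * B t) <
      ∫ t in Set.Ioi (0:ℝ), t ^ ((N:ℝ)/2 - 1) * A t := by
    have hrel : ∀ t : ℝ, 0 < t → 2 * (t ^ ((N:ℝ)/2 + 1 - 1) * B t) = t ^ ((N:ℝ)/2 - 1) * (2 * t * B t) := by
      intro t ht
      rw [add_sub_cancel_right, Real.rpow_sub_one ht.ne']; field_simp
    have hle : (fun t : ℝ => 2 * (t ^ ((N:ℝ)/2 + 1 - 1) * B t)) ≤ᵐ[volume.restrict (Set.Ioi 0)]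
        fun t => t ^ ((N:ℝ)/2 - 1) * A t := by
      filter_upwards [ae_restrict_mem measurableSet_Ioi] with t ht
      have ht : 0 < t := ht
      rw [hrel t ht]
      have := hAB t ht
      gcongr
    refine lt_of_le_of_ne (integral_mono_ae (iB.const_mul 2) iA hle) fun heq => ?_
    have hae := (integral_eq_iff_of_ae_le (iB.const_mul 2) iA hle).1 heq
    set M := ∫ x, FF u x ^ 2
    have hM : 0 < M := hB1.trans_le (hBmono 1 one_pos)
    set δ := min 1 (A 1 / (4 * M)) with hδ
    have hδ0 : 0 < δ := by positivity
    have hsub : Set.Ioo 0 δ ⊆ Set.Ioi (0:ℝ) := fun t ht => ht.1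
    have hae2 := ae_mono (Measure.restrict_mono_set volume hsub) hae
    have : ∀ᵐ t : ℝ ∂(volume.restrict (Set.Ioo 0 δ)), False := by
      filter_upwards [hae2, ae_restrict_mem measurableSet_Ioo] with t ht hm
      have h0 := hm.1
      rw [hrel t h0] at ht
      have h3 : 2 * t * B t = A t := mul_left_cancel₀ (by positivity) ht
      have h4 := hAmono t (hm.2.le.trans (min_le_left _ _))
      have h5 := hBmono t h0
      have h6 : t < A 1 / (4 * M) := hm.2.trans_le (min_le_right _ _)
      rw [lt_div_iff₀ (by positivity)] at h6
      have : 2 * t * B t ≤ 2 * t * M := by gcongr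
      nlinarith
    have := (ae_iff.1 this)
    simp at this
    linarith
  rw [integral_const_mul] at hlt
  rw [show ∫ t in Set.Ioi (0:ℝ), t ^ ((N:ℝ)/2 - 1) * A t = _ from eA,
    show ∫ t in Set.Ioi (0:ℝ), t ^ ((N:ℝ)/2 + 1 - 1) * B t = _ from eB,
    Real.Gamma_add_one (by positivity)] at hlt
  have hG : 0 < Real.Gamma ((N:ℝ)/2) := Real.Gamma_pos_of_pos (by positivity)
  have hibp := h.ibp
  set I := ∫ x, u x ^ 2 / ‖x‖ ^ 2
  set X := ∫ x, u x * fderiv ℝ u x x / ‖x‖ ^ 2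
  set D := ∫ x, ‖fderiv ℝ u x‖ ^ 2
  have h7 : N * I < D + N * X + (N:ℝ)^2/4 * I := by
    refine lt_of_mul_lt_mul_left ?_ hG.le
    linarith
  have h8 : X = -((N:ℝ) - 2) * I / 2 := by linarith
  rw [h8] at h7
  linarith

lemma radial_scale {N : ℕ} (hN : 2 ≤ N) : ∃ c : ℝ, 0 < c ∧ ∀ (h : ℝ → ℝ) (k : ℝ), 0 < k →
    ∫ x : EE N, (‖x‖ ^ 2) ^ (-(N:ℝ) / 2) * h ((‖x‖ ^ 2) ^ k) =
      c / k * ∫ z in Set.Ioi (0:ℝ), h z / z := by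
  have : Nonempty (Fin N) := ⟨⟨0, by omega⟩⟩
  have hN' : (0:ℝ) < N := by exact_mod_cast (by omega : 0 < N)
  refine ⟨N * (volume : Measure (EE N)).real (ball 0 1) / 2, ?_, fun h k hk => ?_⟩
  · have : 0 < (volume : Measure (EE N)).real (ball 0 1) :=
      ENNReal.toReal_pos (measure_ball_pos _ _ one_pos).ne' measure_ball_lt_top.ne
    positivity
  · rw [integral_fun_norm_addHaar (volume : Measure (EE N))
      (fun r => (r ^ 2) ^ (-(N:ℝ) / 2) * h ((r ^ 2) ^ k))]
    rw [← integral_comp_rpow_Ioi (fun z => h z / z) (p := 2 * k) (by positivity)]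
    have e : ∀ r ∈ Set.Ioi (0:ℝ), (|2 * k| * r ^ (2 * k - 1)) • (h (r ^ (2 * k)) / r ^ (2 * k)) =
       (2 * k) * (r ^ (Module.finrank ℝ (EE N) - 1) • ((r ^ 2) ^ (-(N:ℝ) / 2) * h ((r ^ 2) ^ k))) := by
      intro r hr
      have hr : 0 < r := hr
      have e1 : (r ^ 2) ^ (-(N:ℝ) / 2) = (r ^ N)⁻¹ := by
        rw [← Real.rpow_natCast_mul hr.le, ← Real.rpow_natCast, ← Real.rpow_neg hr.le]
        congr 1; push_cast; ring
      have e2 : (r ^ 2) ^ k = r ^ (2 * k) := by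
        rw [← Real.rpow_natCast_mul hr.le]; norm_num
      have e3 : r ^ N = r ^ (N - 1) * r := by rw [← pow_succ]; congr 1; omega
      have : 0 < r ^ (2 * k) := by positivity
      rw [e1, e2, e3, abs_of_pos (by positivity), Real.rpow_sub_one hr.ne']
      simp only [finrank_euclideanSpace, Fintype.card_fin, smul_eq_mul]
      field_simp
    rw [setIntegral_congr_fun measurableSet_Ioi e, integral_const_mul]
    simp only [finrank_euclideanSpace, Fintype.card_fin, smul_eq_mul, nsmul_eq_mul]
    field_simp

def pp (N : ℕ) (η : ℝ → ℝ) (k : ℝ) (x : EE N) : ℝ := (‖x‖ ^ 2) ^ (-(N:ℝ) / 4) * η ((‖x‖ ^ 2) ^ k)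

lemma pp_small {N : ℕ} {η : ℝ → ℝ} (hs : ∀ z, z < 1 → η z = 0) {k : ℝ} (hk : 0 < k) (x : EE N)
    (hx : ‖x‖ < 1) : pp N η k x = 0 := by
  unfold pp
  rw [hs, mul_zero]
  refine Real.rpow_lt_one (by positivity) ?_ hk
  exact pow_lt_one₀ (norm_nonneg _) hx (by norm_num)

lemma pp_large {N : ℕ} {η : ℝ → ℝ} (hs : ∀ z, 3 < z → η z = 0) {k : ℝ} (hk : 0 < k) :
    HasCompactSupport (pp N η k) := by
  refine HasCompactSupport.intro (isCompact_closedBall (0 : EE N) (3 ^ (1 / (2 * k)))) fun x hx => ?_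
  have hx : (3:ℝ) ^ (1 / (2 * k)) < ‖x‖ := by simpa using hx
  unfold pp
  rw [hs, mul_zero]
  have e2 : (‖x‖ ^ 2) ^ k = ‖x‖ ^ (2 * k) := by
    rw [← Real.rpow_natCast_mul (norm_nonneg _)]; norm_num
  rw [e2]
  have := Real.rpow_lt_rpow (by positivity) hx (by positivity : 0 < 2 * k)
  rwa [← Real.rpow_mul (by norm_num), one_div_mul_cancel (by positivity), Real.rpow_one] at this

lemma pp_contDiff {N : ℕ} {η : ℝ → ℝ} (hη : ContDiff ℝ (⊤ : ℕ∞) η)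
    (hs : ∀ z, z < 1 → η z = 0) {k : ℝ} (hk : 0 < k) : ContDiff ℝ (⊤ : ℕ∞) (pp N η k) := by
  rw [contDiff_iff_contDiffAt]
  intro x
  rcases eq_or_ne x 0 with rfl | hx
  · refine (contDiffAt_const (c := (0:ℝ))).congr_of_eventuallyEq ?_
    filter_upwards [ball_mem_nhds (0 : EE N) one_pos] with x hx
    exact pp_small hs hk x (by simpa using hx)
  · have hn : 0 < ‖x‖ := norm_pos_iff.2 hx
    have h1 : ContDiffAt ℝ (⊤ : ℕ∞) (fun x : EE N => ‖x‖ ^ 2) x := (contDiff_norm_sq ℝ).contDiffAt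
    exact (h1.rpow_const_of_ne (by positivity)).mul
      (hη.contDiffAt.comp x (h1.rpow_const_of_ne (by positivity)))

lemma pp_fderiv {N : ℕ} {η : ℝ → ℝ} (hη : ContDiff ℝ (⊤ : ℕ∞) η) {k : ℝ} (x : EE N) (hx : x ≠ 0) :
    HasFDerivAt (pp N η k) (((‖x‖ ^ 2) ^ (-(N:ℝ) / 4) *
      (-(N:ℝ) / 2 * η ((‖x‖ ^ 2) ^ k) + 2 * k * (‖x‖ ^ 2) ^ k * deriv η ((‖x‖ ^ 2) ^ k)) / ‖x‖ ^ 2)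
        • innerSL ℝ x) x := by
  have hn : 0 < ‖x‖ := norm_pos_iff.2 hx
  have hr : 0 < ‖x‖ ^ 2 := by positivity
  have h1 : HasFDerivAt (fun x : EE N => ‖x‖ ^ 2) (2 • innerSL ℝ x) x := (hasStrictFDerivAt_norm_sq x).hasFDerivAt
  have h2 := h1.rpow_const (p := -(N:ℝ)/4) (Or.inl (by positivity))
  have h3 := h1.rpow_const (p := k) (Or.inl (by positivity))
  have h4 : HasDerivAt η (deriv η ((‖x‖ ^ 2) ^ k)) ((‖x‖ ^ 2) ^ k) :=
    (hη.differentiable (by simp) _).hasDerivAt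
  have h5 := h2.mul (h4.comp_hasFDerivAt x h3)
  refine h5.congr_fderiv ?_
  ext v
  simp
  rw [Real.rpow_sub_one hr.ne', Real.rpow_sub_one hr.ne']
  field_simp
  ring

def uu (N : ℕ) (η : ℝ → ℝ) (k : ℝ) (i : Fin N) (x : EE N) : ℝ := x i * pp N η k x

lemma uu_fderiv {N : ℕ} {η : ℝ → ℝ} (hη : ContDiff ℝ (⊤ : ℕ∞) η) {k : ℝ} (x : EE N) (hx : x ≠ 0)
    (i : Fin N) : fderiv ℝ (uu N η k i) x = pp N η k x • innerSL ℝ (EuclideanSpace.single i (1:ℝ)) +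
      (x i * ((‖x‖ ^ 2) ^ (-(N:ℝ) / 4) *
      (-(N:ℝ) / 2 * η ((‖x‖ ^ 2) ^ k) + 2 * k * (‖x‖ ^ 2) ^ k * deriv η ((‖x‖ ^ 2) ^ k)) / ‖x‖ ^ 2))
        • innerSL ℝ x := by
  have h1 : HasFDerivAt (fun x : EE N => x i) (innerSL ℝ (EuclideanSpace.single i (1:ℝ)) : EE N →L[ℝ] ℝ) x := by
    have := (innerSL ℝ (EuclideanSpace.single i (1:ℝ)) : EE N →L[ℝ] ℝ).hasFDerivAt (x := x)
    refine this.congr_of_eventuallyEq (Eventually.of_forall fun y => ?_)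
    simp [EuclideanSpace.inner_single_left]
  have := (h1.mul (pp_fderiv hη (k := k) x hx)).fderiv
  refine this.trans ?_
  rw [add_comm, smul_smul]

lemma uu_sum_grad {N : ℕ} {η : ℝ → ℝ} (hη : ContDiff ℝ (⊤ : ℕ∞) η) {k : ℝ} (x : EE N) (hx : x ≠ 0) :
    ∑ i, ‖fderiv ℝ (uu N η k i) x‖ ^ 2 = (‖x‖ ^ 2) ^ (-(N:ℝ) / 2) *
      (fun z => (N:ℝ) ^ 2 / 4 * η z ^ 2 + (4 - 2 * N) * k * (z * (η z * deriv η z))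
        + 4 * k ^ 2 * (z ^ 2 * deriv η z ^ 2)) ((‖x‖ ^ 2) ^ k) := by
  have hn : 0 < ‖x‖ := norm_pos_iff.2 hx
  have hr : 0 < ‖x‖ ^ 2 := by positivity
  have e2 : ∑ i, x i ^ 2 = ‖x‖ ^ 2 := by rw [EuclideanSpace.norm_sq_eq]; simp
  have hw : (‖x‖ ^ 2) ^ (-(N:ℝ) / 2) = ((‖x‖ ^ 2) ^ (-(N:ℝ) / 4)) ^ 2 := by
    rw [← Real.rpow_mul_natCast hr.le]; congr 1; push_cast; ring
  simp_rw [uu_fderiv hη x hx, clm_norm_comb, innerSL_apply_norm]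
  rw [hw]
  unfold pp
  set w := (‖x‖ ^ 2) ^ (-(N:ℝ) / 4)
  set z := (‖x‖ ^ 2) ^ k
  set ρ := ‖x‖ ^ 2
  set T := (-(N:ℝ) / 2 * η z + 2 * k * z * deriv η z) with hT
  have : ∀ i : Fin N, (w * η z) ^ 2 * ‖EuclideanSpace.single i (1:ℝ)‖ ^ 2 +
      2 * (w * η z) * (x i * (w * T / ρ)) * (innerSL ℝ (EuclideanSpace.single i (1:ℝ))) x +
      (x i * (w * T / ρ)) ^ 2 * ρ = (w * η z) ^ 2 + (2 * w ^ 2 * η z * T / ρ + w ^ 2 * T ^ 2 / ρ) * x i ^ 2 := by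
    intro i
    simp [EuclideanSpace.inner_single_left]
    field_simp
    ring
  refine (Finset.sum_congr rfl fun i _ => this i).trans ?_
  rw [Finset.sum_add_distrib, ← Finset.mul_sum, e2]
  simp only [Finset.sum_const, Finset.card_univ, Fintype.card_fin, nsmul_eq_mul]
  field_simp
  rw [hT]
  ring

lemma uu_sum_sq {N : ℕ} {η : ℝ → ℝ} {k : ℝ} (x : EE N) (hx : x ≠ 0) :
    ∑ i, uu N η k i x ^ 2 / ‖x‖ ^ 2 = (‖x‖ ^ 2) ^ (-(N:ℝ) / 2) *
      (fun z => η z ^ 2) ((‖x‖ ^ 2) ^ k) := by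
  have hn : 0 < ‖x‖ := norm_pos_iff.2 hx
  have hr : 0 < ‖x‖ ^ 2 := by positivity
  have e2 : ∑ i, x i ^ 2 = ‖x‖ ^ 2 := by rw [EuclideanSpace.norm_sq_eq]; simp
  have hw : (‖x‖ ^ 2) ^ (-(N:ℝ) / 2) = ((‖x‖ ^ 2) ^ (-(N:ℝ) / 4)) ^ 2 := by
    rw [← Real.rpow_mul_natCast hr.le]; congr 1; push_cast; ring
  rw [hw, ← Finset.sum_div]
  unfold uu pp
  simp_rw [mul_pow]
  rw [← Finset.sum_mul, e2]
  field_simp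

lemma int_div {g : ℝ → ℝ} (hg : Continuous g) (h1 : ∀ z, z < 1 → g z = 0)
    (h3 : ∀ z, 3 < z → g z = 0) : IntegrableOn (fun z => g z / z) (Set.Ioi 0) := by
  have hgi : Integrable g := hg.integrable_of_hasCompactSupport
    (HasCompactSupport.intro (isCompact_Icc (a := (1:ℝ)) (b := 3)) fun z hz => by
      simp only [Set.mem_Icc, not_and_or, not_le] at hz
      exact hz.elim (h1 z) (h3 z))
  refine Integrable.integrableOn (hgi.norm.mono' ?_ (ae_of_all _ fun z => ?_))
  · exact (hg.measurable.div measurable_id).aestronglyMeasurable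
  · rcases lt_or_ge z 1 with hz | hz
    · simp [h1 z hz]
    · rw [norm_div, Real.norm_of_nonneg (by linarith : 0 ≤ z)]
      exact div_le_self (norm_nonneg _) hz

lemma hardy_opt {N : ℕ} (hN : 2 ≤ N) (ε : ℝ) (hε : 0 < ε) : ∃ u : EE N → ℝ,
        ContDiff ℝ (⊤ : ℕ∞) u ∧ HasCompactSupport u ∧ SphereAvgZero u ∧
        (∃ x, u x ≠ 0) ∧
        (∫ x, ‖fderiv ℝ u x‖ ^ 2) <
          ((N : ℝ) ^ 2 / 4 + ε) * (∫ x, (u x) ^ 2 / ‖x‖ ^ 2) := by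
  have : Nonempty (Fin N) := ⟨⟨0, by omega⟩⟩
  have hnz : ∀ᵐ x : EE N, x ≠ 0 := by simp [ae_iff]
  let b : ContDiffBump (2:ℝ) := ⟨1/2, 1, by norm_num, by norm_num⟩
  obtain ⟨η, hη, hs1, hs3, hpos⟩ : ∃ η : ℝ → ℝ, ContDiff ℝ (⊤ : ℕ∞) η ∧ (∀ z, z < 1 → η z = 0) ∧
      (∀ z, 3 < z → η z = 0) ∧ ∀ z ∈ Set.Ioo (1:ℝ) 3, η z ≠ 0 := by
    have hsupp : ∀ z, b z ≠ 0 ↔ |z - 2| < 1 := fun z => by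
      rw [← Function.mem_support, b.support_eq]; simp [b, Real.dist_eq]
    refine ⟨b, b.contDiff, fun z hz => ?_, fun z hz => ?_, fun z hz => ?_⟩
    · by_contra h; have := abs_lt.1 ((hsupp z).1 h); linarith
    · by_contra h; have := abs_lt.1 ((hsupp z).1 h); linarith
    · exact (hsupp z).2 (abs_lt.2 ⟨by linarith [hz.1], by linarith [hz.2]⟩)
  have hηc := hη.continuous
  have hη'c : Continuous (deriv η) := hη.continuous_deriv (by simp)
  have hd1 : ∀ z, z < 1 → deriv η z = 0 := fun z hz => by
    have : η =ᶠ[𝓝 z] fun _ => 0 := by filter_upwards [gt_mem_nhds hz] with y hy using hs1 y hy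
    rw [this.deriv_eq]; simp
  have hd3 : ∀ z, 3 < z → deriv η z = 0 := fun z hz => by
    have : η =ᶠ[𝓝 z] fun _ => 0 := by filter_upwards [lt_mem_nhds hz] with y hy using hs3 y hy
    rw [this.deriv_eq]; simp
  have iA := int_div (g := fun z => η z ^ 2) (by fun_prop) (fun z hz => by simp [hs1 z hz])
    (fun z hz => by simp [hs3 z hz])
  have iD := int_div (g := fun z => z * (η z * deriv η z)) (by fun_prop) (fun z hz => by simp [hs1 z hz])
    (fun z hz => by simp [hs3 z hz])
  have iB := int_div (g := fun z => z ^ 2 * deriv η z ^ 2) (by fun_prop) (fun z hz => by simp [hd1 z hz])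
    (fun z hz => by simp [hd3 z hz])
  set A := ∫ z in Set.Ioi (0:ℝ), η z ^ 2 / z with hA
  set D := ∫ z in Set.Ioi (0:ℝ), z * (η z * deriv η z) / z with hD
  set B := ∫ z in Set.Ioi (0:ℝ), z ^ 2 * deriv η z ^ 2 / z with hB
  have hApos : 0 < A := by
    rw [hA, setIntegral_pos_iff_support_of_nonneg_ae _ iA]
    · have hsub : Set.Ioo (1:ℝ) 3 ⊆ (Function.support fun z => η z ^ 2 / z) ∩ Set.Ioi 0 := fun z hz => by
        have h0 : 0 < z := by linarith [hz.1]
        refine ⟨?_, h0⟩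
        have := hpos z hz
        simp [this, h0.ne']
      refine lt_of_lt_of_le ?_ (measure_mono hsub)
      simp
    · filter_upwards [ae_restrict_mem measurableSet_Ioi] with z hz
      have hz : 0 < z := hz
      simp only [Pi.zero_apply]
      positivity
  obtain ⟨k, hk, hkk⟩ : ∃ k : ℝ, 0 < k ∧ (4 - 2 * (N:ℝ)) * k * D + 4 * k ^ 2 * B < ε * A := by
    have hc : Continuous fun k : ℝ => (4 - 2 * (N:ℝ)) * k * D + 4 * k ^ 2 * B := by fun_prop
    have ht := hc.tendsto 0
    simp only [mul_zero, zero_mul, zero_pow (two_ne_zero), add_zero] at ht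
    have h1 := (ht.mono_left (nhdsWithin_le_nhds (s := Set.Ioi 0))).eventually (gt_mem_nhds (mul_pos hε hApos))
    obtain ⟨k, hk, hk0⟩ := (h1.and self_mem_nhdsWithin).exists
    exact ⟨k, hk0, hk⟩
  obtain ⟨c, hc, hrad⟩ := radial_scale hN
  have hcd : ∀ i, ContDiff ℝ (⊤ : ℕ∞) (uu N η k i) := fun i => by
    have h1 : ContDiff ℝ (⊤ : ℕ∞) fun x : EE N => x i := by fun_prop
    exact h1.mul (pp_contDiff hη hs1 hk)
  have hcs : ∀ i, HasCompactSupport (uu N η k i) := fun i => (pp_large hs3 hk).mul_left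
  have hgood : ∀ i, ∃ K, Good (uu N η k i) K := fun i =>
    exists_good _ ((hcd i).of_le (by exact_mod_cast le_top)) (hcs i) (by simp [uu])
  have hig : ∀ i, Integrable fun x => ‖fderiv ℝ (uu N η k i) x‖ ^ 2 := fun i => by
    obtain ⟨K, h⟩ := hgood i; exact h.int_grad
  have his : ∀ i, Integrable fun x => uu N η k i x ^ 2 / ‖x‖ ^ 2 := fun i => by
    obtain ⟨K, h⟩ := hgood i; exact h.int_sq
  have S1 : ∑ i, ∫ x, ‖fderiv ℝ (uu N η k i) x‖ ^ 2 =
      c / k * ((N:ℝ) ^ 2 / 4 * A + (4 - 2 * N) * k * D + 4 * k ^ 2 * B) := by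
    rw [← integral_finsetSum _ fun i _ => hig i]
    rw [integral_congr_ae (g := fun x : EE N => (‖x‖ ^ 2) ^ (-(N:ℝ) / 2) *
      (fun z => (N:ℝ) ^ 2 / 4 * η z ^ 2 + (4 - 2 * N) * k * (z * (η z * deriv η z))
        + 4 * k ^ 2 * (z ^ 2 * deriv η z ^ 2)) ((‖x‖ ^ 2) ^ k))
      (by filter_upwards [hnz] with x hx using uu_sum_grad hη x hx)]
    refine (hrad (fun z => (N:ℝ) ^ 2 / 4 * η z ^ 2 + (4 - 2 * N) * k * (z * (η z * deriv η z))
        + 4 * k ^ 2 * (z ^ 2 * deriv η z ^ 2)) k hk).trans ?_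
    congr 1
    have e : ∀ z : ℝ, ((N:ℝ) ^ 2 / 4 * η z ^ 2 + (4 - 2 * N) * k * (z * (η z * deriv η z))
        + 4 * k ^ 2 * (z ^ 2 * deriv η z ^ 2)) / z = (N:ℝ) ^ 2 / 4 * (η z ^ 2 / z) +
        (4 - 2 * N) * k * (z * (η z * deriv η z) / z) + 4 * k ^ 2 * (z ^ 2 * deriv η z ^ 2 / z) := by
      intro z; ring
    simp_rw [e]
    have hadd : Integrable (fun z => (N:ℝ) ^ 2 / 4 * (η z ^ 2 / z) +
        (4 - 2 * N) * k * (z * (η z * deriv η z) / z)) (volume.restrict (Set.Ioi 0)) :=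
      (iA.const_mul _).add (iD.const_mul _)
    rw [integral_add hadd (iB.const_mul _), integral_add (iA.const_mul _) (iD.const_mul _),
      integral_const_mul, integral_const_mul, integral_const_mul]
  have S2 : ∑ i, ∫ x, uu N η k i x ^ 2 / ‖x‖ ^ 2 = c / k * A := by
    rw [← integral_finsetSum _ fun i _ => his i]
    rw [integral_congr_ae (g := fun x : EE N => (‖x‖ ^ 2) ^ (-(N:ℝ) / 2) *
      (fun z => η z ^ 2) ((‖x‖ ^ 2) ^ k))
      (by filter_upwards [hnz] with x hx using uu_sum_sq x hx)]
    exact hrad (fun z => η z ^ 2) k hk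
  have hex : ∃ i ∈ (Finset.univ : Finset (Fin N)), (∫ x, ‖fderiv ℝ (uu N η k i) x‖ ^ 2) <
      ((N : ℝ) ^ 2 / 4 + ε) * ∫ x, uu N η k i x ^ 2 / ‖x‖ ^ 2 := by
    refine Finset.exists_lt_of_sum_lt ?_
    rw [S1, ← Finset.mul_sum, S2]
    have : 0 < c / k := by positivity
    calc _ < c / k * ((N:ℝ) ^ 2 / 4 * A + ε * A) := by
          refine mul_lt_mul_of_pos_left ?_ this
          linarith
      _ = _ := by ring
  obtain ⟨i, -, hi⟩ := hex
  refine ⟨uu N η k i, hcd i, hcs i, sphereAvgZero_of_odd _ fun x => ?_, ?_, hi⟩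
  · simp [uu, pp]
  · by_contra! h0
    have : uu N η k i = fun _ => 0 := funext h0
    rw [this] at hi
    simp at hi

end HardyAux

/-- Let `N ≥ 2`. For every `u ∈ C₀^∞(ℝᴺ)` with spherical
average zero, `(N²/4) ∫ |u|²/|x|² ≤ ∫ |∇u|²`. Moreover `N²/4` is optimal: for
every `ε > 0` some admissible nonzero `u` has Rayleigh quotient below
`N²/4 + ε`; and the best constant is not attained, i.e. the inequality is
strict for every admissible nonzero `u`. -/
theorem hardy_sphere_avg_zero_whole_space (N : ℕ) (hN : 2 ≤ N) :
    (∀ u : EuclideanSpace ℝ (Fin N) → ℝ,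
      ContDiff ℝ (⊤ : ℕ∞) u → HasCompactSupport u → SphereAvgZero u →
      ((N : ℝ) ^ 2 / 4) * (∫ x, (u x) ^ 2 / ‖x‖ ^ 2) ≤ ∫ x, ‖fderiv ℝ u x‖ ^ 2) ∧
    (∀ ε : ℝ, 0 < ε →
      ∃ u : EuclideanSpace ℝ (Fin N) → ℝ,
        ContDiff ℝ (⊤ : ℕ∞) u ∧ HasCompactSupport u ∧ SphereAvgZero u ∧
        (∃ x, u x ≠ 0) ∧
        (∫ x, ‖fderiv ℝ u x‖ ^ 2) <
          ((N : ℝ) ^ 2 / 4 + ε) * (∫ x, (u x) ^ 2 / ‖x‖ ^ 2)) ∧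
    (∀ u : EuclideanSpace ℝ (Fin N) → ℝ,
      ContDiff ℝ (⊤ : ℕ∞) u → HasCompactSupport u → SphereAvgZero u → (∃ x, u x ≠ 0) →
      ((N : ℝ) ^ 2 / 4) * (∫ x, (u x) ^ 2 / ‖x‖ ^ 2) < ∫ x, ‖fderiv ℝ u x‖ ^ 2) := by
  refine ⟨fun u h1 h2 h3 => ?_, fun ε hε => hardy_opt hN ε hε,
    fun u h1 h2 h3 h4 => hardy_strict hN u h1 h2 h3 h4⟩
  by_cases h4 : ∃ x, u x ≠ 0
  · exact (hardy_strict hN u h1 h2 h3 h4).le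
  · push Not at h4
    have : u = fun _ => 0 := funext h4
    subst this
    simp

end
end
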